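/- arXiv:2403.06784 — 3 statements merged into one kernel-verified Lean document; each statement's English description precedes it below -/
import Mathlib

section
/- Let B_a ⊂ ℝⁿ (n ≥ 3) be the open ball of radius a centered at the origin, and let f ∈ C¹(ℝ) be a convex function. If u is a positive stable solution of −Δu = f(u) in B_a with u = 0 on ∂B_a, then u is radially symmetric: there exists a function v : [0,a] → ℝ with u(x) = v(|x|) for all x ∈ B_a. -/
open MeasureTheory Set

noncomputable def pd {m : ℕ} (u : EuclideanSpace ℝ (Fin m) → ℝ) (i : Fin m)
    (x : EuclideanSpace ℝ (Fin m)) : ℝ :=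
  fderiv ℝ u x (EuclideanSpace.single i 1)

noncomputable def lap {m : ℕ} (u : EuclideanSpace ℝ (Fin m) → ℝ)
    (x : EuclideanSpace ℝ (Fin m)) : ℝ :=
  ∑ i, pd (pd u i) i x

/-- Positivity of the quadratic form of the linearized operator `-Δ - c` on `H¹₀(Ω)`,
expressed via (nonzero) smooth compactly supported test functions supported in `Ω`. -/
def StableOn {m : ℕ} (Ω : Set (EuclideanSpace ℝ (Fin m)))
    (c : EuclideanSpace ℝ (Fin m) → ℝ) : Prop :=
  ∀ φ : EuclideanSpace ℝ (Fin m) → ℝ, ContDiff ℝ (⊤ : ℕ∞) φ → HasCompactSupport φ →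
    tsupport φ ⊆ Ω → φ ≠ 0 →
    (∫ x in Ω, ‖gradient φ x‖ ^ 2) - (∫ x in Ω, c x * φ x ^ 2) > 0

open Filter Topology

/-- The squared norm of the gradient is the sum of the squares of the partial derivatives. -/
lemma norm_gradient_sq_eq_sum_pd_sq {m : ℕ} (φ : EuclideanSpace ℝ (Fin m) → ℝ)
    (x : EuclideanSpace ℝ (Fin m)) : ‖gradient φ x‖ ^ 2 = ∑ i, pd φ i x ^ 2 := by
  rw [EuclideanSpace.norm_sq_eq]
  refine Finset.sum_congr rfl fun i _ => ?_
  have h : pd φ i x = (gradient φ x) i := by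
    have h' := inner_gradient_left (𝕜 := ℝ) (f := φ) (x := x) (y := EuclideanSpace.single i (1 : ℝ))
    rw [EuclideanSpace.inner_single_right] at h'
    simpa [pd] using h'.symm
  rw [h, Real.norm_eq_abs, sq_abs]

lemma continuous_pd {m : ℕ} {φ : EuclideanSpace ℝ (Fin m) → ℝ} (hφ : ContDiff ℝ 1 φ) (i : Fin m) :
    Continuous (pd φ i) :=
  (hφ.continuous_fderiv one_ne_zero).clm_apply continuous_const

lemma contDiff_pd {m : ℕ} {φ : EuclideanSpace ℝ (Fin m) → ℝ} (hφ : ContDiff ℝ 2 φ) (i : Fin m) :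
    ContDiff ℝ 1 (pd φ i) :=
  (hφ.fderiv_right (m := 1) (by norm_num)).clm_apply contDiff_const

lemma tsupport_pd_subset {m : ℕ} (φ : EuclideanSpace ℝ (Fin m) → ℝ) (i : Fin m) :
    tsupport (pd φ i) ⊆ tsupport φ :=
  tsupport_fderiv_apply_subset ℝ _

lemma hasCompactSupport_pd {m : ℕ} {φ : EuclideanSpace ℝ (Fin m) → ℝ} (hφ : HasCompactSupport φ)
    (i : Fin m) : HasCompactSupport (pd φ i) :=
  hφ.fderiv_apply ℝ _

/-- A compactly supported `C¹` function is approximated in `C¹` norm by smooth functions with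
nearby support. -/
lemma exists_contDiff_approx {m : ℕ} {U : Set (EuclideanSpace ℝ (Fin m))} (hU : IsOpen U)
    {φ : EuclideanSpace ℝ (Fin m) → ℝ} (hφ : ContDiff ℝ 1 φ) (hc : HasCompactSupport φ)
    (hs : tsupport φ ⊆ U) {δ : ℝ} (hδ : 0 < δ) :
    ∃ ψ : EuclideanSpace ℝ (Fin m) → ℝ, ContDiff ℝ (⊤ : ℕ∞) ψ ∧ HasCompactSupport ψ ∧
      tsupport ψ ⊆ U ∧ (∀ x, |ψ x - φ x| ≤ δ) ∧ ∀ i x, |pd ψ i x - pd φ i x| ≤ δ := by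
  obtain ⟨r, hr, hrU⟩ := hc.isCompact.exists_cthickening_subset_open hU hs
  have huc : ∀ g : EuclideanSpace ℝ (Fin m) → ℝ, Continuous g → HasCompactSupport g →
      ∃ ρ > 0, ∀ x y, dist x y < ρ → dist (g x) (g y) ≤ δ := by
    intro g hg hgc
    obtain ⟨ρ, hρ, h⟩ := Metric.uniformContinuous_iff.1
      (hgc.uniformContinuous_of_continuous hg) δ hδ
    exact ⟨ρ, hρ, fun x y hxy => (h hxy).le⟩
  obtain ⟨ρ₀, hρ₀, h₀⟩ := huc φ hφ.continuous hc
  choose ρ hρ h using fun i => huc (pd φ i) (continuous_pd hφ i) (hasCompactSupport_pd hc i)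
  obtain ⟨s, hs0, hsr, hsρ₀, hsρ⟩ : ∃ s > 0, s ≤ r ∧ s ≤ ρ₀ ∧ ∀ i, s ≤ ρ i := by
    have : ∀ᶠ s in 𝓝[>] (0 : ℝ), s ≤ r ∧ s ≤ ρ₀ ∧ ∀ i, s ≤ ρ i := by
      have e : ∀ t : ℝ, 0 < t → ∀ᶠ s in 𝓝[>] (0 : ℝ), s ≤ t := fun t ht =>
        mem_nhdsWithin_of_mem_nhds (Iic_mem_nhds ht)
      exact (e r hr).and ((e ρ₀ hρ₀).and (eventually_all.2 fun i => e _ (hρ i)))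
    obtain ⟨s, h1, h2⟩ := (this.and self_mem_nhdsWithin).exists
    exact ⟨s, h2, h1⟩
  let b : ContDiffBump (0 : EuclideanSpace ℝ (Fin m)) := ⟨s / 2, s, half_pos hs0, half_lt_self hs0⟩
  have hli : LocallyIntegrable (b.normed volume) volume :=
    b.contDiff_normed (n := 0) |>.continuous.locallyIntegrable
  let ψ : EuclideanSpace ℝ (Fin m) → ℝ :=
    convolution (b.normed volume) φ (ContinuousLinearMap.lsmul ℝ ℝ) volume
  have hψs : Function.support ψ ⊆ Metric.cthickening r (tsupport φ) := by
    intro x hx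
    by_contra hxn
    have hz : ∀ y ∈ Metric.ball x s, φ y = 0 := by
      intro y hy
      by_contra hy0
      refine hxn (Metric.cthickening_mono hsr _ (Metric.mem_cthickening_of_dist_le x y s _
        (subset_tsupport _ hy0) ?_))
      rw [dist_comm]; exact (Metric.mem_ball.1 hy).le
    have hd := b.dist_normed_convolution_le (μ := volume) (g := φ) (x₀ := x) (ε := 0)
      hφ.continuous.aestronglyMeasurable (fun y hy => by
        rw [hz y hy, hz x (Metric.mem_ball_self hs0), dist_self])
    rw [hz x (Metric.mem_ball_self hs0)] at hd
    exact hx (dist_le_zero.1 hd)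
  have hψt : tsupport ψ ⊆ Metric.cthickening r (tsupport φ) :=
    closure_minimal hψs Metric.isClosed_cthickening
  refine ⟨ψ, b.hasCompactSupport_normed.contDiff_convolution_left _ b.contDiff_normed
    hφ.continuous.locallyIntegrable, ?_, hψt.trans hrU, fun x => ?_, fun i x => ?_⟩
  · exact HasCompactSupport.of_support_subset_isCompact (IsCompact.cthickening hc) hψs
  · exact b.dist_normed_convolution_le (μ := volume) hφ.continuous.aestronglyMeasurable
      fun y hy => h₀ y x (lt_of_lt_of_le hy hsρ₀)
  · have hd := (hc.hasFDerivAt_convolution_right (ContinuousLinearMap.lsmul ℝ ℝ) hli hφ x).fderiv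
    have : pd ψ i x = convolution (b.normed volume) (pd φ i)
        (ContinuousLinearMap.lsmul ℝ ℝ) volume x := by
      rw [pd, hd, convolution_precompR_apply _ hli (hc.fderiv ℝ)
        (hφ.continuous_fderiv one_ne_zero)]
      rfl
    rw [this]
    exact b.dist_normed_convolution_le (μ := volume) (continuous_pd hφ i).aestronglyMeasurable
      fun y hy => h i y x (lt_of_lt_of_le hy (hsρ i))

/-- Integrability of a bounded coefficient times a compactly supported continuous function. -/
lemma integrableOn_mul_of_bounded {m : ℕ} {Ω : Set (EuclideanSpace ℝ (Fin m))}
    (hΩ : MeasurableSet Ω) {c g : EuclideanSpace ℝ (Fin m) → ℝ} {K : ℝ}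
    (hcm : AEStronglyMeasurable c (volume.restrict Ω)) (hcK : ∀ x ∈ Ω, |c x| ≤ K)
    (hg : Integrable g (volume.restrict Ω)) : IntegrableOn (fun x => c x * g x) Ω :=
  hg.bdd_mul hcm (c := K) (ae_restrict_of_forall_mem hΩ hcK)

lemma StableOn.integral_mul_sq_le {m : ℕ} {Ω : Set (EuclideanSpace ℝ (Fin m))} (hΩ : IsOpen Ω)
    (hΩb : Bornology.IsBounded Ω) {c : EuclideanSpace ℝ (Fin m) → ℝ} {K : ℝ}
    (hcm : AEStronglyMeasurable c (volume.restrict Ω)) (hcK : ∀ x ∈ Ω, |c x| ≤ K)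
    (hstab : StableOn Ω c) {φ : EuclideanSpace ℝ (Fin m) → ℝ} (hφ : ContDiff ℝ 1 φ)
    (hc : HasCompactSupport φ) (hs : tsupport φ ⊆ Ω) :
    ∫ x in Ω, c x * φ x ^ 2 ≤ ∫ x in Ω, ∑ i, pd φ i x ^ 2 := by
  have : IsFiniteMeasure (volume.restrict Ω) := ⟨by
    rw [Measure.restrict_apply_univ]; exact hΩb.measure_lt_top⟩
  choose ψ hψ hψc hψs hψφ hpd using fun n : ℕ =>
    exists_contDiff_approx hΩ hφ hc hs (δ := 1 / ((n : ℝ) + 1)) (by positivity)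
  have hlim : ∀ (g : ℕ → EuclideanSpace ℝ (Fin m) → ℝ) (g₀ : EuclideanSpace ℝ (Fin m) → ℝ),
      (∀ n x, |g n x - g₀ x| ≤ 1 / ((n : ℝ) + 1)) → ∀ x,
      Tendsto (fun n => g n x) atTop (𝓝 (g₀ x)) := by
    intro g g₀ h x
    rw [tendsto_iff_dist_tendsto_zero]
    exact squeeze_zero (fun _ => dist_nonneg) (fun n => h n x) tendsto_one_div_add_atTop_nhds_zero_nat
  have hone : ∀ n : ℕ, 1 / ((n : ℝ) + 1) ≤ 1 := fun n => by
    rw [div_le_one (by positivity)]; linarith [(n.cast_nonneg : (0 : ℝ) ≤ n)]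
  have hbd : ∀ g₀ : EuclideanSpace ℝ (Fin m) → ℝ, Continuous g₀ → HasCompactSupport g₀ →
      ∃ M : ℝ, ∀ g : ℕ → EuclideanSpace ℝ (Fin m) → ℝ,
      (∀ n x, |g n x - g₀ x| ≤ 1 / ((n : ℝ) + 1)) → ∀ n x, |g n x ^ 2| ≤ M := by
    intro g₀ h1 h2
    obtain ⟨M, hM⟩ := h2.exists_bound_of_continuous h1
    refine ⟨(M + 1) ^ 2, fun g hg n x => ?_⟩
    rw [abs_pow]
    refine pow_le_pow_left₀ (abs_nonneg _) ?_ 2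
    have h3 := (hg n x).trans (hone n)
    have h4 := hM x
    rw [Real.norm_eq_abs] at h4
    calc |g n x| = |(g n x - g₀ x) + g₀ x| := by ring_nf
      _ ≤ |g n x - g₀ x| + |g₀ x| := abs_add_le _ _
      _ ≤ M + 1 := by linarith
  obtain ⟨M, hM⟩ := hbd φ hφ.continuous hc
  choose N hN using fun i => hbd (pd φ i) (continuous_pd hφ i) (hasCompactSupport_pd hc i)
  have hψ1 : ∀ n, ContDiff ℝ 1 (ψ n) := fun n => (hψ n).of_le (by simp)
  have hT1 : Tendsto (fun n => ∫ x in Ω, c x * ψ n x ^ 2) atTop (𝓝 (∫ x in Ω, c x * φ x ^ 2)) := by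
    refine tendsto_integral_of_dominated_convergence (fun _ => K * M) (fun n => ?_)
      (integrable_const _) (fun n => ?_) (.of_forall fun x => ?_)
    · exact hcm.mul ((hψ n).continuous.pow 2).aestronglyMeasurable
    · refine ae_restrict_of_forall_mem hΩ.measurableSet fun x hx => ?_
      rw [Real.norm_eq_abs, abs_mul]
      exact mul_le_mul (hcK x hx) (hM ψ hψφ n x) (abs_nonneg _) ((abs_nonneg _).trans (hcK x hx))
    · exact ((hlim ψ φ hψφ x).pow 2).const_mul _
  have hT2 : Tendsto (fun n => ∫ x in Ω, ∑ i, pd (ψ n) i x ^ 2) atTop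
      (𝓝 (∫ x in Ω, ∑ i, pd φ i x ^ 2)) := by
    refine tendsto_integral_of_dominated_convergence (fun _ => ∑ i, N i) (fun n => ?_)
      (integrable_const _) (fun n => ?_) (.of_forall fun x => ?_)
    · exact (continuous_finsetSum _ fun i _ =>
        (continuous_pd (hψ1 n) i).pow 2).aestronglyMeasurable
    · refine .of_forall fun x => ?_
      rw [Real.norm_eq_abs]
      exact (Finset.abs_sum_le_sum_abs _ _).trans (Finset.sum_le_sum fun i _ =>
        hN i (fun n => pd (ψ n) i) (fun n => hpd n i) n x)
    · exact tendsto_finsetSum _ fun i _ =>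
        (hlim (fun n => pd (ψ n) i) (pd φ i) (fun n => hpd n i) x).pow 2
  refine le_of_tendsto_of_tendsto' hT1 hT2 fun n => ?_
  by_cases h0 : ψ n = 0
  · simp [h0, pd]
  · have := hstab (ψ n) (hψ n) (hψc n) (hψs n) h0
    simp only [norm_gradient_sq_eq_sum_pd_sq] at this
    linarith

/-- Bounds on the primitive of a continuous cutoff switching from `0` to `1` on `[ε, 2ε]`. -/
lemma primitive_cutoff_bounds {ε : ℝ} (hε : 0 < ε) {θ : ℝ → ℝ} (hθ : Continuous θ)
    (h0 : ∀ t, 0 ≤ θ t) (h1 : ∀ t, θ t ≤ 1) (hl : ∀ t ≤ ε, θ t = 0) (hr : ∀ t, 2 * ε ≤ t → θ t = 1) :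
    (∀ t ≤ ε, ∫ s in (0 : ℝ)..t, θ s = 0) ∧
      ∀ t, 0 ≤ t → 0 ≤ ∫ s in (0 : ℝ)..t, θ s ∧ ∫ s in (0 : ℝ)..t, θ s ≤ t ∧
        t - 2 * ε ≤ ∫ s in (0 : ℝ)..t, θ s := by
  have hnn : ∀ t, 0 ≤ t → 0 ≤ ∫ s in (0 : ℝ)..t, θ s := fun t ht =>
    intervalIntegral.integral_nonneg ht fun s _ => h0 s
  refine ⟨fun t ht => ?_, fun t ht => ⟨hnn t ht, ?_, ?_⟩⟩
  · rw [intervalIntegral.integral_congr (g := fun _ => (0 : ℝ)), intervalIntegral.integral_zero]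
    intro s hs
    refine hl s (hs.2.trans (max_le hε.le ht))
  · calc ∫ s in (0 : ℝ)..t, θ s ≤ ∫ s in (0 : ℝ)..t, (1 : ℝ) :=
          intervalIntegral.integral_mono_on ht (hθ.intervalIntegrable _ _)
            (continuous_const.intervalIntegrable _ _) fun s _ => h1 s
      _ = t := by simp
  · rcases le_total t (2 * ε) with h | h
    · linarith [hnn t ht]
    · rw [← intervalIntegral.integral_add_adjacent_intervals (hθ.intervalIntegrable 0 (2 * ε))
        (hθ.intervalIntegrable (2 * ε) t),
        intervalIntegral.integral_congr (a := 2 * ε) (b := t) (g := fun _ => (1 : ℝ))]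
      · have := hnn (2 * ε) (by positivity)
        simp
        linarith
      · intro s hs
        rw [uIcc_of_le h] at hs
        exact hr s hs.1

/-- Smooth approximations `G`, `H` of the positive part, vanishing below `ε` and satisfying
`H' = (G')²`. -/
lemma exists_truncation {ε : ℝ} (hε : 0 < ε) :
    ∃ G H θ : ℝ → ℝ, Continuous θ ∧ (∀ t, HasDerivAt G (θ t) t) ∧
      (∀ t, HasDerivAt H (θ t ^ 2) t) ∧ (∀ t ≤ ε, G t = 0) ∧ (∀ t ≤ ε, H t = 0) ∧
      (∀ t, 0 ≤ t → 0 ≤ G t ∧ G t ≤ t ∧ t - 2 * ε ≤ G t) ∧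
      ∀ t, 0 ≤ t → 0 ≤ H t ∧ H t ≤ t ∧ t - 2 * ε ≤ H t := by
  let θ : ℝ → ℝ := fun t => max 0 (min 1 ((t - ε) / ε))
  have hθ : Continuous θ := by fun_prop
  have h0 : ∀ t, 0 ≤ θ t := fun t => le_max_left _ _
  have h1 : ∀ t, θ t ≤ 1 := fun t => max_le zero_le_one (min_le_left _ _)
  have hl : ∀ t ≤ ε, θ t = 0 := fun t ht =>
    max_eq_left ((min_le_right _ _).trans (div_nonpos_of_nonpos_of_nonneg (by linarith) hε.le))
  have hr : ∀ t, 2 * ε ≤ t → θ t = 1 := fun t ht => by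
    have : 1 ≤ (t - ε) / ε := by rw [le_div_iff₀ hε]; linarith
    simp [θ, min_eq_left this]
  obtain ⟨a1, a2⟩ := primitive_cutoff_bounds hε hθ h0 h1 hl hr
  obtain ⟨b1, b2⟩ := primitive_cutoff_bounds hε (θ := fun t => θ t ^ 2) (hθ.pow 2)
    (fun t => sq_nonneg _) (fun t => pow_le_one₀ (h0 t) (h1 t))
    (fun t ht => by simp [hl t ht]) (fun t ht => by simp [hr t ht])
  exact ⟨_, _, θ, hθ, fun t => hθ.integral_hasStrictDerivAt 0 t |>.hasDerivAt,
    fun t => (hθ.pow 2).integral_hasStrictDerivAt 0 t |>.hasDerivAt, a1, b1, a2, b2⟩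

lemma pd_comp {m : ℕ} {G : ℝ → ℝ} {G' : ℝ} {W : EuclideanSpace ℝ (Fin m) → ℝ}
    {x : EuclideanSpace ℝ (Fin m)} (hG : HasDerivAt G G' (W x)) (hW : DifferentiableAt ℝ W x)
    (i : Fin m) : pd (fun y => G (W y)) i x = G' * pd W i x := by
  have := (hG.comp_hasFDerivAt x hW.hasFDerivAt).fderiv
  simp only [Function.comp_def] at this
  simp [pd, this]

lemma integral_mul_pd {m : ℕ} {f g : EuclideanSpace ℝ (Fin m) → ℝ} (hf : ContDiff ℝ 1 f)
    (hg : ContDiff ℝ 1 g) (hc : HasCompactSupport g) (i : Fin m) :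
    ∫ x, f x * pd g i x = - ∫ x, pd f i x * g x :=
  integral_mul_fderiv_eq_neg_fderiv_mul_of_integrable
    (((continuous_pd hf i).mul hg.continuous).integrable_of_hasCompactSupport hc.mul_left)
    ((hf.continuous.mul (continuous_pd hg i)).integrable_of_hasCompactSupport
      (hasCompactSupport_pd hc i).mul_left)
    ((hf.continuous.mul hg.continuous).integrable_of_hasCompactSupport hc.mul_left)
    (fun x _ => hf.differentiable one_ne_zero x) (fun x _ => hg.differentiable one_ne_zero x)

lemma continuous_lap {m : ℕ} {φ : EuclideanSpace ℝ (Fin m) → ℝ} (hφ : ContDiff ℝ 2 φ) :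
    Continuous (lap φ) :=
  continuous_finsetSum _ fun i _ => continuous_pd (contDiff_pd hφ i) i

lemma tsupport_lap_subset {m : ℕ} (φ : EuclideanSpace ℝ (Fin m) → ℝ) :
    tsupport (lap φ) ⊆ tsupport φ := by
  refine closure_minimal (fun x hx => ?_) (isClosed_tsupport φ)
  by_contra h
  refine hx (Finset.sum_eq_zero fun i _ => image_eq_zero_of_notMem_tsupport fun h' => h ?_)
  exact tsupport_pd_subset φ i (tsupport_pd_subset _ i h')

/-- Green's identity against a compactly supported function. -/
lemma integral_sum_pd_mul_pd {m : ℕ} {f g : EuclideanSpace ℝ (Fin m) → ℝ} (hf : ContDiff ℝ 2 f)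
    (hg : ContDiff ℝ 1 g) (hc : HasCompactSupport g) :
    ∫ x, ∑ i, pd f i x * pd g i x = - ∫ x, lap f x * g x := by
  simp only [lap, Finset.sum_mul]
  rw [integral_finsetSum, integral_finsetSum, ← Finset.sum_neg_distrib]
  · exact Finset.sum_congr rfl fun i _ => integral_mul_pd (contDiff_pd hf i) hg hc i
  · exact fun i _ => ((continuous_pd (contDiff_pd hf i) i).mul
      hg.continuous).integrable_of_hasCompactSupport hc.mul_left
  · exact fun i _ => ((contDiff_pd hf i).continuous.mul
      (continuous_pd hg i)).integrable_of_hasCompactSupport (hasCompactSupport_pd hc i).mul_left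

lemma contDiff_one_of_hasDerivAt {G θ : ℝ → ℝ} (hθ : Continuous θ)
    (hG : ∀ t, HasDerivAt G (θ t) t) : ContDiff ℝ 1 G := by
  rw [contDiff_one_iff_deriv]
  refine ⟨fun t => (hG t).differentiableAt, ?_⟩
  rwa [show deriv G = θ from funext fun t => (hG t).deriv]

/-- The nonnegativity of the quadratic form at `G ∘ W + s η`, expanded in `s`, where `W` is an
approximate subsolution and `p` is close to the positive part of `W`. -/
lemma quadratic_form_perturbation {m : ℕ} {Ω : Set (EuclideanSpace ℝ (Fin m))} (hΩ : IsOpen Ω)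
    (hΩb : Bornology.IsBounded Ω) {c : EuclideanSpace ℝ (Fin m) → ℝ} {K : ℝ}
    (hcm : AEStronglyMeasurable c (volume.restrict Ω)) (hcK : ∀ x ∈ Ω, |c x| ≤ K)
    (hstab : StableOn Ω c) {ε : ℝ} (hε : 0 < ε) {W : EuclideanSpace ℝ (Fin m) → ℝ}
    (hW : ContDiff ℝ 2 W) (hWc : HasCompactSupport W) (hWs : tsupport W ⊆ Ω)
    (hsub : ∀ x, ε ≤ W x → -lap W x ≤ c x * W x) {M : ℝ} (hM0 : 0 ≤ M) (hM : ∀ x, W x ≤ M)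
    {p : EuclideanSpace ℝ (Fin m) → ℝ} (hpi : IntegrableOn p Ω)
    (hp : ∀ x ∈ Ω, |max (W x) 0 - p x| ≤ ε)
    {η : EuclideanSpace ℝ (Fin m) → ℝ} (hη : ContDiff ℝ 2 η) (hηc : HasCompactSupport η)
    (hηs : tsupport η ⊆ Ω) (s : ℝ) :
    0 ≤ ε * (4 * K * M * volume.real Ω)
      + (2 * s * (∫ x in Ω, p x * (-lap η x - c x * η x))
        + 6 * |s| * ε * ∫ x in Ω, |-lap η x - c x * η x|)
      + s ^ 2 * ((∫ x in Ω, ∑ i, pd η i x ^ 2) - ∫ x in Ω, c x * η x ^ 2) := by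
  obtain ⟨G, H, θ, hθ, hG, hH, hG0, hH0, hGb, hHb⟩ := exists_truncation hε
  have hΩm := hΩ.measurableSet
  have : IsFiniteMeasure (volume.restrict Ω) := ⟨by
    rw [Measure.restrict_apply_univ]; exact hΩb.measure_lt_top⟩
  have hW1 : ContDiff ℝ 1 W := hW.of_le (by norm_num)
  have hη1 : ContDiff ℝ 1 η := hη.of_le (by norm_num)
  have hWd : ∀ x, DifferentiableAt ℝ W x := hW1.differentiable one_ne_zero
  set g : EuclideanSpace ℝ (Fin m) → ℝ := fun x => G (W x) with hgdef
  set h : EuclideanSpace ℝ (Fin m) → ℝ := fun x => H (W x) with hhdef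
  have hg : ContDiff ℝ 1 g := (contDiff_one_of_hasDerivAt hθ hG).comp hW1
  have hh : ContDiff ℝ 1 h := (contDiff_one_of_hasDerivAt (hθ.pow 2) hH).comp hW1
  have hgc : HasCompactSupport g := hWc.comp_left (hG0 0 hε.le)
  have hhc : HasCompactSupport h := hWc.comp_left (hH0 0 hε.le)
  have hgs : tsupport g ⊆ Ω := (tsupport_comp_subset (hG0 0 hε.le) W).trans hWs
  have hhs : tsupport h ⊆ Ω := (tsupport_comp_subset (hH0 0 hε.le) W).trans hWs
  have hz : ∀ {k : EuclideanSpace ℝ (Fin m) → ℝ}, tsupport k ⊆ Ω → ∀ x, x ∉ Ω → k x = 0 :=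
    fun hk x hx => image_eq_zero_of_notMem_tsupport fun h' => hx (hk h')
  have hInt : ∀ {k : EuclideanSpace ℝ (Fin m) → ℝ}, Continuous k → HasCompactSupport k →
      Integrable k (volume.restrict Ω) := fun h1 h2 =>
    (h1.integrable_of_hasCompactSupport h2).integrableOn
  have hcInt : ∀ {k : EuclideanSpace ℝ (Fin m) → ℝ}, Continuous k → HasCompactSupport k →
      Integrable (fun x => c x * k x) (volume.restrict Ω) := fun h1 h2 =>
    integrableOn_mul_of_bounded hΩm hcm hcK (hInt h1 h2)
  have hsq : ∀ {k : EuclideanSpace ℝ (Fin m) → ℝ}, HasCompactSupport k →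
      HasCompactSupport fun x => k x ^ 2 :=
    fun hk => hk.comp_left (g := fun t : ℝ => t ^ 2) (by norm_num)
  have hA : ∫ x in Ω, ∑ i, pd g i x ^ 2 ≤ ∫ x in Ω, c x * (W x * h x) := by
    calc ∫ x in Ω, ∑ i, pd g i x ^ 2 = ∫ x in Ω, ∑ i, pd W i x * pd h i x := by
          congr 1 with x
          refine Finset.sum_congr rfl fun i _ => ?_
          rw [pd_comp (hG _) (hWd x), pd_comp (hH _) (hWd x)]
          ring
      _ = ∫ x, ∑ i, pd W i x * pd h i x :=
          setIntegral_eq_integral_of_forall_compl_eq_zero fun x hx =>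
            Finset.sum_eq_zero fun i _ => by
              rw [hz ((tsupport_pd_subset h i).trans hhs) x hx, mul_zero]
      _ = ∫ x, -lap W x * h x := by
          rw [integral_sum_pd_mul_pd hW hh hhc, ← integral_neg]
          simp only [neg_mul]
      _ = ∫ x in Ω, -lap W x * h x :=
          (setIntegral_eq_integral_of_forall_compl_eq_zero fun x hx => by
            rw [hz hhs x hx, mul_zero]).symm
      _ ≤ ∫ x in Ω, c x * (W x * h x) := by
          refine integral_mono (hInt ((continuous_lap hW).neg.mul hh.continuous) hhc.mul_left)
            (hcInt (hW.continuous.mul hh.continuous) hhc.mul_left) fun x => ?_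
          show -lap W x * h x ≤ c x * (W x * h x)
          rcases le_total (W x) ε with hx | hx
          · simp [hhdef, hH0 _ hx]
          · rw [← mul_assoc]
            exact mul_le_mul_of_nonneg_right (hsub x hx) (hHb _ (hε.le.trans hx)).1
  have hB : ∫ x in Ω, ∑ i, pd g i x * pd η i x = - ∫ x in Ω, lap η x * g x := by
    rw [setIntegral_eq_integral_of_forall_compl_eq_zero fun x hx =>
        Finset.sum_eq_zero fun i _ => by
          rw [hz ((tsupport_pd_subset η i).trans hηs) x hx, mul_zero],
      setIntegral_eq_integral_of_forall_compl_eq_zero fun x hx => by rw [hz hgs x hx, mul_zero],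
      ← integral_sum_pd_mul_pd hη hg hgc]
    simp only [mul_comm]
  have hsη : tsupport (fun x => s * η x) ⊆ Ω :=
    (tsupport_comp_subset (g := fun t => s * t) (mul_zero s) η).trans hηs
  have hQ := hstab.integral_mul_sq_le hΩ hΩb hcm hcK (φ := fun x => g x + s * η x)
    (hg.add (contDiff_const.mul hη1)) (hgc.add hηc.mul_left)
    ((tsupport_add g _).trans (union_subset hgs hsη))
  have hpd : ∀ i x, pd (fun x => g x + s * η x) i x = pd g i x + s * pd η i x := by
    intro i x
    have h1 := (((hg.differentiable one_ne_zero x).hasFDerivAt).add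
      ((hη1.differentiable one_ne_zero x).hasFDerivAt.const_mul s)).fderiv
    simp only [pd]
    erw [h1]
    simp
  simp only [hpd] at hQ
  have hE1 : ∫ x in Ω, c x * (g x + s * η x) ^ 2 = (∫ x in Ω, c x * g x ^ 2)
      + 2 * s * (∫ x in Ω, c x * (g x * η x)) + s ^ 2 * ∫ x in Ω, c x * η x ^ 2 := by
    rw [← integral_const_mul, ← integral_const_mul, ← integral_add, ← integral_add]
    · congr 1 with x
      ring
    · exact (hcInt (hg.continuous.pow 2) (hsq hgc)).add
        ((hcInt (hg.continuous.mul hη.continuous) hηc.mul_left).const_mul _)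
    · exact (hcInt (hη.continuous.pow 2) (hsq hηc)).const_mul _
    · exact hcInt (hg.continuous.pow 2) (hsq hgc)
    · exact (hcInt (hg.continuous.mul hη.continuous) hηc.mul_left).const_mul _
  have hsumInt : ∀ {a b : EuclideanSpace ℝ (Fin m) → ℝ}, ContDiff ℝ 1 a → ContDiff ℝ 1 b →
      HasCompactSupport b → Integrable (fun x => ∑ i, pd a i x * pd b i x) (volume.restrict Ω) :=
    fun ha hb hbc => integrable_finsetSum _ fun i _ =>
      hInt ((continuous_pd ha i).mul (continuous_pd hb i)) (hasCompactSupport_pd hbc i).mul_left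
  have hsumInt' : ∀ {a : EuclideanSpace ℝ (Fin m) → ℝ}, ContDiff ℝ 1 a →
      HasCompactSupport a → Integrable (fun x => ∑ i, pd a i x ^ 2) (volume.restrict Ω) :=
    fun ha hac => by simpa only [sq] using hsumInt ha ha hac
  have hE2 : ∫ x in Ω, ∑ i, (pd g i x + s * pd η i x) ^ 2 = (∫ x in Ω, ∑ i, pd g i x ^ 2)
      + 2 * s * (∫ x in Ω, ∑ i, pd g i x * pd η i x) + s ^ 2 * ∫ x in Ω, ∑ i, pd η i x ^ 2 := by
    rw [← integral_const_mul, ← integral_const_mul, ← integral_add, ← integral_add]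
    · congr 1 with x
      rw [Finset.mul_sum, Finset.mul_sum, ← Finset.sum_add_distrib, ← Finset.sum_add_distrib]
      exact Finset.sum_congr rfl fun i _ => by ring
    · exact (hsumInt' hg hgc).add ((hsumInt hg hη1 hηc).const_mul (2 * s))
    · exact (hsumInt' hη1 hηc).const_mul (s ^ 2)
    · exact hsumInt' hg hgc
    · exact (hsumInt hg hη1 hηc).const_mul (2 * s)
  have hL : ∫ x in Ω, g x * (-lap η x - c x * η x)
      = -(∫ x in Ω, lap η x * g x) - ∫ x in Ω, c x * (g x * η x) := by
    rw [← integral_neg, ← integral_sub]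
    · congr 1 with x
      ring
    · exact (hInt ((continuous_lap hη).mul hg.continuous) hgc.mul_left).neg
    · exact hcInt (hg.continuous.mul hη.continuous) hηc.mul_left
  have hlapc : HasCompactSupport (lap η) :=
    hηc.of_isClosed_subset (isClosed_tsupport _) (tsupport_lap_subset η)
  have hq : Integrable (fun x => -lap η x - c x * η x) (volume.restrict Ω) :=
    (hInt (continuous_lap hη) hlapc).neg.sub (hcInt hη.continuous hηc)
  have hgp : ∀ x ∈ Ω, |g x - p x| ≤ 3 * ε := by
    intro x hx
    have h1 := abs_le.1 (hp x hx)
    rw [abs_le]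
    rcases le_total (W x) 0 with h2 | h2
    · rw [max_eq_right h2] at h1
      simp only [hgdef, hG0 _ (h2.trans hε.le)]
      constructor <;> linarith
    · rw [max_eq_left h2] at h1
      obtain ⟨h3, h4, h5⟩ := hGb _ h2
      simp only [hgdef]
      constructor <;> linarith
  have hI1 : Integrable (fun x => g x * (-lap η x - c x * η x)) (volume.restrict Ω) := by
    have : ∀ x, g x * (-lap η x - c x * η x) = -(lap η x * g x) - c x * (g x * η x) :=
      fun x => by ring
    simp only [this]
    exact (hInt ((continuous_lap hη).mul hg.continuous) hgc.mul_left).neg.sub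
      (hcInt (hg.continuous.mul hη.continuous) hηc.mul_left)
  have hI3 : Integrable (fun x => (g x - p x) * (-lap η x - c x * η x)) (volume.restrict Ω) :=
    integrableOn_mul_of_bounded hΩm ((hInt hg.continuous hgc).sub hpi).aestronglyMeasurable hgp hq
  have hI2 : ∫ x in Ω, g x * (-lap η x - c x * η x) = (∫ x in Ω, p x * (-lap η x - c x * η x))
      + ∫ x in Ω, (g x - p x) * (-lap η x - c x * η x) := by
    rw [← integral_add _ hI3]
    · congr 1 with x
      ring
    · refine (hI1.sub hI3).congr (.of_forall fun x => ?_)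
      simp only [Pi.sub_apply]
      ring
  have hI4 : |∫ x in Ω, (g x - p x) * (-lap η x - c x * η x)|
      ≤ 3 * ε * ∫ x in Ω, |-lap η x - c x * η x| := by
    rw [← integral_const_mul]
    refine (abs_integral_le_integral_abs).trans (setIntegral_mono_on hI3.abs
      (hq.abs.const_mul _) hΩm fun x hx => ?_)
    rw [abs_mul]
    exact mul_le_mul_of_nonneg_right (hgp x hx) (abs_nonneg _)
  have hJ : (∫ x in Ω, c x * (W x * h x)) - (∫ x in Ω, c x * g x ^ 2)
      ≤ ε * (4 * K * M * volume.real Ω) := by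
    have hi1 := hcInt (k := fun x => W x * h x) (hW.continuous.mul hh.continuous) hhc.mul_left
    have hi2 := hcInt (k := fun x => g x ^ 2) (hg.continuous.pow 2)
      (hsq hgc)
    rw [← integral_sub hi1 hi2]
    calc _ ≤ ∫ x in Ω, ε * (4 * K * M) := by
          refine setIntegral_mono_on (hi1.sub hi2) (integrable_const _) hΩm fun x hx => ?_
          have hK : 0 ≤ K := (abs_nonneg _).trans (hcK x hx)
          have hb : |W x * h x - g x ^ 2| ≤ 4 * ε * M := by
            rcases le_total (W x) ε with h2 | h2
            · simp only [hgdef, hhdef, hG0 _ h2, hH0 _ h2]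
              simp
              positivity
            · have h2' := hε.le.trans h2
              obtain ⟨h3, h4, h5⟩ := hGb _ h2'
              obtain ⟨h6, h7, h8⟩ := hHb _ h2'
              have h9 := hM x
              simp only [hgdef, hhdef]
              rw [abs_le]
              constructor <;> nlinarith
          calc c x * (W x * h x) - c x * g x ^ 2 = c x * (W x * h x - g x ^ 2) := by ring
            _ ≤ |c x| * |W x * h x - g x ^ 2| := by
                rw [← abs_mul]; exact le_abs_self _
            _ ≤ K * (4 * ε * M) := mul_le_mul (hcK x hx) hb (abs_nonneg _) hK
            _ = ε * (4 * K * M) := by ring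
      _ = ε * (4 * K * M * volume.real Ω) := by
          rw [setIntegral_const, smul_eq_mul]; ring
  have hs4 : 2 * s * (∫ x in Ω, (g x - p x) * (-lap η x - c x * η x))
      ≤ 6 * |s| * ε * ∫ x in Ω, |-lap η x - c x * η x| := by
    calc _ ≤ |2 * s * (∫ x in Ω, (g x - p x) * (-lap η x - c x * η x))| := le_abs_self _
      _ = 2 * |s| * |∫ x in Ω, (g x - p x) * (-lap η x - c x * η x)| := by
          rw [abs_mul, abs_mul, abs_two]
      _ ≤ 2 * |s| * (3 * ε * ∫ x in Ω, |-lap η x - c x * η x|) := by gcongr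
      _ = _ := by ring
  rw [hE1, hE2, hB] at hQ
  have hfin : (2 * s) * (∫ x in Ω, g x * (-lap η x - c x * η x))
      = 2 * s * (∫ x in Ω, p x * (-lap η x - c x * η x))
        + 2 * s * ∫ x in Ω, (g x - p x) * (-lap η x - c x * η x) := by rw [hI2]; ring
  rw [hL] at hfin
  linarith

lemma lap_congr {m : ℕ} {f g : EuclideanSpace ℝ (Fin m) → ℝ} {x : EuclideanSpace ℝ (Fin m)}
    (h : f =ᶠ[𝓝 x] g) : lap f x = lap g x := by
  refine Finset.sum_congr rfl fun i _ => ?_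
  have : pd f i =ᶠ[𝓝 x] pd g i :=
    (h.fderiv (𝕜 := ℝ)).mono fun y hy => DFunLike.congr_fun hy _
  exact DFunLike.congr_fun (this.fderiv_eq (𝕜 := ℝ)) _

lemma eq_zero_of_forall_quadratic_nonneg {A l L Q : ℝ}
    (h : ∀ ε > 0, ∀ s, 0 ≤ ε * A + (2 * s * l + 6 * |s| * ε * L) + s ^ 2 * Q) : l = 0 := by
  have h1 : ∀ s, 0 ≤ 2 * s * l + s ^ 2 * Q := by
    intro s
    have ht : Tendsto (fun ε : ℝ => ε * A + (2 * s * l + 6 * |s| * ε * L) + s ^ 2 * Q) (𝓝[>] 0)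
        (𝓝 (0 * A + (2 * s * l + 6 * |s| * 0 * L) + s ^ 2 * Q)) :=
      (Continuous.tendsto (by fun_prop) 0).mono_left nhdsWithin_le_nhds
    have := ge_of_tendsto ht (eventually_mem_nhdsWithin.mono fun ε hε => h ε hε s)
    linarith
  by_contra hl
  have hl2 : 0 < l ^ 2 := by positivity
  have hQ : 0 < |Q| + 1 := by positivity
  have h2 := h1 (-(l / (|Q| + 1)))
  have h3 : 2 * -(l / (|Q| + 1)) * l + (-(l / (|Q| + 1))) ^ 2 * Q
      = l ^ 2 / (|Q| + 1) ^ 2 * (Q - 2 * (|Q| + 1)) := by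
    field_simp
    ring
  rw [h3] at h2
  have h4 : Q - 2 * (|Q| + 1) < 0 := by linarith [le_abs_self Q, abs_nonneg Q]
  have := mul_neg_of_pos_of_neg (div_pos hl2 (pow_pos hQ 2)) h4
  linarith

/-- A cutoff of a function vanishing on the sphere, agreeing with it where it is at least `ε`. -/
lemma exists_cutoff {m : ℕ} {a : ℝ} (ha : 0 < a) {w : EuclideanSpace ℝ (Fin m) → ℝ}
    (hw2 : ContDiffOn ℝ 2 w (Metric.ball 0 a)) (hwc : ContinuousOn w (closure (Metric.ball 0 a)))
    (hw0 : ∀ x ∈ frontier (Metric.ball (0 : EuclideanSpace ℝ (Fin m)) a), w x = 0)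
    {ε : ℝ} (hε : 0 < ε) :
    ∃ W : EuclideanSpace ℝ (Fin m) → ℝ, ContDiff ℝ 2 W ∧ HasCompactSupport W ∧
      tsupport W ⊆ Metric.ball 0 a ∧
      (∀ x, ε ≤ W x → x ∈ Metric.ball 0 a ∧ 0 < w x ∧ W =ᶠ[𝓝 x] w) ∧
      (∀ x ∈ Metric.ball 0 a, W x ≤ max (w x) 0) ∧
      ∀ x ∈ Metric.ball 0 a, |max (W x) 0 - max (w x) 0| ≤ ε := by
  have hKc : IsClosed (closure (Metric.ball (0 : EuclideanSpace ℝ (Fin m)) a) ∩ w ⁻¹' Ici ε) :=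
    hwc.preimage_isClosed_of_isClosed isClosed_closure isClosed_Ici
  have hKs : closure (Metric.ball (0 : EuclideanSpace ℝ (Fin m)) a) ∩ w ⁻¹' Ici ε
      ⊆ Metric.ball 0 a := by
    rintro x ⟨hx, hxε⟩
    by_contra hn
    have : x ∈ frontier (Metric.ball (0 : EuclideanSpace ℝ (Fin m)) a) := by
      rw [Metric.isOpen_ball.frontier_eq]; exact ⟨hx, hn⟩
    have h1 : ε ≤ w x := hxε
    rw [hw0 x this] at h1
    linarith
  obtain ⟨r, hra, hr⟩ := exists_lt_subset_ball hKc hKs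
  have hr1 : max r (a / 2) < a := max_lt hra (half_lt_self ha)
  let χ : ContDiffBump (0 : EuclideanSpace ℝ (Fin m)) :=
    ⟨max r (a / 2), (max r (a / 2) + a) / 2, lt_max_of_lt_right (half_pos ha), by linarith⟩
  have hχs : tsupport χ ⊆ Metric.ball 0 a := by
    rw [χ.tsupport_eq]
    exact Metric.closedBall_subset_ball (show (max r (a / 2) + a) / 2 < a by linarith)
  have hone : ∀ x ∈ Metric.ball (0 : EuclideanSpace ℝ (Fin m)) a, ε ≤ w x →
      (fun x => χ x * w x) =ᶠ[𝓝 x] w := by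
    intro x hx hwx
    have hx1 : x ∈ Metric.ball (0 : EuclideanSpace ℝ (Fin m)) χ.rIn :=
      Metric.ball_subset_ball (le_max_left _ _) (hr ⟨subset_closure hx, hwx⟩)
    filter_upwards [Metric.isOpen_ball.mem_nhds hx1] with y hy
    rw [χ.one_of_mem_closedBall (Metric.ball_subset_closedBall hy), one_mul]
  refine ⟨fun x => χ x * w x, ?_, χ.hasCompactSupport.mul_right,
    (closure_mono (Function.support_mul_subset_left _ _)).trans hχs, fun x hx => ?_,
    fun x hx => ?_, fun x hx => ?_⟩
  · refine contDiff_iff_contDiffAt.2 fun x => ?_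
    by_cases hx : x ∈ tsupport χ
    · exact χ.contDiff.contDiffAt.mul (hw2.contDiffAt (Metric.isOpen_ball.mem_nhds (hχs hx)))
    · refine (contDiffAt_const (c := (0 : ℝ))).congr_of_eventuallyEq ?_
      filter_upwards [notMem_tsupport_iff_eventuallyEq.1 hx] with y hy
      simp [hy]
  · have hx' : ε ≤ χ x * w x := hx
    have hxb : x ∈ Metric.ball 0 a := hχs (subset_tsupport _ fun h0 => by
      rw [h0, zero_mul] at hx'; linarith)
    have hwp : 0 < w x := pos_of_mul_pos_right (hε.trans_le hx') χ.nonneg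
    have hwε : ε ≤ w x := hx'.trans (mul_le_of_le_one_left hwp.le χ.le_one)
    exact ⟨hxb, hwp, hone x hxb hwε⟩
  · show χ x * w x ≤ max (w x) 0
    rcases le_total (w x) 0 with h | h
    · exact (mul_nonpos_of_nonneg_of_nonpos χ.nonneg h).trans (le_max_right _ _)
    · exact (mul_le_of_le_one_left h χ.le_one).trans (le_max_left _ _)
  · show |max (χ x * w x) 0 - max (w x) 0| ≤ ε
    rcases le_total ε (w x) with h | h
    · have h2 : χ x * w x = w x := (hone x hx h).eq_of_nhds
      rw [h2, sub_self, abs_zero]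
      exact hε.le
    · rcases le_total (w x) 0 with h' | h'
      · rw [max_eq_right h', max_eq_right (mul_nonpos_of_nonneg_of_nonpos χ.nonneg h')]
        simpa using hε.le
      · have h1 : 0 ≤ χ x * w x := mul_nonneg χ.nonneg h'
        have h2 : χ x * w x ≤ w x := mul_le_of_le_one_left h' χ.le_one
        rw [max_eq_left h', max_eq_left h1, abs_le]
        constructor <;> linarith

/-- Under stability, the positive part of a subsolution `-Δw ≤ c w` with zero boundary values is a
distributional solution of the linearized equation. -/
lemma integral_posPart_mul_eq_zero {m : ℕ} {a : ℝ} (ha : 0 < a)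
    {c w : EuclideanSpace ℝ (Fin m) → ℝ} {K : ℝ}
    (hcm : AEStronglyMeasurable c (volume.restrict (Metric.ball 0 a)))
    (hcK : ∀ x ∈ Metric.ball 0 a, |c x| ≤ K) (hstab : StableOn (Metric.ball 0 a) c)
    (hw2 : ContDiffOn ℝ 2 w (Metric.ball 0 a)) (hwc : ContinuousOn w (closure (Metric.ball 0 a)))
    (hw0 : ∀ x ∈ frontier (Metric.ball (0 : EuclideanSpace ℝ (Fin m)) a), w x = 0)
    (hsub : ∀ x ∈ Metric.ball 0 a, 0 < w x → -lap w x ≤ c x * w x)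
    {η : EuclideanSpace ℝ (Fin m) → ℝ} (hη : ContDiff ℝ 2 η) (hηc : HasCompactSupport η)
    (hηs : tsupport η ⊆ Metric.ball 0 a) :
    ∫ x in Metric.ball 0 a, max (w x) 0 * (-lap η x - c x * η x) = 0 := by
  obtain ⟨M, hM⟩ := (Metric.isBounded_ball.isCompact_closure).exists_bound_of_continuousOn hwc
  have hpc : ContinuousOn (fun x => max (w x) 0) (closure (Metric.ball 0 a)) :=
    hwc.sup continuousOn_const
  have hpi : IntegrableOn (fun x => max (w x) 0)
      (Metric.ball (0 : EuclideanSpace ℝ (Fin m)) a) :=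
    (hpc.integrableOn_compact Metric.isBounded_ball.isCompact_closure).mono_set subset_closure
  refine eq_zero_of_forall_quadratic_nonneg
    (A := 4 * K * max M 0 * volume.real (Metric.ball (0 : EuclideanSpace ℝ (Fin m)) a))
    (L := ∫ x in Metric.ball 0 a, |-lap η x - c x * η x|)
    (Q := (∫ x in Metric.ball 0 a, ∑ i, pd η i x ^ 2) - ∫ x in Metric.ball 0 a, c x * η x ^ 2)
    fun ε hε s => ?_
  obtain ⟨W, hW, hWc, hWs, h1, h2, h3⟩ := exists_cutoff ha hw2 hwc hw0 hε
  refine quadratic_form_perturbation (M := max M 0) Metric.isOpen_ball Metric.isBounded_ball hcm hcK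
    hstab hε hW hWc hWs (fun x hx => ?_) (le_max_right _ _) (fun x => ?_) hpi h3 hη hηc hηs s
  · obtain ⟨hxb, hwp, he⟩ := h1 x hx
    rw [lap_congr he, he.eq_of_nhds]
    exact hsub x hxb hwp
  · by_cases hx : x ∈ Metric.ball (0 : EuclideanSpace ℝ (Fin m)) a
    · exact (h2 x hx).trans (max_le_max ((le_abs_self _).trans (hM x (subset_closure hx))) le_rfl)
    · rw [image_eq_zero_of_notMem_tsupport fun h => hx (hWs h)]
      exact le_max_right _ _

lemma hasDerivAt_max_zero_pow (k : ℕ) (t : ℝ) :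
    HasDerivAt (fun t : ℝ => max 0 t ^ (k + 2)) ((k + 2 : ℝ) * max 0 t ^ (k + 1)) t := by
  rcases lt_trichotomy t 0 with h | rfl | h
  · rw [max_eq_left h.le, zero_pow (by omega), mul_zero]
    refine (hasDerivAt_const t (0 : ℝ)).congr_of_eventuallyEq ?_
    filter_upwards [Iio_mem_nhds h] with s hs
    rw [max_eq_left (mem_Iio.1 hs).le, zero_pow (by omega)]
  · rw [max_self, zero_pow (by omega), mul_zero, hasDerivAt_iff_isLittleO_nhds_zero]
    simp only [zero_add, max_self, smul_zero, sub_zero]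
    rw [zero_pow (by omega)]
    simp only [sub_zero]
    refine Asymptotics.IsBigO.trans_isLittleO (g := fun h : ℝ => h ^ (k + 2)) ?_ ?_
    · refine Asymptotics.isBigO_of_le _ fun s => ?_
      rw [norm_pow, norm_pow]
      refine pow_le_pow_left₀ (norm_nonneg _) ?_ _
      rw [Real.norm_eq_abs, Real.norm_eq_abs, abs_of_nonneg (le_max_left _ _)]
      exact max_le (abs_nonneg _) (le_abs_self _)
    · exact Asymptotics.isLittleO_pow_id (by omega)
  · rw [max_eq_right h.le]
    have := (hasDerivAt_pow (k + 2) t)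
    push_cast at this
    refine this.congr_of_eventuallyEq ?_
    filter_upwards [Ioi_mem_nhds h] with s hs
    rw [max_eq_right (mem_Ioi.1 hs).le]

lemma contDiff_two_max_zero_pow (k : ℕ) : ContDiff ℝ 2 fun t : ℝ => max 0 t ^ (k + 3) := by
  rw [show (2 : WithTop ℕ∞) = 1 + 1 by norm_num, contDiff_succ_iff_deriv]
  refine ⟨fun t => (hasDerivAt_max_zero_pow (k + 1) t).differentiableAt, by simp, ?_⟩
  rw [show (deriv fun t : ℝ => max 0 t ^ (k + 3))
      = fun t => (((k + 1 : ℕ) : ℝ) + 2) * max 0 t ^ (k + 2) from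
    funext fun t => (hasDerivAt_max_zero_pow (k + 1) t).deriv]
  exact contDiff_const.mul (contDiff_one_of_hasDerivAt (by fun_prop) (hasDerivAt_max_zero_pow k))

/-- The radial barrier `((r² - |x - q|²)₊)ⁿ`. -/
noncomputable def radialBarrier {m : ℕ} (q : EuclideanSpace ℝ (Fin m)) (r : ℝ) (n : ℕ)
    (x : EuclideanSpace ℝ (Fin m)) : ℝ :=
  max 0 (r ^ 2 - ‖x - q‖ ^ 2) ^ n

lemma contDiff_radialBarrier {m : ℕ} (q : EuclideanSpace ℝ (Fin m)) (r : ℝ) (k : ℕ) :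
    ContDiff ℝ 2 (radialBarrier q r (k + 3)) :=
  (contDiff_two_max_zero_pow k).comp
    (contDiff_const.sub ((contDiff_id.sub contDiff_const).norm_sq ℝ))

lemma radialBarrier_eq_zero {m : ℕ} {q : EuclideanSpace ℝ (Fin m)} {r : ℝ} (hr : 0 ≤ r) (k : ℕ)
    {x : EuclideanSpace ℝ (Fin m)} (hx : x ∉ Metric.ball q r) :
    radialBarrier q r (k + 1) x = 0 := by
  rw [Metric.mem_ball, not_lt, dist_eq_norm] at hx
  have : r ^ 2 ≤ ‖x - q‖ ^ 2 := pow_le_pow_left₀ hr hx 2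
  rw [radialBarrier, max_eq_left (by linarith), zero_pow (by omega)]

lemma tsupport_radialBarrier_subset {m : ℕ} (q : EuclideanSpace ℝ (Fin m)) {r : ℝ} (hr : 0 ≤ r)
    (k : ℕ) : tsupport (radialBarrier q r (k + 1)) ⊆ Metric.closedBall q r :=
  closure_minimal (fun x hx => Metric.ball_subset_closedBall (by
    by_contra h
    exact hx (radialBarrier_eq_zero hr k h))) Metric.isClosed_closedBall

lemma hasFDerivAt_radialBarrier {m : ℕ} (q : EuclideanSpace ℝ (Fin m)) (r : ℝ) (k : ℕ)
    (x : EuclideanSpace ℝ (Fin m)) :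
    HasFDerivAt (radialBarrier q r (k + 2))
      (-(2 * (k + 2 : ℝ) * radialBarrier q r (k + 1) x) • innerSL ℝ (x - q)) x := by
  have h1 : HasFDerivAt (fun x => r ^ 2 - ‖x - q‖ ^ 2) (-(2 • innerSL ℝ (x - q))) x := by
    simpa using (((hasFDerivAt_id x).sub_const q).norm_sq).const_sub (r ^ 2)
  have h2 := (hasDerivAt_max_zero_pow k (r ^ 2 - ‖x - q‖ ^ 2)).comp_hasFDerivAt x h1
  refine HasFDerivAt.congr_fderiv (f := radialBarrier q r (k + 2)) h2 ?_
  ext y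
  simp [radialBarrier]
  ring

lemma pd_radialBarrier {m : ℕ} (q : EuclideanSpace ℝ (Fin m)) (r : ℝ) (k : ℕ) (i : Fin m)
    (x : EuclideanSpace ℝ (Fin m)) : pd (radialBarrier q r (k + 2)) i x
      = -(2 * (k + 2 : ℝ) * radialBarrier q r (k + 1) x) * (x i - q i) := by
  rw [pd, (hasFDerivAt_radialBarrier q r k x).fderiv]
  simp [EuclideanSpace.inner_single_right]

lemma lap_radialBarrier {m : ℕ} (q : EuclideanSpace ℝ (Fin m)) (r : ℝ) (k : ℕ)
    (x : EuclideanSpace ℝ (Fin m)) : lap (radialBarrier q r (k + 3)) x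
      = (k + 3 : ℝ) * (4 * (k + 2) * radialBarrier q r (k + 1) x * ‖x - q‖ ^ 2
        - 2 * m * radialBarrier q r (k + 2) x) := by
  have h : ∀ i, pd (pd (radialBarrier q r (k + 3)) i) i x
      = (k + 3 : ℝ) * (4 * (k + 2) * radialBarrier q r (k + 1) x * (x i - q i) ^ 2
        - 2 * radialBarrier q r (k + 2) x) := by
    intro i
    have he : pd (radialBarrier q r (k + 3)) i
        = fun x => -(2 * (k + 3 : ℝ)) * (radialBarrier q r (k + 2) x * (x i - q i)) := by
      funext y
      rw [pd_radialBarrier q r (k + 1) i y]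
      push_cast
      ring
    have hc : HasFDerivAt (fun x : EuclideanSpace ℝ (Fin m) => x i - q i)
        (EuclideanSpace.proj i : EuclideanSpace ℝ (Fin m) →L[ℝ] ℝ) x :=
      (EuclideanSpace.proj i : EuclideanSpace ℝ (Fin m) →L[ℝ] ℝ).hasFDerivAt.sub_const (q i)
    have hd := ((hasFDerivAt_radialBarrier q r k x).mul hc).const_mul (-(2 * (k + 3 : ℝ)))
    rw [he, pd]
    refine (DFunLike.congr_fun hd.fderiv _).trans ?_
    simp [EuclideanSpace.inner_single_right]
    ring
  rw [lap, Finset.sum_congr rfl fun i _ => h i, ← Finset.mul_sum, Finset.sum_sub_distrib,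
    ← Finset.mul_sum, EuclideanSpace.norm_sq_eq]
  simp only [Finset.sum_const, Finset.card_univ, Fintype.card_fin, nsmul_eq_mul,
    Real.norm_eq_abs, sq_abs, PiLp.sub_apply]
  ring

/-- If a nonnegative distributional solution vanishes on a ball, it vanishes on every larger
concentric ball compactly contained in the domain. -/
lemma eq_zero_on_larger_ball {m : ℕ} {Ω : Set (EuclideanSpace ℝ (Fin m))} (hΩ : IsOpen Ω)
    {c p : EuclideanSpace ℝ (Fin m) → ℝ} {K : ℝ}
    (hcm : AEStronglyMeasurable c (volume.restrict Ω)) (hcK : ∀ x ∈ Ω, |c x| ≤ K)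
    (hpi : IntegrableOn p Ω) (hpc : ContinuousOn p Ω) (hp0 : ∀ x ∈ Ω, 0 ≤ p x)
    (hsol : ∀ η : EuclideanSpace ℝ (Fin m) → ℝ, ContDiff ℝ 2 η → HasCompactSupport η →
      tsupport η ⊆ Ω → ∫ x in Ω, p x * (-lap η x - c x * η x) = 0)
    {q : EuclideanSpace ℝ (Fin m)} {t r : ℝ} (ht : 0 < t) (htr : t < r)
    (hr : Metric.closedBall q r ⊆ Ω) (hz : ∀ x ∈ Metric.ball q t, p x = 0) :
    ∀ x ∈ Metric.ball q r, p x = 0 := by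
  have hr0 : 0 < r := ht.trans htr
  have hK : 0 ≤ K := (abs_nonneg _).trans (hcK q (hr (Metric.mem_closedBall_self hr0.le)))
  obtain ⟨k, hk⟩ := exists_nat_gt ((2 * m * r ^ 2 + K * r ^ 4) / (4 * t ^ 2))
  rw [div_lt_iff₀ (by positivity)] at hk
  have hη := contDiff_radialBarrier q r k
  have hηs := tsupport_radialBarrier_subset q hr0.le (k + 2)
  have hηc : HasCompactSupport (radialBarrier q r (k + 3)) :=
    (isCompact_closedBall q r).of_isClosed_subset (isClosed_tsupport _) hηs
  have hpos : ∀ x ∈ Metric.ball q r, x ∉ Metric.ball q t →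
      0 < lap (radialBarrier q r (k + 3)) x + c x * radialBarrier q r (k + 3) x := by
    intro x hx hxt
    have hxΩ := hr (Metric.ball_subset_closedBall hx)
    rw [Metric.mem_ball, dist_eq_norm] at hx
    rw [Metric.mem_ball, not_lt, dist_eq_norm] at hxt
    have hρ : 0 < r ^ 2 - ‖x - q‖ ^ 2 := by
      have := pow_lt_pow_left₀ hx (norm_nonneg _) two_ne_zero
      linarith
    have hρr : r ^ 2 - ‖x - q‖ ^ 2 ≤ r ^ 2 := by linarith [sq_nonneg ‖x - q‖]
    have htx : t ^ 2 ≤ ‖x - q‖ ^ 2 := pow_le_pow_left₀ ht.le hxt 2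
    rw [lap_radialBarrier]
    simp only [radialBarrier, max_eq_right hρ.le]
    generalize ‖x - q‖ ^ 2 = y at *
    set ρ := r ^ 2 - y
    have hc := (abs_le.1 (hcK x hxΩ)).1
    have h1 : (k + 3 : ℝ) * (4 * (k + 2) * ρ ^ (k + 1) * y - 2 * m * ρ ^ (k + 2))
        + c x * ρ ^ (k + 3)
        = ρ ^ (k + 1) * ((k + 3 : ℝ) * (4 * (k + 2) * y - 2 * m * ρ) + c x * ρ ^ 2) := by ring
    rw [h1]
    refine mul_pos (pow_pos hρ _) ?_
    have hρ2 : ρ ^ 2 ≤ r ^ 4 := by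
      calc ρ ^ 2 ≤ (r ^ 2) ^ 2 := pow_le_pow_left₀ hρ.le hρr 2
        _ = r ^ 4 := by ring
    have hk0 : (0 : ℝ) ≤ k := k.cast_nonneg
    have hm0 : (0 : ℝ) ≤ m := m.cast_nonneg
    have h2 : -(K * r ^ 4) ≤ c x * ρ ^ 2 := by
      have h3 : -K * ρ ^ 2 ≤ c x * ρ ^ 2 := mul_le_mul_of_nonneg_right hc (sq_nonneg _)
      have h4 : K * ρ ^ 2 ≤ K * r ^ 4 := mul_le_mul_of_nonneg_left hρ2 hK
      linarith
    have h5 : K * r ^ 4 < 4 * (k + 2) * y - 2 * m * ρ := by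
      have h6 : (m : ℝ) * ρ ≤ m * r ^ 2 := mul_le_mul_of_nonneg_left hρr hm0
      have h7 : (k : ℝ) * t ^ 2 ≤ k * y := mul_le_mul_of_nonneg_left htx hk0
      nlinarith [sq_nonneg t]
    have h8 : 0 ≤ K * r ^ 4 := by positivity
    nlinarith
  have hout : ∀ x, x ∉ Metric.ball q r →
      lap (radialBarrier q r (k + 3)) x + c x * radialBarrier q r (k + 3) x = 0 := by
    intro x hx
    rw [lap_radialBarrier, radialBarrier_eq_zero hr0.le k hx,
      radialBarrier_eq_zero hr0.le (k + 1) hx, radialBarrier_eq_zero hr0.le (k + 2) hx]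
    ring
  have hF0 : ∀ x ∈ Ω, 0 ≤ p x * (lap (radialBarrier q r (k + 3)) x
      + c x * radialBarrier q r (k + 3) x) := by
    intro x hx
    by_cases h1 : x ∈ Metric.ball q r
    · by_cases h2 : x ∈ Metric.ball q t
      · rw [hz x h2, zero_mul]
      · exact mul_nonneg (hp0 x hx) (hpos x h1 h2).le
    · rw [hout x h1, mul_zero]
  have hlapc : HasCompactSupport (lap (radialBarrier q r (k + 3))) :=
    hηc.of_isClosed_subset (isClosed_tsupport _) (tsupport_lap_subset _)
  have hFint : IntegrableOn (fun x => p x * (lap (radialBarrier q r (k + 3)) x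
      + c x * radialBarrier q r (k + 3) x)) Ω := by
    obtain ⟨A, hA⟩ := hlapc.exists_bound_of_continuous (continuous_lap hη)
    obtain ⟨B, hB⟩ := hηc.exists_bound_of_continuous hη.continuous
    refine Integrable.mul_bdd (c := A + K * B) hpi
      ((continuous_lap hη).aestronglyMeasurable.add
        (hcm.mul hη.continuous.aestronglyMeasurable))
      (ae_restrict_of_forall_mem hΩ.measurableSet fun x hx => ?_)
    refine (norm_add_le _ _).trans (add_le_add (hA x) ?_)
    rw [norm_mul]
    exact mul_le_mul (hcK x hx) (hB x) (norm_nonneg _) hK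
  have hint0 : ∫ x in Ω, p x * (lap (radialBarrier q r (k + 3)) x
      + c x * radialBarrier q r (k + 3) x) = 0 := by
    rw [← neg_eq_zero, ← integral_neg, ← hsol _ hη hηc (hηs.trans hr)]
    congr 1 with x
    ring
  rw [setIntegral_eq_zero_iff_of_nonneg_ae
    (ae_restrict_of_forall_mem hΩ.measurableSet hF0) hFint, Filter.EventuallyEq,
    ae_restrict_iff' hΩ.measurableSet] at hint0
  by_contra! hcon
  obtain ⟨x₀, hx₀, hpx₀⟩ := hcon
  have hbΩ : Metric.ball q r ⊆ Ω := Metric.ball_subset_closedBall.trans hr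
  have hUo : IsOpen (Metric.ball q r ∩ p ⁻¹' {0}ᶜ) :=
    (hpc.mono hbΩ).isOpen_inter_preimage Metric.isOpen_ball isOpen_compl_singleton
  have hU0 : volume (Metric.ball q r ∩ p ⁻¹' {0}ᶜ) = 0 := by
    refine measure_mono_null ?_ (ae_iff.1 hint0)
    rintro x ⟨hx, hpx⟩ himp
    have h1 := himp (hbΩ hx)
    rcases mul_eq_zero.1 h1 with h2 | h2
    · exact hpx h2
    · exact (hpos x hx fun h3 => hpx (hz x h3)).ne' h2
  have := hUo.measure_eq_zero_iff volume |>.1 hU0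
  exact (this ▸ (⟨hx₀, hpx₀⟩ : x₀ ∈ Metric.ball q r ∩ p ⁻¹' {0}ᶜ) : x₀ ∈ (∅ : Set _))

/-- Unique continuation for nonnegative distributional solutions vanishing near a point. -/
lemma eq_zero_of_eventually_eq_zero {m : ℕ} {Ω : Set (EuclideanSpace ℝ (Fin m))} (hΩ : IsOpen Ω)
    (hΩc : IsPreconnected Ω) {c p : EuclideanSpace ℝ (Fin m) → ℝ} {K : ℝ}
    (hcm : AEStronglyMeasurable c (volume.restrict Ω)) (hcK : ∀ x ∈ Ω, |c x| ≤ K)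
    (hpi : IntegrableOn p Ω) (hpc : ContinuousOn p Ω) (hp0 : ∀ x ∈ Ω, 0 ≤ p x)
    (hsol : ∀ η : EuclideanSpace ℝ (Fin m) → ℝ, ContDiff ℝ 2 η → HasCompactSupport η →
      tsupport η ⊆ Ω → ∫ x in Ω, p x * (-lap η x - c x * η x) = 0)
    {z : EuclideanSpace ℝ (Fin m)} (hzΩ : z ∈ Ω) (hz : ∀ᶠ x in 𝓝 z, p x = 0) :
    ∀ x ∈ Ω, p x = 0 := by
  refine fun x hx => interior_subset (s := {x | p x = 0}) (hΩc.subset_of_closure_inter_subset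
    isOpen_interior ⟨z, hzΩ, mem_interior_iff_mem_nhds.2 hz⟩ ?_ hx)
  rintro y ⟨hyc, hyΩ⟩
  obtain ⟨s, hs, hsΩ⟩ := Metric.isOpen_iff.1 hΩ y hyΩ
  obtain ⟨q, hq, hqy⟩ := Metric.mem_closure_iff.1 hyc (s / 4) (by positivity)
  obtain ⟨t, ht, htq⟩ := Metric.isOpen_iff.1 isOpen_interior q hq
  have hsub : Metric.closedBall q (s / 2) ⊆ Ω := by
    refine subset_trans (fun x hx => ?_) hsΩ
    have := dist_triangle x q y
    rw [dist_comm q y] at this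
    have h2 := Metric.mem_closedBall.1 hx
    rw [Metric.mem_ball]
    linarith
  have := eq_zero_on_larger_ball hΩ hcm hcK hpi hpc hp0 hsol (q := q)
    (t := min t (s / 4)) (r := s / 2) (lt_min ht (by positivity))
    ((min_le_right _ _).trans_lt (by linarith)) hsub
    fun x hx => (interior_subset (s := {x | p x = 0})
      (htq (Metric.ball_subset_ball (min_le_left _ _) hx)) : x ∈ {x | p x = 0})
  exact mem_interior.2 ⟨_, this, Metric.isOpen_ball, by rw [Metric.mem_ball]; linarith⟩

lemma lap_eq_laplacian {m : ℕ} {f : EuclideanSpace ℝ (Fin m) → ℝ} {x : EuclideanSpace ℝ (Fin m)}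
    (hf : ContDiffAt ℝ 2 f x) : lap f x = Laplacian.laplacian f x := by
  rw [InnerProductSpace.laplacian_eq_iteratedFDeriv_orthonormalBasis f
    (EuclideanSpace.basisFun (Fin m) ℝ)]
  have hd : DifferentiableAt ℝ (fderiv ℝ f) x :=
    (hf.fderiv_right (m := 1) (by norm_num)).differentiableAt one_ne_zero
  refine Finset.sum_congr rfl fun i _ => ?_
  rw [iteratedFDeriv_two_apply]
  have h := (hd.hasFDerivAt.clm_apply
    (hasFDerivAt_const (EuclideanSpace.single i (1 : ℝ)) x)).fderiv
  refine (DFunLike.congr_fun h _).trans ?_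
  simp

lemma laplacian_comp_linearIsometryEquiv {m : ℕ}
    (R : EuclideanSpace ℝ (Fin m) ≃ₗᵢ[ℝ] EuclideanSpace ℝ (Fin m))
    {f : EuclideanSpace ℝ (Fin m) → ℝ} (x : EuclideanSpace ℝ (Fin m)) :
    Laplacian.laplacian (f ∘ R) x = Laplacian.laplacian f (R x) := by
  rw [InnerProductSpace.laplacian_eq_iteratedFDeriv_orthonormalBasis (f ∘ R)
      (EuclideanSpace.basisFun (Fin m) ℝ),
    InnerProductSpace.laplacian_eq_iteratedFDeriv_orthonormalBasis f
      ((EuclideanSpace.basisFun (Fin m) ℝ).map R)]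
  refine Finset.sum_congr rfl fun i _ => ?_
  have h := R.toContinuousLinearEquiv.iteratedFDerivWithin_comp_right f uniqueDiffOn_univ
    (mem_univ (R x)) 2
  rw [preimage_univ, iteratedFDerivWithin_univ, iteratedFDerivWithin_univ] at h
  refine (DFunLike.congr_fun h _).trans ?_
  rw [ContinuousMultilinearMap.compContinuousLinearMap_apply]
  congr 1
  ext j : 1
  fin_cases j <;> rfl

lemma ConvexOn.sub_le_deriv_mul {f : ℝ → ℝ} (hf : ConvexOn ℝ univ f) (hd : Differentiable ℝ f)
    (s t : ℝ) : f s - f t ≤ deriv f s * (s - t) := by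
  rcases lt_trichotomy s t with h | rfl | h
  · have := hf.deriv_le_slope (mem_univ s) (mem_univ t) h (hd s)
    rw [slope_def_field, le_div_iff₀ (by linarith)] at this
    linarith
  · simp
  · have := hf.slope_le_deriv (mem_univ t) (mem_univ s) h (hd s)
    rwa [slope_def_field, div_le_iff₀ (by linarith)] at this

/-- A stable solution lies below its image under an isometric involution. -/
lemma le_comp_of_stable {m : ℕ} {a : ℝ} (ha : 0 < a) {f : ℝ → ℝ} (hf1 : ContDiff ℝ 1 f)
    (hfconv : ConvexOn ℝ univ f) {u : EuclideanSpace ℝ (Fin m) → ℝ}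
    (hu2 : ContDiffOn ℝ 2 u (Metric.ball 0 a)) (huc : ContinuousOn u (closure (Metric.ball 0 a)))
    (heq : ∀ x ∈ Metric.ball 0 a, -lap u x = f (u x))
    (hbd : ∀ x ∈ frontier (Metric.ball 0 a), u x = 0)
    (hstab : StableOn (Metric.ball 0 a) fun x => deriv f (u x))
    (R : EuclideanSpace ℝ (Fin m) ≃ₗᵢ[ℝ] EuclideanSpace ℝ (Fin m)) (hR : ∀ x, R (R x) = x)
    {x₀ : EuclideanSpace ℝ (Fin m)} (hx₀ : x₀ ∈ Metric.ball 0 a) : u x₀ ≤ u (R x₀) := by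
  have hRb : MapsTo R (Metric.ball 0 a) (Metric.ball 0 a) := fun x hx => by
    simpa using hx
  have hcl : closure (Metric.ball (0 : EuclideanSpace ℝ (Fin m)) a) = Metric.closedBall 0 a :=
    closure_ball _ ha.ne'
  have hfr : frontier (Metric.ball (0 : EuclideanSpace ℝ (Fin m)) a) = Metric.sphere 0 a :=
    frontier_ball _ ha.ne'
  have hRcl : MapsTo R (closure (Metric.ball 0 a)) (closure (Metric.ball 0 a)) := fun x hx => by
    rw [hcl] at hx ⊢
    simpa using hx
  have hu2R : ContDiffOn ℝ 2 (u ∘ R) (Metric.ball 0 a) :=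
    hu2.comp R.contDiff.contDiffOn hRb
  have hw2 : ContDiffOn ℝ 2 (fun x => u x - u (R x)) (Metric.ball 0 a) := hu2.sub hu2R
  have hwc : ContinuousOn (fun x => u x - u (R x)) (closure (Metric.ball 0 a)) :=
    huc.sub (huc.comp R.continuous.continuousOn hRcl)
  have hw0 : ∀ x ∈ frontier (Metric.ball (0 : EuclideanSpace ℝ (Fin m)) a),
      u x - u (R x) = 0 := fun x hx => by
    have hRx : R x ∈ frontier (Metric.ball (0 : EuclideanSpace ℝ (Fin m)) a) := by
      rw [hfr] at hx ⊢
      simpa using hx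
    rw [hbd x hx, hbd _ hRx, sub_zero]
  have hsub : ∀ x ∈ Metric.ball 0 a, 0 < u x - u (R x) →
      -lap (fun x => u x - u (R x)) x ≤ deriv f (u x) * (u x - u (R x)) := by
    intro x hx _
    have hn := Metric.isOpen_ball.mem_nhds hx
    have h1 := hu2.contDiffAt hn
    have h2 := hu2R.contDiffAt hn
    have h3 : lap (fun x => u x - u (R x)) x = lap u x - lap u (R x) := by
      rw [lap_eq_laplacian (hw2.contDiffAt hn), lap_eq_laplacian h1,
        lap_eq_laplacian (hu2.contDiffAt (Metric.isOpen_ball.mem_nhds (hRb hx))),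
        ← laplacian_comp_linearIsometryEquiv]
      exact h1.laplacian_sub h2
    have h4 := hfconv.sub_le_deriv_mul (hf1.differentiable one_ne_zero) (u x) (u (R x))
    linarith [heq x hx, heq _ (hRb hx)]
  have hcc : ContinuousOn (fun x => deriv f (u x)) (closure (Metric.ball 0 a)) :=
    (hf1.continuous_deriv_one).comp_continuousOn huc
  have hK := (Metric.isBounded_ball (x := (0 : EuclideanSpace ℝ (Fin m)))
    (r := a)).isCompact_closure
  obtain ⟨K, hcK⟩ := hK.exists_bound_of_continuousOn hcc
  have hcm : AEStronglyMeasurable (fun x => deriv f (u x))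
      (volume.restrict (Metric.ball (0 : EuclideanSpace ℝ (Fin m)) a)) :=
    (hcc.mono subset_closure).aestronglyMeasurable Metric.isOpen_ball.measurableSet
  have hpc : ContinuousOn (fun x => max (u x - u (R x)) 0) (closure (Metric.ball 0 a)) :=
    hwc.sup continuousOn_const
  by_contra! hlt
  have hz : ∀ᶠ x in 𝓝 (R x₀), max (u x - u (R x)) 0 = 0 := by
    have h1 : ContinuousAt (fun x => u x - u (R x)) (R x₀) :=
      (hwc.mono subset_closure).continuousAt (Metric.isOpen_ball.mem_nhds (hRb hx₀))
    filter_upwards [h1.eventually_lt continuousAt_const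
      (show u (R x₀) - u (R (R x₀)) < 0 by rw [hR]; linarith)] with x hx
    exact max_eq_right hx.le
  have := eq_zero_of_eventually_eq_zero Metric.isOpen_ball (convex_ball _ _).isPreconnected hcm
    (fun x hx => hcK x (subset_closure hx))
    ((hpc.integrableOn_compact hK).mono_set subset_closure) (hpc.mono subset_closure)
    (fun _ _ => le_max_right _ _)
    (fun η hη hηc hηs => integral_posPart_mul_eq_zero ha hcm
      (fun x hx => hcK x (subset_closure hx)) hstab hw2 hwc hw0 hsub hη hηc hηs)
    (hRb hx₀) hz x₀ hx₀
  linarith [le_max_left (u x₀ - u (R x₀)) 0]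

lemma le_of_norm_eq_of_stable {m : ℕ} {a : ℝ} (ha : 0 < a) {f : ℝ → ℝ} (hf1 : ContDiff ℝ 1 f)
    (hfconv : ConvexOn ℝ univ f) {u : EuclideanSpace ℝ (Fin m) → ℝ}
    (hu2 : ContDiffOn ℝ 2 u (Metric.ball 0 a)) (huc : ContinuousOn u (closure (Metric.ball 0 a)))
    (heq : ∀ x ∈ Metric.ball 0 a, -lap u x = f (u x))
    (hbd : ∀ x ∈ frontier (Metric.ball 0 a), u x = 0)
    (hstab : StableOn (Metric.ball 0 a) fun x => deriv f (u x))
    {x y : EuclideanSpace ℝ (Fin m)} (hx : x ∈ Metric.ball 0 a) (hxy : ‖x‖ = ‖y‖) :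
    u x ≤ u y := by
  have h := le_comp_of_stable ha hf1 hfconv hu2 huc heq hbd hstab
    (Submodule.reflection (ℝ ∙ (x - y))ᗮ) (Submodule.reflection_reflection _) hx
  rwa [Submodule.reflection_sub hxy] at h

/-- Radial symmetry in a ball: if `B_a ⊂ ℝ^n` (`n = m+3 ≥ 3`) is the open ball of radius `a`
centered at the origin, `f ∈ C¹(ℝ)` is convex and `u` is a positive stable solution of
`-Δu = f(u)` in `B_a` with `u = 0` on `∂B_a`, then there is `v : ℝ → ℝ` with
`u(x) = v(|x|)` on `B_a`. -/
theorem statement8 (m : ℕ) (a : ℝ) (ha : 0 < a)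
    (f : ℝ → ℝ) (hf1 : ContDiff ℝ 1 f) (hfconv : ConvexOn ℝ Set.univ f)
    (u : EuclideanSpace ℝ (Fin (m + 3)) → ℝ)
    (hu2 : ContDiffOn ℝ 2 u (Metric.ball (0 : EuclideanSpace ℝ (Fin (m + 3))) a))
    (huc : ContinuousOn u (closure (Metric.ball (0 : EuclideanSpace ℝ (Fin (m + 3))) a)))
    (hupos : ∀ x ∈ Metric.ball (0 : EuclideanSpace ℝ (Fin (m + 3))) a, 0 < u x)
    (heq : ∀ x ∈ Metric.ball (0 : EuclideanSpace ℝ (Fin (m + 3))) a, -lap u x = f (u x))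
    (hbd : ∀ x ∈ frontier (Metric.ball (0 : EuclideanSpace ℝ (Fin (m + 3))) a), u x = 0)
    (hstab : StableOn (Metric.ball (0 : EuclideanSpace ℝ (Fin (m + 3))) a)
      (fun x => deriv f (u x))) :
    ∃ v : ℝ → ℝ, ∀ x ∈ Metric.ball (0 : EuclideanSpace ℝ (Fin (m + 3))) a, u x = v ‖x‖ := by
  have hle := @le_of_norm_eq_of_stable (m + 3) a ha f hf1 hfconv u hu2 huc heq hbd hstab
  refine ⟨fun r => u (EuclideanSpace.single 0 r), fun x hx => ?_⟩
  have hn : ‖x‖ = ‖(EuclideanSpace.single 0 ‖x‖ : EuclideanSpace ℝ (Fin (m + 3)))‖ := by simp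
  refine le_antisymm (hle hx hn) (hle ?_ hn.symm)
  rw [mem_ball_zero_iff] at hx ⊢
  rwa [← hn]
end

section
/- (Serrin's corner lemma.) Let Ω ⊂ ℝⁿ be a domain with the origin o on its boundary, and suppose that near o the boundary ∂Ω consists of two transversally intersecting C² hypersurfaces {ρ = 0} and {σ = 0}, with ρ < 0 and σ < 0 in Ω. Let L be the uniformly elliptic operator Lu = Σ_{i,j} a_{ij}(x) ∂²u/∂x_i∂x_j + Σ_i b_i(x) ∂u/∂x_i + c(x)u with a_{ij} = a_{ji} continuous on the closure of Ω, b_i, c ∈ L^∞(Ω), and Σ a_{ij} ξ_i ξ_j ≥ λ|ξ|² for some λ > 0. Let u ∈ C²(closure of Ω) satisfy u < 0 in Ω, u(o) = 0, and Lu ≥ 0 in Ω. Assume Σ_{i,j} a_{ij} ∂ρ/∂x_i · ∂σ/∂x_j ≥ 0 at o, and if this quantity vanishes at o assume furthermore that a_{ij} ∈ C² near o in the closure of Ω with D(Σ_{i,j} a_{ij} ∂ρ/∂x_i · ∂σ/∂x_j) = 0 at o for every first-order derivative D at o tangent to the submanifold {ρ = 0} ∩ {σ = 0}. Then for any direction s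 at o entering Ω transversally to each of the two hypersurfaces: ∂u/∂s < 0 at o if the inequality Σ a_{ij} ρ_{x_i} σ_{x_j} > 0 is strict at o, while ∂u/∂s < 0 or ∂²u/∂s² < 0 at o in the case of equality. -/
open MeasureTheory Set

section

open Filter Topology

/-- `f` is differentiable near `0` and twice differentiable at `0`, with first and second
derivatives `d₁` and `d₂` at `0`. -/
def HasSecondJet (f : ℝ → ℝ) (d₁ d₂ : ℝ) : Prop :=
  ∃ f' : ℝ → ℝ, (∀ᶠ t in 𝓝 0, HasDerivAt f (f' t) t) ∧ f' 0 = d₁ ∧ HasDerivAt f' d₂ 0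

namespace HasSecondJet

variable {f g : ℝ → ℝ} {f₁ f₂ g₁ g₂ : ℝ}

lemma const (c : ℝ) : HasSecondJet (fun _ => c) 0 0 :=
  ⟨fun _ => 0, Eventually.of_forall fun t => hasDerivAt_const t c, rfl, hasDerivAt_const _ _⟩

lemma add (hf : HasSecondJet f f₁ f₂) (hg : HasSecondJet g g₁ g₂) :
    HasSecondJet (fun t => f t + g t) (f₁ + g₁) (f₂ + g₂) := by
  obtain ⟨f', hf, hf0, hf'⟩ := hf
  obtain ⟨g', hg, hg0, hg'⟩ := hg
  refine ⟨fun t => f' t + g' t, ?_, by simp [hf0, hg0], hf'.add hg'⟩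
  filter_upwards [hf, hg] with t h1 h2 using h1.add h2

lemma mul (hf : HasSecondJet f f₁ f₂) (hg : HasSecondJet g g₁ g₂) :
    HasSecondJet (fun t => f t * g t) (f₁ * g 0 + f 0 * g₁)
      (f₂ * g 0 + 2 * (f₁ * g₁) + f 0 * g₂) := by
  obtain ⟨f', hf, rfl, hf'⟩ := hf
  obtain ⟨g', hg, rfl, hg'⟩ := hg
  refine ⟨fun t => f' t * g t + f t * g' t, ?_, rfl, ?_⟩
  · filter_upwards [hf, hg] with t h1 h2 using h1.mul h2
  · have := (hf'.mul hg.self_of_nhds).add (hf.self_of_nhds.mul hg')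
    exact this.congr_deriv (by ring)

lemma const_mul (c : ℝ) (hf : HasSecondJet f f₁ f₂) :
    HasSecondJet (fun t => c * f t) (c * f₁) (c * f₂) := by
  convert (const c).mul hf using 1 <;> ring

lemma sub (hf : HasSecondJet f f₁ f₂) (hg : HasSecondJet g g₁ g₂) :
    HasSecondJet (fun t => f t - g t) (f₁ - g₁) (f₂ - g₂) := by
  convert hf.add (hg.const_mul (-1)) using 1
  · funext t; ring
  · ring
  · ring

lemma log (hf : HasSecondJet f f₁ f₂) (h0 : 0 < f 0) :
    HasSecondJet (fun t => Real.log (f t)) (f₁ / f 0) (f₂ / f 0 - f₁ ^ 2 / f 0 ^ 2) := by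
  obtain ⟨f', hf, rfl, hf'⟩ := hf
  refine ⟨fun t => f' t / f t, ?_, rfl, ?_⟩
  · have : ∀ᶠ t in 𝓝 (0 : ℝ), 0 < f t :=
      hf.self_of_nhds.continuousAt.eventually (lt_mem_nhds h0)
    filter_upwards [hf, this] with t h1 h2 using h1.log h2.ne'
  · exact (hf'.div hf.self_of_nhds h0.ne').congr_deriv (by field_simp)

lemma mul_sqrt (hf : HasSecondJet f f₁ f₂) (h0 : 0 < f 0) :
    HasSecondJet (fun t => f t * √(f t)) (3 / 2 * √(f 0) * f₁)
      (3 / 4 * f₁ ^ 2 / √(f 0) + 3 / 2 * √(f 0) * f₂) := by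
  obtain ⟨f', hf, rfl, hf'⟩ := hf
  refine ⟨fun t => 3 / 2 * √(f t) * f' t, ?_, rfl, ?_⟩
  · have : ∀ᶠ t in 𝓝 (0 : ℝ), 0 < f t :=
      hf.self_of_nhds.continuousAt.eventually (lt_mem_nhds h0)
    filter_upwards [hf, this] with t h1 h2
    refine (h1.mul (h1.sqrt h2.ne')).congr_deriv ?_
    have h3 : 0 < √(f t) := Real.sqrt_pos.2 h2
    have h4 : f t = √(f t) ^ 2 := (Real.sq_sqrt h2.le).symm
    generalize √(f t) = q at *
    rw [h4]
    field_simp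
    ring
  · have h3 : 0 < √(f 0) := Real.sqrt_pos.2 h0
    refine (((hf.self_of_nhds.sqrt h0.ne').const_mul (3 / 2)).mul hf').congr_deriv ?_
    field_simp
    ring

lemma eq_zero_and_nonpos (hf : HasSecondJet f f₁ f₂) (hmax : IsLocalMax f 0) :
    f₁ = 0 ∧ f₂ ≤ 0 := by
  obtain ⟨f', hf, rfl, hf'⟩ := hf
  have h0 : f' 0 = 0 := hmax.hasDerivAt_eq_zero hf.self_of_nhds
  refine ⟨h0, ?_⟩
  by_contra! hpos
  have hd : deriv f =ᶠ[𝓝 0] f' := by filter_upwards [hf] with t ht using ht.deriv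
  have hmin : IsLocalMin f 0 := by
    refine isLocalMin_of_deriv_deriv_pos ?_ ?_ hf.self_of_nhds.continuousAt
    · rw [hd.deriv_eq, hf'.deriv]; exact hpos
    · rw [hf.self_of_nhds.deriv, h0]
  have hconst : f =ᶠ[𝓝 0] fun _ => f 0 := by
    filter_upwards [hmin, hmax] with t h1 h2 using le_antisymm h2 h1
  have hd0 : f' =ᶠ[𝓝 0] fun _ => 0 := by
    filter_upwards [hconst.eventuallyEq_nhds, hd] with t h1 h2
    rw [← h2, h1.deriv_eq, deriv_const]
  have := hd0.deriv_eq
  rw [hf'.deriv, deriv_const] at this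
  exact hpos.ne' this

end HasSecondJet

section Lines

variable {F : Type*} [NormedAddCommGroup F] [InnerProductSpace ℝ F]

lemma hasSecondJet_clm_line (l : F →L[ℝ] ℝ) (X v : F) :
    HasSecondJet (fun t => l (X + t • v)) (l v) 0 := by
  refine ⟨fun _ => l v, Eventually.of_forall fun t => ?_, rfl, hasDerivAt_const _ _⟩
  have : HasDerivAt (fun t : ℝ => l X + t * l v) (1 * l v) t :=
    ((hasDerivAt_id t).mul_const (l v)).const_add (l X)
  simpa using this

lemma hasSecondJet_normSq_line (X v : F) :
    HasSecondJet (fun t : ℝ => ‖X + t • v‖ ^ 2) (2 * inner ℝ X v) (2 * ‖v‖ ^ 2) := by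
  have h : (fun t : ℝ => ‖X + t • v‖ ^ 2)
      = fun t => ‖X‖ ^ 2 + 2 * inner ℝ X v * t + ‖v‖ ^ 2 * t ^ 2 := by
    funext t
    rw [norm_add_sq_real, inner_smul_right, norm_smul, mul_pow, Real.norm_eq_abs, sq_abs]
    ring
  rw [h]
  refine ⟨fun t => 2 * inner ℝ X v + ‖v‖ ^ 2 * (2 * t), Eventually.of_forall fun t => ?_,
    by simp, ?_⟩
  · have h1 := ((hasDerivAt_id t).const_mul (2 * inner ℝ X v)).const_add (‖X‖ ^ 2)
    have h2 := ((hasDerivAt_pow 2 t).const_mul (‖v‖ ^ 2))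
    exact (h1.add h2).congr_deriv (by simp)
  · exact ((((hasDerivAt_id (0 : ℝ)).const_mul 2).const_mul (‖v‖ ^ 2)).const_add
      (2 * inner ℝ X v)).congr_deriv (by ring)

end Lines

lemma clm_eq_sum_single {n : ℕ} (l : EuclideanSpace ℝ (Fin n) →L[ℝ] ℝ)
    (v : EuclideanSpace ℝ (Fin n)) :
    l v = ∑ i, v i * l (EuclideanSpace.single i 1) := by
  conv_lhs => rw [← (EuclideanSpace.basisFun (Fin n) ℝ).sum_repr v]
  simp [map_sum]

lemma hasSecondJet_line {n : ℕ} {u : EuclideanSpace ℝ (Fin n) → ℝ}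
    {X : EuclideanSpace ℝ (Fin n)} (hu : ContDiffAt ℝ 2 u X) (v : EuclideanSpace ℝ (Fin n)) :
    HasSecondJet (fun t : ℝ => u (X + t • v)) (∑ i, v i * pd u i X)
      (∑ i, ∑ j, v i * v j * pd (pd u i) j X) := by
  have hline : ∀ t : ℝ, HasDerivAt (fun t : ℝ => X + t • v) v t := fun t => by
    simpa using ((hasDerivAt_id t).smul_const v).const_add X
  have hev : ∀ᶠ Y in 𝓝 X, ContDiffAt ℝ 2 u Y := hu.eventually (by simp)
  have hcont : Tendsto (fun t : ℝ => X + t • v) (𝓝 0) (𝓝 X) := by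
    simpa using (hline 0).continuousAt.tendsto
  have hpd : ∀ i, DifferentiableAt ℝ (pd u i) X := fun i => by
    have h1 : ContDiffAt ℝ 1 (fderiv ℝ u) X := hu.fderiv_right (by norm_num)
    exact (h1.differentiableAt (by norm_num)).clm_apply (differentiableAt_const _)
  refine ⟨fun t => ∑ i, v i * pd u i (X + t • v), ?_, by simp, ?_⟩
  · filter_upwards [hcont.eventually hev] with t ht
    have := (ht.differentiableAt (by norm_num)).hasFDerivAt.comp_hasDerivAt t (hline t)
    rw [clm_eq_sum_single] at this
    exact this
  · have h : ∀ i, HasDerivAt (fun t : ℝ => v i * pd u i (X + t • v))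
        (v i * ∑ j, v j * pd (pd u i) j X) 0 := fun i => by
      have h1 : HasFDerivAt (pd u i) (fderiv ℝ (pd u i) X) (X + (0 : ℝ) • v) := by
        simpa using (hpd i).hasFDerivAt
      have := h1.comp_hasDerivAt 0 (hline 0)
      rw [clm_eq_sum_single] at this
      exact this.const_mul (v i)
    refine (HasDerivAt.fun_sum (u := Finset.univ) (fun i _ => h i)).congr_deriv ?_
    simp [Finset.mul_sum, mul_assoc]

lemma exists_sum_mul_eq {n : ℕ} {A : Fin n → Fin n → ℝ} (hsymm : ∀ i j, A i j = A j i)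
    (hA : ∀ ξ : EuclideanSpace ℝ (Fin n), 0 ≤ ∑ i, ∑ j, A i j * ξ i * ξ j) :
    ∃ (m : ℕ) (V : Fin m → EuclideanSpace ℝ (Fin n)), ∀ i j, A i j = ∑ k, V k i * V k j := by
  have hpsd : (Matrix.of A).PosSemidef := by
    refine Matrix.PosSemidef.of_dotProduct_mulVec_nonneg ?_ fun x => ?_
    · ext i j; simp [hsymm i j]
    · have := hA (WithLp.toLp 2 x)
      simp only [dotProduct, Matrix.mulVec, Finset.mul_sum]
      refine this.trans_eq (Finset.sum_congr rfl fun i _ => Finset.sum_congr rfl fun j _ => ?_)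
      simp; ring
  obtain ⟨m, v, hv⟩ := Matrix.posSemidef_iff_eq_sum_vecMulVec.1 hpsd
  refine ⟨m, fun k => WithLp.toLp 2 (v k), fun i j => ?_⟩
  have := congrFun (congrFun hv i) j
  simpa [Matrix.sum_apply, Matrix.vecMulVec_apply] using this

lemma exists_pos_le_neg_mul_of_subsolution {n : ℕ} {Ω : Set (EuclideanSpace ℝ (Fin n))}
    (hΩo : IsOpen Ω)
    {a : EuclideanSpace ℝ (Fin n) → Fin n → Fin n → ℝ}
    {b : EuclideanSpace ℝ (Fin n) → Fin n → ℝ} {c u : EuclideanSpace ℝ (Fin n) → ℝ}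
    (hasym : ∀ x i j, a x i j = a x j i)
    (hpsd : ∀ x ∈ Ω, ∀ ξ : EuclideanSpace ℝ (Fin n), 0 ≤ ∑ i, ∑ j, a x i j * ξ i * ξ j)
    {M : ℝ} (hc : ∀ x ∈ Ω, |c x| ≤ M)
    (hu2 : ContDiffOn ℝ 2 u (closure Ω)) (huneg : ∀ x ∈ Ω, u x < 0)
    (hLu : ∀ x ∈ Ω,
        0 ≤ (∑ i, ∑ j, a x i j * pd (pd u i) j x) + (∑ i, b x i * pd u i x) + c x * u x)
    {r : ℝ} (hr : 0 < r) {h : EuclideanSpace ℝ (Fin n) → ℝ} (hcont : Continuous h)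
    (h0 : h 0 ≤ 0)
    (hfr : ∀ x ∈ frontier Ω, x ≠ 0 → ‖x‖ ≤ r → h x < 0)
    (hsub : ∀ x ∈ Ω, ‖x‖ < r → 0 < h x → ∃ D₁ D₂ : EuclideanSpace ℝ (Fin n) → ℝ,
      (∀ v, HasSecondJet (fun t : ℝ => h (x + t • v)) (D₁ v) (D₂ v)) ∧
      ∀ (m : ℕ) (V : Fin m → EuclideanSpace ℝ (Fin n)),
        (∀ i j, a x i j = ∑ k, V k i * V k j) →
        M * h x < ∑ k, D₂ (V k) + ∑ i, b x i * D₁ (EuclideanSpace.single i 1)) :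
    ∃ ε > 0, ∀ x ∈ Ω, ‖x‖ ≤ r → u x ≤ -(ε * h x) := by
  have hucont : ContinuousOn u (closure Ω) := hu2.continuousOn
  have hule : ∀ x ∈ closure Ω, u x ≤ 0 := fun x hx =>
    le_on_closure (fun y hy => (huneg y hy).le) hucont continuousOn_const hx
  have hK : IsCompact (closure Ω ∩ Metric.closedBall 0 r) :=
    (isCompact_closedBall _ _).inter_left isClosed_closure
  have hmemΩ : ∀ x ∈ closure Ω, x ∉ Ω → x ∈ frontier Ω := fun x hx hx' => by
    rw [frontier, hΩo.interior_eq]; exact ⟨hx, hx'⟩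
  -- a multiple of `h` lies below `-u` on the outer part of the boundary
  obtain ⟨ε, hε, hout⟩ : ∃ ε > 0, ∀ x ∈ closure Ω, ‖x‖ = r → u x + ε * h x ≤ 0 := by
    have hS : IsCompact ((closure Ω ∩ Metric.closedBall 0 r) ∩ (Metric.sphere 0 r ∩ {x | 0 ≤ h x})) :=
      hK.inter_right (Metric.isClosed_sphere.inter (isClosed_le continuous_const hcont))
    set S := (closure Ω ∩ Metric.closedBall 0 r) ∩ (Metric.sphere 0 r ∩ {x | 0 ≤ h x})
    rcases S.eq_empty_or_nonempty with hem | hne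
    · refine ⟨1, one_pos, fun x hx hxr => ?_⟩
      have : ¬ 0 ≤ h x := fun hh => by
        have : x ∈ S := ⟨⟨hx, by simp [hxr]⟩, by simp [hxr], hh⟩
        simp [hem] at this
      linarith [hule x hx]
    · obtain ⟨y, hyS, hy⟩ := hS.exists_isMaxOn hne (hucont.mono fun x hx => hx.1.1)
      obtain ⟨z, hzS, hz⟩ := hS.exists_isMaxOn hne hcont.continuousOn
      have hyΩ : y ∈ Ω := by
        by_contra hyn
        have hyr : ‖y‖ = r := by simpa using hyS.2.1
        have := hfr y (hmemΩ y hyS.1.1 hyn) (by rw [← norm_pos_iff, hyr]; exact hr) hyr.le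
        exact absurd hyS.2.2 (not_le.2 this)
      have huy := huneg y hyΩ
      have hhz : 0 ≤ h z := hzS.2.2
      refine ⟨-u y / (h z + 1), by apply div_pos <;> linarith, fun x hx hxr => ?_⟩
      have hεpos : 0 < -u y / (h z + 1) := by apply div_pos <;> linarith
      by_cases hh : 0 ≤ h x
      · have hxS : x ∈ S := ⟨⟨hx, by simp [hxr]⟩, by simp [hxr], hh⟩
        have h1 : u x ≤ u y := hy hxS
        have h2 : h x ≤ h z := hz hxS
        have h3 : -u y / (h z + 1) * (h z + 1) = -u y := by field_simp
        nlinarith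
      · nlinarith [hule x hx]
  refine ⟨ε, hε, fun x hx hxr => ?_⟩
  by_contra! hlt
  have hw : ContinuousOn (fun x => u x + ε * h x) (closure Ω ∩ Metric.closedBall 0 r) :=
    (hucont.mono inter_subset_left).add (continuous_const.mul hcont).continuousOn
  have hxK : x ∈ closure Ω ∩ Metric.closedBall 0 r := ⟨subset_closure hx, by simpa using hxr⟩
  obtain ⟨X, hXK, hX⟩ := hK.exists_isMaxOn ⟨x, hxK⟩ hw
  have hwX : 0 < u X + ε * h X := by
    have : u x + ε * h x ≤ u X + ε * h X := hX hxK
    linarith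
  have hXr' : ‖X‖ ≤ r := by simpa using hXK.2
  have hXr : ‖X‖ < r := lt_of_le_of_ne hXr' fun he => by linarith [hout X hXK.1 he]
  have hXΩ : X ∈ Ω := by
    by_contra hn
    have h1 : h X ≤ 0 := by
      by_cases hX0 : X = 0
      · rw [hX0]; exact h0
      · exact (hfr X (hmemΩ X hXK.1 hn) hX0 hXr').le
    nlinarith [hule X hXK.1]
  have huX := huneg X hXΩ
  have hhX : 0 < h X := by
    by_contra! hh
    nlinarith
  obtain ⟨D₁, D₂, hjet, hD⟩ := hsub X hXΩ hXr hhX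
  obtain ⟨m, V, hV⟩ := exists_sum_mul_eq (hasym X) (hpsd X hXΩ)
  have huX2 : ContDiffAt ℝ 2 u X :=
    (hu2 X hXK.1).contDiffAt (mem_of_superset (hΩo.mem_nhds hXΩ) subset_closure)
  have hmax : IsLocalMax (fun x => u x + ε * h x) X := by
    have hn : Ω ∩ Metric.ball 0 r ∈ 𝓝 X :=
      (hΩo.inter Metric.isOpen_ball).mem_nhds ⟨hXΩ, by simpa using hXr⟩
    filter_upwards [hn] with y hy
    exact hX ⟨subset_closure hy.1, Metric.ball_subset_closedBall hy.2⟩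
  have hdir : ∀ v, (∑ i, v i * pd u i X) + ε * D₁ v = 0 ∧
      (∑ i, ∑ j, v i * v j * pd (pd u i) j X) + ε * D₂ v ≤ 0 := fun v => by
    refine ((hasSecondJet_line huX2 v).add ((hjet v).const_mul ε)).eq_zero_and_nonpos ?_
    have hc : ContinuousAt (fun t : ℝ => X + t • v) 0 := by fun_prop
    have : IsLocalMax (fun x => u x + ε * h x) (X + (0 : ℝ) • v) := by simpa using hmax
    exact this.comp_continuous (g := fun t : ℝ => X + t • v) hc
  have hgrad : ∀ i, pd u i X = -(ε * D₁ (EuclideanSpace.single i 1)) := fun i => by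
    have := (hdir (EuclideanSpace.single i 1)).1
    simp [Finset.sum_ite_eq'] at this
    linarith
  have hess : (∑ i, ∑ j, a X i j * pd (pd u i) j X) + ε * ∑ k, D₂ (V k) ≤ 0 := by
    have h1 : ∑ i, ∑ j, a X i j * pd (pd u i) j X
        = ∑ k, ∑ i, ∑ j, V k i * V k j * pd (pd u i) j X := by
      rw [Finset.sum_comm]
      simp_rw [hV, Finset.sum_mul]
      rw [Finset.sum_comm]
      rw [Finset.sum_comm (s := Finset.univ (α := Fin m))]
      refine Finset.sum_congr rfl fun i _ => ?_
      rw [Finset.sum_comm]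
    rw [h1, Finset.mul_sum, ← Finset.sum_add_distrib]
    exact Finset.sum_nonpos fun k _ => (hdir (V k)).2
  have hb : ∑ i, b X i * pd u i X = -(ε * ∑ i, b X i * D₁ (EuclideanSpace.single i 1)) := by
    rw [Finset.mul_sum, ← Finset.sum_neg_distrib]
    exact Finset.sum_congr rfl fun i _ => by rw [hgrad]; ring
  have hDV := hD m V hV
  have hL := hLu X hXΩ
  rw [hb] at hL
  have hcu : c X * u X ≤ M * (ε * h X) := by
    have h1 := hc X hXΩ
    have h2 : c X * u X ≤ |c X| * (-u X) := by
      rw [← abs_of_neg huX, ← abs_mul]; exact le_abs_self _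
    have h3 : |c X| * (-u X) ≤ M * (-u X) := by gcongr; linarith
    have h4 : M * (-u X) ≤ M * (ε * h X) := by
      gcongr
      · exact (abs_nonneg _).trans h1
      · linarith
    linarith
  nlinarith

section Cone

variable {F : Type*} [NormedAddCommGroup F] [NormedSpace ℝ F]

lemma exists_neg_along_of_fderiv_neg {ρ : F → ℝ} (hρ : ContDiff ℝ 1 ρ) {s : F}
    (hs : fderiv ℝ ρ 0 s < 0) :
    ∃ r > 0, ∀ p : F, ‖p‖ < r → ρ p < 0 → ∀ v, ‖v - s‖ < r → ∀ t ∈ Icc 0 r,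
      ρ (p + t • v) < 0 := by
  have hcont : Continuous fun q : F × F => fderiv ℝ ρ q.1 q.2 :=
    hρ.continuous_fderiv_apply (by norm_num)
  have hev : ∀ᶠ q : F × F in 𝓝 (0, s), fderiv ℝ ρ q.1 q.2 < 0 :=
    hcont.continuousAt.eventually (gt_mem_nhds hs)
  obtain ⟨η, hη, hball⟩ := Metric.eventually_nhds_iff.1 hev
  have hden : 0 < 1 + ‖s‖ + η := by positivity
  refine ⟨η / (2 * (1 + ‖s‖ + η)), by positivity, fun p hp hρp v hv t ht => ?_⟩
  set r := η / (2 * (1 + ‖s‖ + η)) with hr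
  have hr0 : 0 < r := by positivity
  have hreq : r * (2 * (1 + ‖s‖ + η)) = η := by rw [hr]; field_simp
  have hrη : r < η := by nlinarith [norm_nonneg s]
  have hvn : ‖v‖ ≤ ‖s‖ + η := by
    have := norm_le_norm_add_norm_sub' v s
    linarith
  have hdist : ∀ τ ∈ Icc 0 r, dist (p + τ • v, v) (0, s) < η := fun τ hτ => by
    rw [Prod.dist_eq, max_lt_iff]
    refine ⟨?_, by simpa [dist_eq_norm] using hv.trans hrη⟩
    rw [dist_zero_right]
    calc ‖p + τ • v‖ ≤ ‖p‖ + ‖τ • v‖ := norm_add_le _ _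
      _ = ‖p‖ + τ * ‖v‖ := by rw [norm_smul, Real.norm_eq_abs, abs_of_nonneg hτ.1]
      _ < r + r * (‖s‖ + η) := add_lt_add_of_lt_of_le hp
          (mul_le_mul hτ.2 hvn (norm_nonneg _) hr0.le)
      _ ≤ η := by nlinarith [norm_nonneg s]
  have hderiv : ∀ τ : ℝ, HasDerivAt (fun τ : ℝ => ρ (p + τ • v))
      (fderiv ℝ ρ (p + τ • v) v) τ := fun τ => by
    have h1 : HasDerivAt (fun t : ℝ => p + t • v) v τ := by
      simpa using ((hasDerivAt_id τ).smul_const v).const_add p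
    exact ((hρ.differentiable (by norm_num)) _).hasFDerivAt.comp_hasDerivAt τ h1
  have hanti : AntitoneOn (fun τ : ℝ => ρ (p + τ • v)) (Icc 0 r) := by
    refine antitoneOn_of_deriv_nonpos (convex_Icc _ _)
      (fun τ _ => (hderiv τ).continuousAt.continuousWithinAt)
      (fun τ _ => (hderiv τ).differentiableAt.differentiableWithinAt) fun τ hτ => ?_
    rw [interior_Icc] at hτ
    rw [(hderiv τ).deriv]
    exact (hball (hdist τ (Ioo_subset_Icc_self hτ))).le
  have := hanti (left_mem_Icc.2 hr0.le) ht ht.1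
  simp only [zero_smul, add_zero] at this
  exact this.trans_lt hρp

variable {Ω : Set F} {ρ σ : F → ℝ}

lemma exists_cone_subset (hΩo : IsOpen Ω) (hρ : ContDiff ℝ 1 ρ) (hσ : ContDiff ℝ 1 σ)
    (hneg : ∀ x ∈ Ω, ρ x < 0 ∧ σ x < 0)
    (hbdry : ∃ U ∈ 𝓝 (0 : F), frontier Ω ∩ U ⊆ {x | ρ x = 0} ∪ {x | σ x = 0}) {s : F}
    (hs : fderiv ℝ ρ 0 s < 0) (hs' : fderiv ℝ σ 0 s < 0) :
    ∃ r > 0, ∀ p ∈ Ω, ‖p‖ < r → ∀ v, ‖v - s‖ < r → ∀ t ∈ Icc 0 r, p + t • v ∈ Ω := by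
  obtain ⟨r₁, hr₁, h₁⟩ := exists_neg_along_of_fderiv_neg hρ hs
  obtain ⟨r₂, hr₂, h₂⟩ := exists_neg_along_of_fderiv_neg hσ hs'
  obtain ⟨U, hU, hUf⟩ := hbdry
  have hcont : Continuous fun q : ℝ × F × F => q.2.1 + q.1 • q.2.2 := by fun_prop
  obtain ⟨r₃, hr₃, h₃⟩ := Metric.mem_nhds_iff.1 hU
  have hden : 0 < 1 + ‖s‖ + r₁ := by positivity
  set r₄ := r₃ / (2 * (1 + ‖s‖ + r₁)) with hr₄
  have hr₄0 : 0 < r₄ := by positivity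
  have hreq : r₄ * (2 * (1 + ‖s‖ + r₁)) = r₃ := by rw [hr₄]; field_simp
  refine ⟨min (min r₁ r₂) r₄, by positivity, fun p hp hpr v hv t ht => ?_⟩
  simp only [lt_min_iff] at hpr hv
  have ht' : t ≤ r₁ ∧ t ≤ r₂ ∧ t ≤ r₄ := by
    have := ht.2; simp only [le_min_iff] at this; tauto
  have hvn : ‖v‖ ≤ ‖s‖ + r₁ := by
    have := norm_le_norm_add_norm_sub' v s
    linarith
  have hseg : IsPreconnected ((fun τ : ℝ => p + τ • v) '' Icc 0 t) :=
    isPreconnected_Icc.image _ (by fun_prop)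
  refine hseg.subset_of_closure_inter_subset hΩo
    ⟨p, ⟨0, left_mem_Icc.2 ht.1, by simp⟩, hp⟩ ?_ ⟨t, right_mem_Icc.2 ht.1, rfl⟩
  rintro _ ⟨hcl, τ, hτ, rfl⟩
  by_contra hn
  have hfr : p + τ • v ∈ frontier Ω := by rw [frontier, hΩo.interior_eq]; exact ⟨hcl, hn⟩
  have hmem : p + τ • v ∈ U := by
    refine h₃ ?_
    rw [mem_ball_zero_iff]
    calc ‖p + τ • v‖ ≤ ‖p‖ + ‖τ • v‖ := norm_add_le _ _
      _ = ‖p‖ + τ * ‖v‖ := by rw [norm_smul, Real.norm_eq_abs, abs_of_nonneg hτ.1]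
      _ < r₄ + r₄ * (‖s‖ + r₁) := add_lt_add_of_lt_of_le hpr.2
          (mul_le_mul (hτ.2.trans ht'.2.2) hvn (norm_nonneg _) hr₄0.le)
      _ ≤ r₃ := by nlinarith [norm_nonneg s]
  rcases hUf ⟨hfr, hmem⟩ with h | h
  · exact (h₁ p hpr.1.1 (hneg p hp).1 v hv.1.1 τ ⟨hτ.1, hτ.2.trans ht'.1⟩).ne h
  · exact (h₂ p hpr.1.2 (hneg p hp).2 v hv.1.2 τ ⟨hτ.1, hτ.2.trans ht'.2.1⟩).ne h

variable {s : F} {r : ℝ}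

lemma uniqueDiffOn_closure_inter_ball (hr : 0 < r)
    (hcone : ∀ p ∈ Ω, ‖p‖ < r → ∀ v, ‖v - s‖ < r → ∀ t ∈ Icc 0 r, p + t • v ∈ Ω) :
    UniqueDiffOn ℝ (closure Ω ∩ Metric.ball 0 r) := by
  rintro x ⟨hx, hxr⟩
  refine UniqueDiffWithinAt.inter ?_ (Metric.isOpen_ball.mem_nhds hxr)
  have hcl : ∀ v, ‖v - s‖ < r → ∀ t ∈ Icc 0 r, x + t • v ∈ closure Ω := fun v hv t ht => by
    have h1 : x ∈ closure (Ω ∩ Metric.ball 0 r) :=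
      Metric.isOpen_ball.closure_inter ⟨hx, hxr⟩
    refine map_mem_closure (f := fun y => y + t • v) (by fun_prop) h1 fun y hy => ?_
    exact hcone y hy.1 (by simpa using hy.2) v hv t ht
  set B := Metric.ball (x + r • s) (r * r)
  have hBne : (x + r • s) ∈ B := Metric.mem_ball_self (by positivity)
  have hsub : convexHull ℝ (insert x B) ⊆ closure Ω := by
    rw [convexHull_insert ⟨_, hBne⟩, (convex_ball _ _).convexHull_eq]
    intro y hy
    obtain ⟨x', hx', b, hb, hy⟩ := mem_convexJoin.1 hy
    rw [mem_singleton_iff.1 hx', segment_eq_image'] at hy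
    obtain ⟨θ, hθ, rfl⟩ := hy
    have := hcl (r⁻¹ • (b - x)) ?_ (θ * r) ⟨by have := hθ.1; positivity, by nlinarith [hθ.2]⟩
    · rwa [mul_smul, smul_inv_smul₀ hr.ne'] at this
    · have hb' : ‖b - x - r • s‖ < r * r := by
        rw [sub_sub, ← dist_eq_norm]; exact hb
      have : r⁻¹ • (b - x) - s = r⁻¹ • (b - x - r • s) := by
        rw [smul_sub _ (b - x), inv_smul_smul₀ hr.ne']
      rw [this, norm_smul, norm_inv, Real.norm_eq_abs, abs_of_pos hr, inv_mul_lt_iff₀ hr]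
      exact hb'
  refine (uniqueDiffWithinAt_convex (convex_convexHull ℝ (insert x B)) ?_ ?_).mono hsub
  · exact ⟨_, mem_interior.2 ⟨B, (subset_insert _ _).trans (subset_convexHull ℝ _),
      Metric.isOpen_ball, hBne⟩⟩
  · exact subset_closure (subset_convexHull ℝ _ (mem_insert _ _))

lemma exists_smul_mem (hr : 0 < r) (h0 : (0 : F) ∈ closure Ω)
    (hcone : ∀ p ∈ Ω, ‖p‖ < r → ∀ v, ‖v - s‖ < r → ∀ t ∈ Icc 0 r, p + t • v ∈ Ω) :
    ∀ t ∈ Ioc 0 r, t • s ∈ Ω := by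
  intro t ht
  obtain ⟨p, hp, hpd⟩ := Metric.mem_closure_iff.1 h0 (min r (t * r))
    (lt_min hr (mul_pos ht.1 hr))
  rw [dist_zero_left, lt_min_iff] at hpd
  have := hcone p hp hpd.1 (s - t⁻¹ • p) ?_ t ⟨ht.1.le, ht.2⟩
  · rwa [smul_sub, smul_inv_smul₀ ht.1.ne', add_sub_cancel] at this
  · rw [sub_sub_cancel_left, norm_neg, norm_smul, norm_inv, Real.norm_eq_abs, abs_of_pos ht.1,
      inv_mul_lt_iff₀ ht.1]
    exact hpd.2

lemma exists_taylor_lower_bound (hr : 0 < r)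
    (huniq : UniqueDiffOn ℝ (closure Ω ∩ Metric.ball 0 r)) {u : F → ℝ}
    (hu : ContDiffOn ℝ 2 u (closure Ω)) (hu0 : u 0 = 0)
    (hs : ∀ t ∈ Icc 0 r, t • s ∈ closure Ω) {η : ℝ} (hη : 0 < η) :
    ∃ t₀ > 0, ∀ t ∈ Icc 0 t₀, t * fderivWithin ℝ u (closure Ω) 0 s
      + t ^ 2 / 2 * (fderivWithin ℝ (fun x => fderivWithin ℝ u (closure Ω) x s) (closure Ω) 0 s - η)
      ≤ u (t • s) := by
  set S := closure Ω ∩ Metric.ball (0 : F) r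
  set g : F → ℝ := fun x => fderivWithin ℝ u (closure Ω) x s
  set D := fderivWithin ℝ g (closure Ω) 0 s
  have hball : Metric.ball (0 : F) r ∈ 𝓝 (0 : F) := Metric.ball_mem_nhds _ hr
  have h0 : (0 : F) ∈ closure Ω := by simpa using hs 0 ⟨le_rfl, hr.le⟩
  have h0S : (0 : F) ∈ S := ⟨h0, Metric.mem_ball_self hr⟩
  have huS : ∀ x ∈ S, HasFDerivWithinAt u (fderivWithin ℝ u (closure Ω) x) (closure Ω) x :=
    fun x hx => ((hu x hx.1).differentiableWithinAt (by norm_num)).hasFDerivWithinAt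
  have hgd : DifferentiableWithinAt ℝ g (closure Ω) 0 := by
    have h1 : ContDiffWithinAt ℝ 1 (fderivWithin ℝ u S) S 0 :=
      ((hu.mono inter_subset_left) 0 h0S).fderivWithin_right huniq (by norm_num) h0S
    have h2 : DifferentiableWithinAt ℝ (fderivWithin ℝ u S) S 0 :=
      h1.differentiableWithinAt (by norm_num)
    have h3 : DifferentiableWithinAt ℝ (fun x => fderivWithin ℝ u S x s) S 0 :=
      h2.clm_apply (differentiableWithinAt_const _)
    have h4 : ∀ x ∈ S, g x = fderivWithin ℝ u S x s := fun x hx => by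
      rw [fderivWithin_inter (Metric.isOpen_ball.mem_nhds hx.2)]
    exact (differentiableWithinAt_inter hball).1 (h3.congr h4 (h4 0 h0S))
  have hline : ∀ t : ℝ, HasDerivAt (fun t : ℝ => t • s) s t := fun t => by
    simpa using (hasDerivAt_id t).smul_const s
  obtain ⟨t₁, ht₁, ht₁r, hS⟩ : ∃ t₁ > 0, t₁ ≤ r ∧ ∀ t ∈ Icc 0 t₁, t • s ∈ S := by
    refine ⟨min r (r / (2 * (‖s‖ + 1))), by positivity, min_le_left _ _, fun t ht => ?_⟩
    have h1 : t ≤ r := ht.2.trans (min_le_left _ _)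
    have h2 : t ≤ r / (2 * (‖s‖ + 1)) := ht.2.trans (min_le_right _ _)
    refine ⟨hs t ⟨ht.1, h1⟩, ?_⟩
    rw [mem_ball_zero_iff, norm_smul, Real.norm_eq_abs, abs_of_nonneg ht.1]
    rw [le_div_iff₀ (by positivity)] at h2
    nlinarith [norm_nonneg s, ht.1]
  have hmaps : MapsTo (fun t : ℝ => t • s) (Icc 0 t₁) (closure Ω) := fun t ht => (hS t ht).1
  have hφ : ∀ t ∈ Icc 0 t₁, HasDerivWithinAt (fun t : ℝ => u (t • s)) (g (t • s)) (Icc 0 t₁) t :=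
    fun t ht => (huS _ (hS t ht)).comp_hasDerivWithinAt t (hline t).hasDerivWithinAt hmaps
  have hg : HasDerivWithinAt (fun t : ℝ => g (t • s)) D (Icc 0 t₁) 0 := by
    have : HasFDerivWithinAt g (fderivWithin ℝ g (closure Ω) 0) (closure Ω) ((0 : ℝ) • s) := by
      simpa using hgd.hasFDerivWithinAt
    exact this.comp_hasDerivWithinAt 0 (hline 0).hasDerivWithinAt hmaps
  obtain ⟨t₂, ht₂, hlow⟩ : ∃ t₂ > 0, ∀ t ∈ Icc 0 t₁, t < t₂ → g 0 + (D - η) * t ≤ g (t • s) := by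
    have := hg.hasFDerivWithinAt.isLittleO.bound hη
    rw [eventually_nhdsWithin_iff, Metric.eventually_nhds_iff] at this
    obtain ⟨t₂, ht₂, hb⟩ := this
    refine ⟨t₂, ht₂, fun t ht htt => ?_⟩
    have h1 := hb (y := t) (by simpa [abs_of_nonneg ht.1] using htt) ht
    simp [abs_of_nonneg ht.1] at h1
    have := (abs_le.1 h1).1
    nlinarith
  have ht₃ : 0 < min t₁ (t₂ / 2) := by positivity
  have hsub : Icc 0 (min t₁ (t₂ / 2)) ⊆ Icc 0 t₁ := Icc_subset_Icc_right (min_le_left _ _)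
  refine ⟨min t₁ (t₂ / 2), ht₃, fun t ht => ?_⟩
  set ψ : ℝ → ℝ := fun t => u (t • s) - (t * g 0 + t ^ 2 / 2 * (D - η))
  have hψ : ∀ t ∈ Icc 0 (min t₁ (t₂ / 2)), HasDerivWithinAt ψ
      (g (t • s) - (g 0 + t * (D - η))) (Icc 0 (min t₁ (t₂ / 2))) t := fun t ht => by
    refine ((hφ t (hsub ht)).mono hsub).sub ?_
    have h1 := (hasDerivAt_id t).mul_const (g 0)
    have h2 := ((hasDerivAt_pow 2 t).div_const 2).mul_const (D - η)
    refine ((h1.add h2).congr_deriv ?_).hasDerivWithinAt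
    simp
  have hmono : MonotoneOn ψ (Icc 0 (min t₁ (t₂ / 2))) := by
    refine monotoneOn_of_deriv_nonneg (convex_Icc _ _)
      (fun τ hτ => (hψ τ hτ).continuousWithinAt)
      (fun τ hτ => ((hψ τ (interior_subset hτ)).mono interior_subset).differentiableWithinAt)
      fun τ hτ => ?_
    have hτ' := interior_subset hτ
    have hnh : Icc 0 (min t₁ (t₂ / 2)) ∈ 𝓝 τ := mem_interior_iff_mem_nhds.1 hτ
    rw [((hψ τ hτ').hasDerivAt hnh).deriv]
    have := hlow τ (hsub hτ') (by
      have := hτ'.2.trans (min_le_right _ _); linarith)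
    linarith
  have := hmono (left_mem_Icc.2 ht₃.le) ht ht.1
  simp only [ψ, zero_smul, hu0] at this
  simp at this
  linarith

end Cone

lemma mul_le_div_sqrt_add_div_sqrt {ξ ζ N R : ℝ} (hξ : 0 < ξ) (hζ : 0 < ζ)
    (hR : 0 ≤ R) (hRN : 3 * N ^ 4 * R ≤ 1) (h : R ^ 3 ≤ 3 * (ξ ^ 2 * ζ ^ 2)) :
    N * R ≤ ζ ^ 2 / ξ + ξ ^ 2 / ζ := by
  wlog hle : ζ ≤ ξ generalizing ξ ζ
  · rw [add_comm]
    exact this hζ hξ (by linarith) (le_of_not_ge hle)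
  have h1 : N * R ≤ ξ := by
    refine le_of_pow_le_pow_left₀ (n := 4) (by norm_num) hξ.le ?_
    have h2 : ξ ^ 2 * ζ ^ 2 ≤ ξ ^ 2 * ξ ^ 2 := by gcongr
    have h3 : R ^ 3 * (3 * N ^ 4 * R) ≤ R ^ 3 * 1 := by gcongr
    nlinarith
  have h2 : ξ ≤ ξ ^ 2 / ζ := by
    rw [le_div_iff₀ hζ]; nlinarith
  have h3 : 0 ≤ ζ ^ 2 / ξ := by positivity
  linarith

lemma neg_mul_le_sum_mul {n : ℕ} {β δ : Fin n → ℝ} {M D : ℝ} (hM : 0 ≤ M) (hβ : ∀ i, |β i| ≤ M)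
    (hδ : ∀ i, |δ i| ≤ D) : -(n * (M * D)) ≤ ∑ i, β i * δ i := by
  have h := Finset.sum_le_sum fun i (_ : i ∈ Finset.univ) =>
    show -(M * D) ≤ β i * δ i from neg_le_of_abs_le <| by
      rw [abs_mul]
      exact mul_le_mul (hβ i) (hδ i) (abs_nonneg _) hM
  simpa using h

section Barrier

variable {F : Type*} [NormedAddCommGroup F] [InnerProductSpace ℝ F]

/-- Subsolution near the edge `{l = 0} ∩ {m = 0}` of a right-angled corner. -/
noncomputable def cornerBarrier (l m : F →L[ℝ] ℝ) (K : ℝ) (X : F) : ℝ :=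
  l X * m X + (l X * √(l X)) * m X + l X * (m X * √(m X)) - K * (‖X‖ ^ 2 * √(‖X‖ ^ 2))

variable {l m : F →L[ℝ] ℝ} {K : ℝ}

lemma cornerBarrier_eq (X : F) :
    cornerBarrier l m K X = l X * m X * (1 + √(l X) + √(m X)) - K * ‖X‖ ^ 3 := by
  rw [cornerBarrier, Real.sqrt_sq (norm_nonneg _)]
  ring

lemma continuous_cornerBarrier : Continuous (cornerBarrier l m K) := by
  unfold cornerBarrier
  fun_prop

lemma cornerBarrier_lt_zero {X : F} {C G : ℝ} (hX : X ≠ 0) (hl : |l X| ≤ 1) (hm : |m X| ≤ 1)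
    (hlm : |l X| * |m X| ≤ C * G * ‖X‖ ^ 3) (hK : 3 * (C * G) < K) : cornerBarrier l m K X < 0 := by
  rw [cornerBarrier_eq]
  have h1 : √(l X) ≤ 1 := Real.sqrt_le_one.2 ((le_abs_self _).trans hl)
  have h2 : √(m X) ≤ 1 := Real.sqrt_le_one.2 ((le_abs_self _).trans hm)
  have h3 : l X * m X * (1 + √(l X) + √(m X)) ≤ |l X| * |m X| * 3 := by
    rw [← abs_mul]
    refine mul_le_mul (le_abs_self _) (by linarith) (by positivity) (abs_nonneg _)
  have h4 : 0 < ‖X‖ ^ 3 := pow_pos (norm_pos_iff.2 hX) 3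
  nlinarith

lemma hasSecondJet_cornerBarrier {X : F} (hX : X ≠ 0) (hl : 0 < l X) (hm : 0 < m X) (v : F) :
    HasSecondJet (fun t : ℝ => cornerBarrier l m K (X + t • v))
      (l v * m X + l X * m v + (3 / 2 * √(l X) * l v * m X + l X * √(l X) * m v)
        + (l v * (m X * √(m X)) + l X * (3 / 2 * √(m X) * m v))
        - K * (3 / 2 * ‖X‖ * (2 * inner ℝ X v)))
      (2 * (l v * m v)
        + (3 / 4 * l v ^ 2 / √(l X) * m X + 2 * (3 / 2 * √(l X) * l v * m v))
        + (2 * (l v * (3 / 2 * √(m X) * m v)) + l X * (3 / 4 * m v ^ 2 / √(m X)))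
        - K * (3 / 4 * (2 * inner ℝ X v) ^ 2 / ‖X‖ + 3 / 2 * ‖X‖ * (2 * ‖v‖ ^ 2))) := by
  have hX0 : 0 < ‖X‖ := norm_pos_iff.2 hX
  have jl := hasSecondJet_clm_line l X v
  have jm := hasSecondJet_clm_line m X v
  have jq := hasSecondJet_normSq_line X v
  have jls := jl.mul_sqrt (by simpa using hl)
  have jms := jm.mul_sqrt (by simpa using hm)
  have jqs := jq.mul_sqrt (by simpa using pow_pos hX0 2)
  convert (((jl.mul jm).add (jls.mul jm)).add (jl.mul jms)).sub (jqs.const_mul K) using 1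
  · rfl
  · simp only [zero_smul, add_zero, Real.sqrt_sq (norm_nonneg X)]
  · simp only [zero_smul, add_zero, Real.sqrt_sq (norm_nonneg X)]
    ring

lemma le_secondDeriv_cornerBarrier {X : F} (hX : X ≠ 0) (hK : 0 ≤ K) (v : F) :
    (2 + 3 * √(l X) + 3 * √(m X)) * (l v * m v) + 3 / 4 * (m X / √(l X)) * l v ^ 2
        + 3 / 4 * (l X / √(m X)) * m v ^ 2 - 6 * K * ‖X‖ * ‖v‖ ^ 2 ≤
      2 * (l v * m v)
        + (3 / 4 * l v ^ 2 / √(l X) * m X + 2 * (3 / 2 * √(l X) * l v * m v))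
        + (2 * (l v * (3 / 2 * √(m X) * m v)) + l X * (3 / 4 * m v ^ 2 / √(m X)))
        - K * (3 / 4 * (2 * inner ℝ X v) ^ 2 / ‖X‖ + 3 / 2 * ‖X‖ * (2 * ‖v‖ ^ 2)) := by
  have hX0 : 0 < ‖X‖ := norm_pos_iff.2 hX
  have h1 : 3 / 4 * (2 * inner ℝ X v) ^ 2 / ‖X‖ ≤ 3 * ‖X‖ * ‖v‖ ^ 2 := by
    rw [div_le_iff₀ hX0]
    have h2 : (inner ℝ X v) ^ 2 ≤ (‖X‖ * ‖v‖) ^ 2 := sq_le_sq'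
      (by linarith [neg_le_of_abs_le (abs_real_inner_le_norm X v)]) (real_inner_le_norm X v)
    nlinarith
  have h2 := mul_le_mul_of_nonneg_left h1 hK
  have h3 : 3 / 4 * l v ^ 2 / √(l X) * m X = 3 / 4 * (m X / √(l X)) * l v ^ 2 := by ring
  have h4 : l X * (3 / 4 * m v ^ 2 / √(m X)) = 3 / 4 * (l X / √(m X)) * m v ^ 2 := by ring
  rw [h3, h4]
  nlinarith

lemma abs_deriv_cornerBarrier_le {X v : F} {G : ℝ} (hK : 0 ≤ K) (hX1 : ‖X‖ ≤ 1) (hv : ‖v‖ = 1)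
    (hG : 0 ≤ G) (hlG : ∀ w, |l w| ≤ G * ‖w‖) (hmG : ∀ w, |m w| ≤ G * ‖w‖) (hl1 : l X ≤ 1)
    (hm1 : m X ≤ 1) :
    |l v * m X + l X * m v + (3 / 2 * √(l X) * l v * m X + l X * √(l X) * m v)
        + (l v * (m X * √(m X)) + l X * (3 / 2 * √(m X) * m v))
        - K * (3 / 2 * ‖X‖ * (2 * inner ℝ X v))| ≤ (7 * G ^ 2 + 3 * K) * ‖X‖ := by
  have h1 : √(l X) ≤ 1 := Real.sqrt_le_one.2 hl1
  have h2 : √(m X) ≤ 1 := Real.sqrt_le_one.2 hm1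
  have hprod : ∀ α y : ℝ, |α| ≤ G → |y| ≤ G * ‖X‖ → |α * y| ≤ G ^ 2 * ‖X‖ := fun α y ha hy => by
    rw [abs_mul]
    calc |α| * |y| ≤ G * (G * ‖X‖) := mul_le_mul ha hy (abs_nonneg _) hG
      _ = _ := by ring
  have ha := hprod (l v) (m X) (by simpa [hv] using hlG v) (hmG X)
  have hb := hprod (m v) (l X) (by simpa [hv] using hmG v) (hlG X)
  have hq : ∀ z τ : ℝ, |z| ≤ G ^ 2 * ‖X‖ → 0 ≤ τ → τ ≤ 1 → |τ * z| ≤ G ^ 2 * ‖X‖ :=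
    fun z τ hz h0 hτ => by
      rw [abs_mul, abs_of_nonneg h0]
      nlinarith [abs_nonneg z]
  have ha1 := hq _ _ ha (Real.sqrt_nonneg (l X)) h1
  have ha2 := hq _ _ ha (Real.sqrt_nonneg (m X)) h2
  have hb1 := hq _ _ hb (Real.sqrt_nonneg (l X)) h1
  have hb2 := hq _ _ hb (Real.sqrt_nonneg (m X)) h2
  have hin : |‖X‖ * inner ℝ X v| ≤ ‖X‖ := by
    rw [abs_mul, abs_of_nonneg (norm_nonneg X)]
    have := abs_real_inner_le_norm X v
    rw [hv] at this
    nlinarith [norm_nonneg X, abs_nonneg (inner ℝ X v)]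
  have hin' : |K * (‖X‖ * inner ℝ X v)| ≤ K * ‖X‖ := by
    rw [abs_mul, abs_of_nonneg hK]
    exact mul_le_mul_of_nonneg_left hin hK
  rw [abs_le] at *
  constructor <;> linarith

lemma exists_secondJet_cornerBarrier {X : F} {G : ℝ} (hX : X ≠ 0) (hl : 0 < l X) (hm : 0 < m X)
    (hK : 0 ≤ K) (hX1 : ‖X‖ ≤ 1) (hG : 0 ≤ G) (hlG : ∀ w, |l w| ≤ G * ‖w‖)
    (hmG : ∀ w, |m w| ≤ G * ‖w‖) (hl1 : l X ≤ 1) (hm1 : m X ≤ 1) :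
    ∃ D₁ D₂ : F → ℝ,
      (∀ v, HasSecondJet (fun t : ℝ => cornerBarrier l m K (X + t • v)) (D₁ v) (D₂ v)) ∧
      (∀ v, ‖v‖ = 1 → |D₁ v| ≤ (7 * G ^ 2 + 3 * K) * ‖X‖) ∧
      ∀ v, (2 + 3 * √(l X) + 3 * √(m X)) * (l v * m v) + 3 / 4 * (m X / √(l X)) * l v ^ 2
        + 3 / 4 * (l X / √(m X)) * m v ^ 2 - 6 * K * ‖X‖ * ‖v‖ ^ 2 ≤ D₂ v :=
  ⟨_, _, hasSecondJet_cornerBarrier hX hl hm,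
    fun _ hv => abs_deriv_cornerBarrier_le hK hX1 hv hG hlG hmG hl1 hm1,
    le_secondDeriv_cornerBarrier hX hK⟩

end Barrier

set_option maxHeartbeats 800000 in
lemma exists_cornerBarrier {n : ℕ} {Ω : Set (EuclideanSpace ℝ (Fin n))}
    (ho : (0 : EuclideanSpace ℝ (Fin n)) ∉ Ω)
    {a : EuclideanSpace ℝ (Fin n) → Fin n → Fin n → ℝ}
    {b : EuclideanSpace ℝ (Fin n) → Fin n → ℝ} {l m : EuclideanSpace ℝ (Fin n) →L[ℝ] ℝ}
    {M C₁ C₂ T lam r₀ : ℝ} (hM : 0 ≤ M) (hb : ∀ x ∈ Ω, ∀ i, |b x i| ≤ M) (hr₀ : 0 < r₀)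
    (hC₁ : 0 ≤ C₁) (hC₂ : 0 ≤ C₂) (hT : 0 ≤ T) (hlam : 0 < lam)
    (hΩ : ∀ x ∈ Ω, ‖x‖ < r₀ → -(C₁ * ‖x‖ ^ 2) ≤ l x ∧ -(C₁ * ‖x‖ ^ 2) ≤ m x)
    (hfr : ∀ x ∈ frontier Ω, ‖x‖ < r₀ → |l x| ≤ C₁ * ‖x‖ ^ 2 ∨ |m x| ≤ C₁ * ‖x‖ ^ 2)
    (hframe : ∀ x ∈ Ω, ‖x‖ < r₀ → ∀ (d : ℕ) (V : Fin d → EuclideanSpace ℝ (Fin n)),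
      (∀ i j, a x i j = ∑ k, V k i * V k j) →
        ∑ k, ‖V k‖ ^ 2 ≤ T ∧ lam ≤ ∑ k, l (V k) ^ 2 ∧ lam ≤ ∑ k, m (V k) ^ 2 ∧
          -(C₂ * ‖x‖) ≤ ∑ k, l (V k) * m (V k)) :
    ∃ r > 0, ∃ h : EuclideanSpace ℝ (Fin n) → ℝ, Continuous h ∧ h 0 ≤ 0 ∧
      (∀ x ∈ frontier Ω, x ≠ 0 → ‖x‖ ≤ r → h x < 0) ∧
      (∀ x ∈ Ω, ‖x‖ < r → 0 < h x → ∃ D₁ D₂ : EuclideanSpace ℝ (Fin n) → ℝ,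
        (∀ v, HasSecondJet (fun t : ℝ => h (x + t • v)) (D₁ v) (D₂ v)) ∧
        ∀ (d : ℕ) (V : Fin d → EuclideanSpace ℝ (Fin n)),
          (∀ i j, a x i j = ∑ k, V k i * V k j) →
          M * h x < ∑ k, D₂ (V k) + ∑ i, b x i * D₁ (EuclideanSpace.single i 1)) ∧
      ∀ s, 0 < l s → 0 < m s → ∃ c > 0, ∀ᶠ t in 𝓝[>] (0 : ℝ), c * t ^ 2 ≤ h (t • s) := by
  obtain ⟨G, hG⟩ : ∃ G : ℝ, G = ‖l‖ + ‖m‖ + 1 := ⟨_, rfl⟩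
  have hG1 : 1 ≤ G := by rw [hG]; linarith [norm_nonneg l, norm_nonneg m]
  have hG0 : 0 ≤ G := by linarith
  have hlG : ∀ w, |l w| ≤ G * ‖w‖ := fun w => (l.le_opNorm w).trans <| by
    gcongr; rw [hG]; linarith [norm_nonneg m]
  have hmG : ∀ w, |m w| ≤ G * ‖w‖ := fun w => (m.le_opNorm w).trans <| by
    gcongr; rw [hG]; linarith [norm_nonneg l]
  obtain ⟨K, hK⟩ : ∃ K : ℝ, K = 3 * (C₁ * G) + 1 := ⟨_, rfl⟩
  have hK0 : 0 < K := by rw [hK]; positivity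
  obtain ⟨P, hP⟩ : ∃ P : ℝ,
      P = 8 * C₂ + 6 * K * T + n * M * (7 * G ^ 2 + 3 * K) + 3 * M * G ^ 2 + 1 := ⟨_, rfl⟩
  have hP0 : 0 < P := by rw [hP]; positivity
  obtain ⟨N, hN⟩ : ∃ N : ℝ, N = 4 / 3 * P / lam := ⟨_, rfl⟩
  have hN0 : 0 < N := by rw [hN]; positivity
  have hNP : 3 / 4 * lam * N = P := by rw [hN]; field_simp
  obtain ⟨r, hr⟩ : ∃ r : ℝ, r = min (min (r₀ / 2) (1 / G)) (1 / (3 * N ^ 4)) := ⟨_, rfl⟩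
  have hr0 : 0 < r := by rw [hr]; positivity
  have hrr₀ : r < r₀ := by
    have : r ≤ r₀ / 2 := hr.trans_le ((min_le_left _ _).trans (min_le_left _ _))
    linarith
  have hrG : ∀ x : EuclideanSpace ℝ (Fin n), ‖x‖ ≤ r → G * ‖x‖ ≤ 1 := fun x hx => by
    have : ‖x‖ ≤ 1 / G := hx.trans <| hr.trans_le ((min_le_left _ _).trans (min_le_right _ _))
    rw [le_div_iff₀ (by linarith)] at this
    linarith
  have hrN : ∀ x : EuclideanSpace ℝ (Fin n), ‖x‖ ≤ r → 3 * N ^ 4 * ‖x‖ ≤ 1 := fun x hx => by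
    have : ‖x‖ ≤ 1 / (3 * N ^ 4) := hx.trans (hr.trans_le (min_le_right _ _))
    rw [le_div_iff₀ (by positivity)] at this
    linarith
  have hneg : ∀ x, x ≠ 0 → ‖x‖ ≤ r → (|l x| ≤ C₁ * ‖x‖ ^ 2 ∨ |m x| ≤ C₁ * ‖x‖ ^ 2) →
      cornerBarrier l m K x < 0 := fun x hx hxr hor => by
    refine cornerBarrier_lt_zero (C := C₁) (G := G) hx ((hlG x).trans (hrG x hxr))
      ((hmG x).trans (hrG x hxr)) ?_ (by rw [hK]; linarith)
    rcases hor with h | h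
    · calc |l x| * |m x| ≤ C₁ * ‖x‖ ^ 2 * (G * ‖x‖) :=
          mul_le_mul h (hmG x) (abs_nonneg _) (by positivity)
        _ = _ := by ring
    · calc |l x| * |m x| ≤ (G * ‖x‖) * (C₁ * ‖x‖ ^ 2) :=
          mul_le_mul (hlG x) h (abs_nonneg _) (by positivity)
        _ = _ := by ring
  refine ⟨r, hr0, cornerBarrier l m K, continuous_cornerBarrier, by simp [cornerBarrier],
    fun x hx hx0 hxr => hneg x hx0 hxr (hfr x hx (hxr.trans_lt hrr₀)), ?_, ?_⟩
  · intro x hx hxr hpos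
    have hx0 : x ≠ 0 := fun h => ho (h ▸ hx)
    have hR : 0 < ‖x‖ := norm_pos_iff.2 hx0
    have hxr₀ := hxr.trans hrr₀
    have hGx := hrG x hxr.le
    have hx1 : ‖x‖ ≤ 1 := by nlinarith
    have hl : 0 < l x := by
      by_contra! hle
      refine hpos.not_gt (hneg x hx0 hxr.le (Or.inl ?_))
      rw [abs_of_nonpos hle]; linarith [(hΩ x hx hxr₀).1]
    have hm : 0 < m x := by
      by_contra! hle
      refine hpos.not_gt (hneg x hx0 hxr.le (Or.inr ?_))
      rw [abs_of_nonpos hle]; linarith [(hΩ x hx hxr₀).2]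
    have hlx : l x ≤ G * ‖x‖ := (le_abs_self _).trans (hlG x)
    have hmx : m x ≤ G * ‖x‖ := (le_abs_self _).trans (hmG x)
    have hξ : 0 < √(l x) := Real.sqrt_pos.2 hl
    have hζ : 0 < √(m x) := Real.sqrt_pos.2 hm
    have hξ1 : √(l x) ≤ 1 := Real.sqrt_le_one.2 (hlx.trans hGx)
    have hζ1 : √(m x) ≤ 1 := Real.sqrt_le_one.2 (hmx.trans hGx)
    have hh3 : l x * m x * (1 + √(l x) + √(m x)) ≤ l x * m x * 3 := by
      gcongr; linarith
    have hheq := cornerBarrier_eq (l := l) (m := m) (K := K) x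
    have hK1 : 1 ≤ K := by rw [hK]; nlinarith [mul_nonneg hC₁ hG0]
    have hR3 : 0 < ‖x‖ ^ 3 := by positivity
    have hsing : N * ‖x‖ ≤ m x / √(l x) + l x / √(m x) := by
      have := mul_le_div_sqrt_add_div_sqrt hξ hζ hR.le (hrN x hxr.le) (by
        rw [Real.sq_sqrt hl.le, Real.sq_sqrt hm.le]
        nlinarith)
      rwa [Real.sq_sqrt hl.le, Real.sq_sqrt hm.le] at this
    obtain ⟨D₁, D₂, hjet, hD₁, hD₂⟩ := exists_secondJet_cornerBarrier hx0 hl hm hK0.le hx1 hG0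
      hlG hmG (hlx.trans hGx) (hmx.trans hGx)
    refine ⟨D₁, D₂, hjet, fun d V hV => ?_⟩
    obtain ⟨hVT, hVl, hVm, hVlm⟩ := hframe x hx hxr₀ d V hV
    have hsum := Finset.sum_le_sum fun k (_ : k ∈ Finset.univ) =>
      hD₂ (V k)
    rw [Finset.sum_sub_distrib, Finset.sum_add_distrib, Finset.sum_add_distrib, ← Finset.mul_sum,
      ← Finset.mul_sum, ← Finset.mul_sum, ← Finset.mul_sum] at hsum
    have hbsum := neg_mul_le_sum_mul hM (hb x hx) fun i => hD₁ (EuclideanSpace.single i 1) (by simp)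
    refine lt_of_lt_of_le ?_ (add_le_add hsum hbsum)
    have e1 : -(8 * C₂ * ‖x‖) ≤
        (2 + 3 * √(l x) + 3 * √(m x)) * ∑ k, l (V k) * m (V k) := by
      have h1 : (2 + 3 * √(l x) + 3 * √(m x)) * (-(C₂ * ‖x‖)) ≤
          (2 + 3 * √(l x) + 3 * √(m x)) * ∑ k, l (V k) * m (V k) := by gcongr
      have h2 : (2 + 3 * √(l x) + 3 * √(m x)) * (C₂ * ‖x‖) ≤ 8 * (C₂ * ‖x‖) := by
        gcongr; linarith
      linarith
    have e2 : 3 / 4 * (m x / √(l x)) * lam ≤ 3 / 4 * (m x / √(l x)) * ∑ k, l (V k) ^ 2 := by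
      gcongr
    have e3 : 3 / 4 * (l x / √(m x)) * lam ≤ 3 / 4 * (l x / √(m x)) * ∑ k, m (V k) ^ 2 := by
      gcongr
    have e4 : 6 * K * ‖x‖ * ∑ k, ‖V k‖ ^ 2 ≤ 6 * K * ‖x‖ * T := by gcongr
    have e5 : 3 / 4 * lam * (N * ‖x‖) ≤
        3 / 4 * lam * (m x / √(l x) + l x / √(m x)) := by gcongr
    have e6 : M * cornerBarrier l m K x ≤ M * (3 * G ^ 2 * ‖x‖) := by
      gcongr
      have : l x * m x ≤ (G * ‖x‖) * (G * ‖x‖) := by gcongr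
      have : G ^ 2 * ‖x‖ * ‖x‖ ≤ G ^ 2 * ‖x‖ * 1 := by gcongr
      have : 0 ≤ K * ‖x‖ ^ 3 := by positivity
      linarith
    have e7 : 3 / 4 * lam * (N * ‖x‖) = P * ‖x‖ := by rw [← hNP]; ring
    rw [hP] at e7
    linarith
  · intro s hls hms
    refine ⟨l s * m s / 2, by positivity, ?_⟩
    have hlim : Tendsto (fun t : ℝ => l s * m s - K * ‖s‖ ^ 3 * t) (𝓝[>] 0) (𝓝 (l s * m s)) := by
      have : Tendsto (fun t : ℝ => l s * m s - K * ‖s‖ ^ 3 * t) (𝓝 0)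
          (𝓝 (l s * m s - K * ‖s‖ ^ 3 * 0)) := Continuous.tendsto (by fun_prop) 0
      simpa using this.mono_left nhdsWithin_le_nhds
    have hlt : l s * m s / 2 < l s * m s := half_lt_self (mul_pos hls hms)
    filter_upwards [hlim.eventually (lt_mem_nhds hlt), self_mem_nhdsWithin] with t ht ht0
    have ht0' : 0 < t := ht0
    rw [cornerBarrier_eq, map_smul, map_smul, smul_eq_mul, smul_eq_mul, norm_smul,
      Real.norm_eq_abs, abs_of_pos ht0']
    have h1 : t * l s * (t * m s) * 1 ≤ t * l s * (t * m s) * (1 + √(t * l s) + √(t * m s)) := by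
      gcongr
      linarith [Real.sqrt_nonneg (t * l s), Real.sqrt_nonneg (t * m s)]
    have h2 := mul_le_mul_of_nonneg_left ht.le (sq_nonneg t)
    nlinarith

section LogBarrier

variable {F : Type*} [NormedAddCommGroup F] [InnerProductSpace ℝ F]

/-- Subsolution near the edge `{l = 0} ∩ {m = 0}` of an acute corner. -/
noncomputable def logBarrier (l m : F →L[ℝ] ℝ) (μ : ℝ) (X : F) : ℝ :=
  (l X * m X - μ * ‖X‖ ^ 2) * (-1 * Real.log (‖X‖ ^ 2))

variable {l m : F →L[ℝ] ℝ} {μ G : ℝ}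

lemma abs_mul_sub_le (hμ : 0 ≤ μ) (hlG : ∀ w, |l w| ≤ G * ‖w‖) (hmG : ∀ w, |m w| ≤ G * ‖w‖)
    (X : F) : |l X * m X - μ * ‖X‖ ^ 2| ≤ (G ^ 2 + μ) * ‖X‖ ^ 2 := by
  have h1 : |l X * m X| ≤ (G * ‖X‖) * (G * ‖X‖) := by
    rw [abs_mul]
    exact mul_le_mul (hlG X) (hmG X) (abs_nonneg _) ((abs_nonneg _).trans (hlG X))
  have h2 : 0 ≤ μ * ‖X‖ ^ 2 := by positivity
  rw [abs_le] at *
  constructor <;> nlinarith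

lemma continuous_logBarrier (hμ : 0 ≤ μ) (hlG : ∀ w, |l w| ≤ G * ‖w‖)
    (hmG : ∀ w, |m w| ≤ G * ‖w‖) : Continuous (logBarrier l m μ) := by
  refine continuous_iff_continuousAt.2 fun X => ?_
  rcases eq_or_ne X 0 with rfl | hX
  · have h0 : logBarrier l m μ 0 = 0 := by simp [logBarrier]
    rw [ContinuousAt, h0]
    have hlim : Tendsto (fun Y : F => (G ^ 2 + μ) * |‖Y‖ ^ 2 * Real.log (‖Y‖ ^ 2)|) (𝓝 0) (𝓝 0) := by
      have hc : Continuous fun Y : F => (G ^ 2 + μ) * |‖Y‖ ^ 2 * Real.log (‖Y‖ ^ 2)| :=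
        continuous_const.mul (Real.continuous_mul_log.comp (by fun_prop : Continuous
          fun Y : F => ‖Y‖ ^ 2)).abs
      simpa using hc.tendsto 0
    refine squeeze_zero_norm (fun Y => ?_) hlim
    rw [logBarrier, Real.norm_eq_abs, abs_mul, abs_mul, abs_mul, abs_neg, abs_one, one_mul,
      abs_of_nonneg (by positivity : (0 : ℝ) ≤ ‖Y‖ ^ 2), ← mul_assoc]
    exact mul_le_mul_of_nonneg_right (abs_mul_sub_le hμ hlG hmG Y) (abs_nonneg _)
  · have hX2 : ‖X‖ ^ 2 ≠ 0 := by positivity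
    unfold logBarrier
    exact ContinuousAt.mul (by fun_prop)
      (continuousAt_const.mul (ContinuousAt.log (by fun_prop) hX2))

lemma exists_secondJet_logBarrier {X : F} (hX : X ≠ 0) (hμ : 0 ≤ μ) (hμG : μ ≤ G ^ 2)
    (hlG : ∀ w, |l w| ≤ G * ‖w‖) (hmG : ∀ w, |m w| ≤ G * ‖w‖)
    (hpos : 0 ≤ l X * m X - μ * ‖X‖ ^ 2) (hΛ : 1 ≤ -1 * Real.log (‖X‖ ^ 2)) :
    ∃ D₁ D₂ : F → ℝ,
      (∀ v, HasSecondJet (fun t : ℝ => logBarrier l m μ (X + t • v)) (D₁ v) (D₂ v)) ∧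
      (∀ v, ‖v‖ = 1 → |D₁ v| ≤ 8 * G ^ 2 * ‖X‖ * (-1 * Real.log (‖X‖ ^ 2))) ∧
      ∀ v, (2 * (l v * m v) - 2 * μ * ‖v‖ ^ 2) * (-1 * Real.log (‖X‖ ^ 2)) - 20 * G ^ 2 * ‖v‖ ^ 2
        ≤ D₂ v := by
  have hR : 0 < ‖X‖ := norm_pos_iff.2 hX
  have hjet : ∀ v, HasSecondJet (fun t : ℝ => logBarrier l m μ (X + t • v))
      ((l v * m X + l X * m v - μ * (2 * inner ℝ X v)) * (-1 * Real.log (‖X‖ ^ 2))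
        + (l X * m X - μ * ‖X‖ ^ 2) * (-1 * (2 * inner ℝ X v / ‖X‖ ^ 2)))
      ((2 * (l v * m v) - 2 * μ * ‖v‖ ^ 2) * (-1 * Real.log (‖X‖ ^ 2))
        + 2 * ((l v * m X + l X * m v - μ * (2 * inner ℝ X v))
          * (-1 * (2 * inner ℝ X v / ‖X‖ ^ 2)))
        + (l X * m X - μ * ‖X‖ ^ 2) * (-1 * (2 * ‖v‖ ^ 2 / ‖X‖ ^ 2
          - (2 * inner ℝ X v) ^ 2 / (‖X‖ ^ 2) ^ 2))) := fun v => by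
    have jl := hasSecondJet_clm_line l X v
    have jm := hasSecondJet_clm_line m X v
    have jq := hasSecondJet_normSq_line X v
    have jlog := (jq.log (by simpa using pow_pos hR 2)).const_mul (-1)
    convert ((jl.mul jm).sub (jq.const_mul μ)).mul jlog using 1
    · rfl
    · simp only [zero_smul, add_zero]
    · simp only [zero_smul, add_zero]
      ring
  have hcs : ∀ v, |2 * inner ℝ X v| ≤ 2 * (‖X‖ * ‖v‖) := fun v => by
    rw [abs_mul, abs_two]
    gcongr
    exact abs_real_inner_le_norm X v
  have hq : ∀ v, |2 * inner ℝ X v / ‖X‖ ^ 2| ≤ 2 * ‖v‖ / ‖X‖ := fun v => by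
    rw [abs_div, abs_of_nonneg (by positivity : (0 : ℝ) ≤ ‖X‖ ^ 2), div_le_div_iff₀ (by positivity)
      hR]
    nlinarith [hcs v]
  have hm₁ : ∀ v, |l v * m X + l X * m v - μ * (2 * inner ℝ X v)| ≤ 4 * G ^ 2 * (‖X‖ * ‖v‖) :=
    fun v => by
      have h1 : |l v * m X| ≤ (G * ‖v‖) * (G * ‖X‖) := by
        rw [abs_mul]
        exact mul_le_mul (hlG v) (hmG X) (abs_nonneg _) ((abs_nonneg _).trans (hlG v))
      have h2 : |l X * m v| ≤ (G * ‖X‖) * (G * ‖v‖) := by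
        rw [abs_mul]
        exact mul_le_mul (hlG X) (hmG v) (abs_nonneg _) ((abs_nonneg _).trans (hlG X))
      have h3 : |μ * (2 * inner ℝ X v)| ≤ G ^ 2 * (2 * (‖X‖ * ‖v‖)) := by
        rw [abs_mul, abs_of_nonneg hμ]
        exact mul_le_mul hμG (hcs v) (abs_nonneg _) (by positivity)
      rw [abs_le] at *
      constructor <;> linarith
  have hm₀ : l X * m X - μ * ‖X‖ ^ 2 ≤ 2 * G ^ 2 * ‖X‖ ^ 2 :=
    (le_abs_self _).trans ((abs_mul_sub_le hμ hlG hmG X).trans (by gcongr; linarith))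
  generalize hΛdef : -1 * Real.log (‖X‖ ^ 2) = Λ at *
  refine ⟨_, _, hjet, fun v hv => ?_, fun v => ?_⟩
  · have h1 := hm₁ v
    have h2 := hq v
    rw [hv, mul_one] at h1
    rw [hv] at h2
    refine (abs_add_le _ _).trans ?_
    rw [abs_mul, abs_mul, abs_mul (-1), abs_of_nonneg hpos, abs_neg, abs_one, one_mul,
      abs_of_nonneg (by linarith : 0 ≤ Λ)]
    have h3 : (l X * m X - μ * ‖X‖ ^ 2) * |2 * inner ℝ X v / ‖X‖ ^ 2| ≤
        (2 * G ^ 2 * ‖X‖ ^ 2) * (2 * 1 / ‖X‖) :=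
      mul_le_mul hm₀ h2 (abs_nonneg _) (by positivity)
    have h4 : (2 * G ^ 2 * ‖X‖ ^ 2) * (2 * 1 / ‖X‖) = 4 * G ^ 2 * ‖X‖ * 1 := by
      field_simp
      ring
    have h5 : 4 * G ^ 2 * ‖X‖ * 1 ≤ 4 * G ^ 2 * ‖X‖ * Λ := by gcongr
    have h6 := mul_le_mul_of_nonneg_right h1 (by linarith : 0 ≤ Λ)
    linarith
  · have h1 : |(l v * m X + l X * m v - μ * (2 * inner ℝ X v)) * (2 * inner ℝ X v / ‖X‖ ^ 2)| ≤
        (4 * G ^ 2 * (‖X‖ * ‖v‖)) * (2 * ‖v‖ / ‖X‖) := by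
      rw [abs_mul]
      exact mul_le_mul (hm₁ v) (hq v) (abs_nonneg _) (by positivity)
    have h2 : (4 * G ^ 2 * (‖X‖ * ‖v‖)) * (2 * ‖v‖ / ‖X‖) = 8 * G ^ 2 * ‖v‖ ^ 2 := by
      field_simp
      ring
    have h3 : (l X * m X - μ * ‖X‖ ^ 2) * (2 * ‖v‖ ^ 2 / ‖X‖ ^ 2) ≤
        2 * G ^ 2 * ‖X‖ ^ 2 * (2 * ‖v‖ ^ 2 / ‖X‖ ^ 2) := by gcongr
    have h4 : 2 * G ^ 2 * ‖X‖ ^ 2 * (2 * ‖v‖ ^ 2 / ‖X‖ ^ 2) = 4 * G ^ 2 * ‖v‖ ^ 2 := by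
      field_simp
      ring
    have h5 : 0 ≤ (l X * m X - μ * ‖X‖ ^ 2) * ((2 * inner ℝ X v) ^ 2 / (‖X‖ ^ 2) ^ 2) := by
      positivity
    have h6 := le_of_abs_le h1
    linarith

end LogBarrier

set_option maxHeartbeats 800000 in
lemma exists_logBarrier {n : ℕ} {Ω : Set (EuclideanSpace ℝ (Fin n))}
    (ho : (0 : EuclideanSpace ℝ (Fin n)) ∉ Ω)
    {a : EuclideanSpace ℝ (Fin n) → Fin n → Fin n → ℝ}
    {b : EuclideanSpace ℝ (Fin n) → Fin n → ℝ} {l m : EuclideanSpace ℝ (Fin n) →L[ℝ] ℝ}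
    {M C₁ T κ r₀ : ℝ} (hM : 0 ≤ M) (hb : ∀ x ∈ Ω, ∀ i, |b x i| ≤ M) (hr₀ : 0 < r₀)
    (hC₁ : 0 ≤ C₁) (hT : 0 ≤ T) (hκ : 0 < κ)
    (hfr : ∀ x ∈ frontier Ω, ‖x‖ < r₀ → |l x| ≤ C₁ * ‖x‖ ^ 2 ∨ |m x| ≤ C₁ * ‖x‖ ^ 2)
    (hframe : ∀ x ∈ Ω, ‖x‖ < r₀ → ∀ (d : ℕ) (V : Fin d → EuclideanSpace ℝ (Fin n)),
      (∀ i j, a x i j = ∑ k, V k i * V k j) →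
        ∑ k, ‖V k‖ ^ 2 ≤ T ∧ κ ≤ ∑ k, l (V k) * m (V k))
    {s : EuclideanSpace ℝ (Fin n)} (hls : 0 < l s) (hms : 0 < m s) :
    ∃ r > 0, ∃ h : EuclideanSpace ℝ (Fin n) → ℝ, Continuous h ∧ h 0 ≤ 0 ∧
      (∀ x ∈ frontier Ω, x ≠ 0 → ‖x‖ ≤ r → h x < 0) ∧
      (∀ x ∈ Ω, ‖x‖ < r → 0 < h x → ∃ D₁ D₂ : EuclideanSpace ℝ (Fin n) → ℝ,
        (∀ v, HasSecondJet (fun t : ℝ => h (x + t • v)) (D₁ v) (D₂ v)) ∧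
        ∀ (d : ℕ) (V : Fin d → EuclideanSpace ℝ (Fin n)),
          (∀ i j, a x i j = ∑ k, V k i * V k j) →
          M * h x < ∑ k, D₂ (V k) + ∑ i, b x i * D₁ (EuclideanSpace.single i 1)) ∧
      ∀ N, ∀ᶠ t in 𝓝[>] (0 : ℝ), N * t ^ 2 ≤ h (t • s) := by
  obtain ⟨G, hG⟩ : ∃ G : ℝ, G = ‖l‖ + ‖m‖ + 1 := ⟨_, rfl⟩
  have hG1 : 1 ≤ G := by rw [hG]; linarith [norm_nonneg l, norm_nonneg m]
  have hG0 : 0 ≤ G := by linarith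
  have hlG : ∀ w, |l w| ≤ G * ‖w‖ := fun w => (l.le_opNorm w).trans <| by
    gcongr; rw [hG]; linarith [norm_nonneg m]
  have hmG : ∀ w, |m w| ≤ G * ‖w‖ := fun w => (m.le_opNorm w).trans <| by
    gcongr; rw [hG]; linarith [norm_nonneg l]
  obtain ⟨μ, hμ0, hμ1, hμT, hμs⟩ : ∃ μ > 0, μ ≤ 1 ∧ 2 * μ * T ≤ κ ∧ μ * ‖s‖ ^ 2 < l s * m s := by
    have hls' : 0 < l s * m s := mul_pos hls hms
    refine ⟨min 1 (min (κ / (2 * (T + 1))) (l s * m s / (‖s‖ ^ 2 + 1))), by positivity,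
      min_le_left _ _, ?_, ?_⟩
    · have h1 := (min_le_right 1 (min (κ / (2 * (T + 1))) (l s * m s / (‖s‖ ^ 2 + 1)))).trans
        (min_le_left _ _)
      rw [le_div_iff₀ (by positivity)] at h1
      have h2 : 0 < min 1 (min (κ / (2 * (T + 1))) (l s * m s / (‖s‖ ^ 2 + 1))) := by positivity
      linarith
    · have h1 := (min_le_right 1 (min (κ / (2 * (T + 1))) (l s * m s / (‖s‖ ^ 2 + 1)))).trans
        (min_le_right _ _)
      rw [le_div_iff₀ (by positivity)] at h1
      have h2 : 0 < min 1 (min (κ / (2 * (T + 1))) (l s * m s / (‖s‖ ^ 2 + 1))) := by positivity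
      linarith
  have hμG : μ ≤ G ^ 2 := by nlinarith
  obtain ⟨L, hL⟩ : ∃ L : ℝ, L = 40 * G ^ 2 * T / κ + 1 := ⟨_, rfl⟩
  have hL1 : 1 ≤ L := by rw [hL]; linarith [show 0 ≤ 40 * G ^ 2 * T / κ by positivity]
  have hLκ : κ * L = 40 * G ^ 2 * T + κ := by rw [hL]; field_simp
  obtain ⟨P, hP⟩ : ∃ P : ℝ, P = 4 * ((8 * n * M + 2 * M) * G ^ 2 + 1) := ⟨_, rfl⟩
  have hP0 : 0 < P := by rw [hP]; positivity
  obtain ⟨r, hr0, hr₀', hrexp, hrP, hrμ⟩ : ∃ r > 0, r < r₀ ∧ r ≤ Real.exp (-L) ∧ r * P ≤ κ ∧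
      r * (C₁ * G + 1) ≤ μ := by
    refine ⟨min (min (r₀ / 2) (Real.exp (-L))) (min (κ / P) (μ / (C₁ * G + 1))), by positivity,
      ?_, (min_le_left _ _).trans (min_le_right _ _), ?_, ?_⟩
    · refine ((min_le_left _ _).trans (min_le_left _ _)).trans_lt (by linarith)
    · rw [← le_div_iff₀ hP0]
      exact (min_le_right _ _).trans (min_le_left _ _)
    · rw [← le_div_iff₀ (by positivity)]
      exact (min_le_right _ _).trans (min_le_right _ _)
  have hr1 : r ≤ 1 := hrexp.trans (Real.exp_le_one_iff.2 (by linarith))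
  have hlog : ∀ x : EuclideanSpace ℝ (Fin n), x ≠ 0 → ‖x‖ ≤ r → L ≤ -1 * Real.log (‖x‖ ^ 2) :=
    fun x hx hxr => by
      have hR : 0 < ‖x‖ := norm_pos_iff.2 hx
      have h1 : ‖x‖ ^ 2 ≤ Real.exp (-L) := by nlinarith
      have h2 := (Real.log_le_iff_le_exp (by positivity)).2 h1
      linarith
  refine ⟨r, hr0, logBarrier l m μ, continuous_logBarrier hμ0.le hlG hmG, by simp [logBarrier],
    fun x hx hx0 hxr => ?_, ?_, ?_⟩
  · have hR : 0 < ‖x‖ := norm_pos_iff.2 hx0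
    refine mul_neg_of_neg_of_pos ?_ (by linarith [hlog x hx0 hxr])
    have h1 : l x * m x ≤ C₁ * G * ‖x‖ ^ 3 := by
      refine (le_abs_self _).trans ?_
      rw [abs_mul]
      rcases hfr x hx (hxr.trans_lt hr₀') with h | h
      · calc |l x| * |m x| ≤ C₁ * ‖x‖ ^ 2 * (G * ‖x‖) :=
            mul_le_mul h (hmG x) (abs_nonneg _) (by positivity)
          _ = _ := by ring
      · calc |l x| * |m x| ≤ (G * ‖x‖) * (C₁ * ‖x‖ ^ 2) :=
            mul_le_mul (hlG x) h (abs_nonneg _) (by positivity)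
          _ = _ := by ring
    have h2 : ‖x‖ * (C₁ * G + 1) ≤ μ := le_trans (by gcongr) hrμ
    have h3 := mul_le_mul_of_nonneg_left h2 (sq_nonneg ‖x‖)
    have h4 : 0 < ‖x‖ ^ 3 := by positivity
    linarith
  · intro x hx hxr hpos
    have hx0 : x ≠ 0 := fun h => ho (h ▸ hx)
    have hR : 0 < ‖x‖ := norm_pos_iff.2 hx0
    have hΛ := hlog x hx0 hxr.le
    have hm₀ : 0 < l x * m x - μ * ‖x‖ ^ 2 :=
      pos_of_mul_pos_left hpos (by linarith)
    obtain ⟨D₁, D₂, hjet, hD₁, hD₂⟩ := exists_secondJet_logBarrier hx0 hμ0.le hμG hlG hmG hm₀.le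
      (hL1.trans hΛ)
    have hh : logBarrier l m μ x ≤ (G ^ 2 + μ) * ‖x‖ ^ 2 * (-1 * Real.log (‖x‖ ^ 2)) :=
      mul_le_mul_of_nonneg_right ((le_abs_self _).trans (abs_mul_sub_le hμ0.le hlG hmG x))
        (by linarith)
    refine ⟨D₁, D₂, hjet, fun d V hV => ?_⟩
    generalize -1 * Real.log (‖x‖ ^ 2) = Λ at *
    have hΛ0 : 0 < Λ := by linarith
    obtain ⟨hVT, hVlm⟩ := hframe x hx (hxr.trans hr₀') d V hV
    have hsum := Finset.sum_le_sum fun k (_ : k ∈ Finset.univ) => hD₂ (V k)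
    rw [Finset.sum_sub_distrib, ← Finset.sum_mul, Finset.sum_sub_distrib, ← Finset.mul_sum,
      ← Finset.mul_sum, ← Finset.mul_sum] at hsum
    have hbsum := neg_mul_le_sum_mul hM (hb x hx) fun i => hD₁ (EuclideanSpace.single i 1) (by simp)
    refine lt_of_lt_of_le ?_ (add_le_add hsum hbsum)
    have e1 : (2 * κ - 2 * μ * T) * Λ ≤
        (2 * ∑ k, l (V k) * m (V k) - 2 * μ * ∑ k, ‖V k‖ ^ 2) * Λ := by gcongr
    have e2 : κ * Λ ≤ (2 * κ - 2 * μ * T) * Λ := by gcongr; linarith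
    have e3 : 20 * G ^ 2 * ∑ k, ‖V k‖ ^ 2 ≤ 20 * G ^ 2 * T := by gcongr
    have e4 : M * logBarrier l m μ x ≤ M * (2 * G ^ 2 * ‖x‖ * Λ) := by
      gcongr
      refine hh.trans ?_
      have : (G ^ 2 + μ) * ‖x‖ ^ 2 ≤ 2 * G ^ 2 * ‖x‖ := by
        have h1 : ‖x‖ ^ 2 ≤ ‖x‖ := by nlinarith
        have h2 : (G ^ 2 + μ) * ‖x‖ ^ 2 ≤ (G ^ 2 + G ^ 2) * ‖x‖ := by gcongr
        linarith
      gcongr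
    have e5 : ‖x‖ * P * Λ ≤ κ * Λ := by
      gcongr
      exact le_trans (by gcongr) hrP
    have e6 : κ * L ≤ κ * Λ := by gcongr
    have e7 : 0 < ‖x‖ * Λ := by positivity
    have e8 : 0 < κ * Λ := by positivity
    rw [hP] at e5
    linarith
  · intro N
    have hs0 : s ≠ 0 := fun h => by simp [h] at hls
    have hδ : 0 < l s * m s - μ * ‖s‖ ^ 2 := by linarith
    have hlim : Tendsto (fun t : ℝ => (l s * m s - μ * ‖s‖ ^ 2) * (-1 * Real.log ((t * ‖s‖) ^ 2)))
        (𝓝[>] 0) atTop := by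
      refine Tendsto.const_mul_atTop hδ ?_
      refine Tendsto.const_mul_atBot_of_neg (by norm_num) ?_
      refine Real.tendsto_log_nhdsGT_zero.comp ?_
      refine tendsto_nhdsWithin_iff.2 ⟨?_, ?_⟩
      · have : Tendsto (fun t : ℝ => (t * ‖s‖) ^ 2) (𝓝 0) (𝓝 ((0 * ‖s‖) ^ 2)) :=
          Continuous.tendsto (by fun_prop) 0
        simpa using this.mono_left nhdsWithin_le_nhds
      · filter_upwards [self_mem_nhdsWithin] with t ht
        have ht' : 0 < t := ht
        have : 0 < ‖s‖ := norm_pos_iff.2 hs0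
        exact pow_pos (mul_pos ht' this) 2
    filter_upwards [hlim.eventually_ge_atTop N, self_mem_nhdsWithin] with t ht ht0
    have ht0' : 0 < t := ht0
    rw [logBarrier, map_smul, map_smul, smul_eq_mul, smul_eq_mul, norm_smul, Real.norm_eq_abs,
      abs_of_pos ht0']
    have := mul_le_mul_of_nonneg_right ht (sq_nonneg t)
    linarith

section LocalBounds

variable {F : Type*} [NormedAddCommGroup F] [NormedSpace ℝ F]

lemma exists_eventually_norm_sub_le {E : Type*} [NormedAddCommGroup E] [NormedSpace ℝ E]
    {f : F → E} (hf : DifferentiableAt ℝ f 0) :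
    ∃ C ≥ 0, ∀ᶠ x in 𝓝 (0 : F), ‖f x - f 0‖ ≤ C * ‖x‖ := by
  obtain ⟨C, hC, h⟩ := hf.isBigO_sub.exists_nonneg
  exact ⟨C, hC, by simpa using h.bound⟩

lemma exists_eventually_abs_sub_fderiv_le {ρ : F → ℝ} (hρ : ContDiff ℝ 2 ρ) (h0 : ρ 0 = 0) :
    ∃ C ≥ 0, ∀ᶠ x in 𝓝 (0 : F), |ρ x - fderiv ℝ ρ 0 x| ≤ C * ‖x‖ ^ 2 := by
  have hd : DifferentiableAt ℝ (fderiv ℝ ρ) 0 :=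
    (hρ.fderiv_right (m := 1) (by norm_num)).contDiffAt.differentiableAt (by norm_num)
  obtain ⟨C, hC, h⟩ := exists_eventually_norm_sub_le hd
  refine ⟨C, hC, ?_⟩
  obtain ⟨r, hr, hball⟩ := Metric.eventually_nhds_iff_ball.1 h
  filter_upwards [Metric.ball_mem_nhds (0 : F) hr] with x hx
  have hx' : ‖x‖ < r := by simpa using hx
  have := (convex_closedBall (0 : F) ‖x‖).norm_image_sub_le_of_norm_fderiv_le' (f := ρ)
    (φ := fderiv ℝ ρ 0) (C := C * ‖x‖) (𝕜 := ℝ)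
    (fun y _ => hρ.contDiffAt.differentiableAt (by norm_num))
    (fun y hy => by
      have hy' : ‖y‖ ≤ ‖x‖ := by simpa using hy
      exact (hball y (by simpa using hy'.trans_lt hx')).trans (by gcongr))
    (by simp : (0 : F) ∈ _) (by simp : x ∈ Metric.closedBall (0 : F) ‖x‖)
  rw [h0, sub_zero, sub_zero, Real.norm_eq_abs] at this
  linarith

lemma secondDeriv_le_of_eventually_le {Ω : Set F} {s : F} {r : ℝ} (hr : 0 < r)
    (huniq : UniqueDiffOn ℝ (closure Ω ∩ Metric.ball 0 r)) {u : F → ℝ}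
    (hu : ContDiffOn ℝ 2 u (closure Ω)) (hu0 : u 0 = 0)
    (hs : ∀ t ∈ Icc 0 r, t • s ∈ closure Ω) {K : ℝ}
    (hK : ∀ᶠ t in 𝓝[>] (0 : ℝ), u (t • s) ≤ -(K * t ^ 2))
    (hg : 0 ≤ fderivWithin ℝ u (closure Ω) 0 s) :
    fderivWithin ℝ (fun x => fderivWithin ℝ u (closure Ω) x s) (closure Ω) 0 s ≤ -(2 * K) := by
  refine le_of_forall_pos_le_add fun η hη => ?_
  obtain ⟨t₀, ht₀, h⟩ := exists_taylor_lower_bound hr huniq hu hu0 hs hη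
  obtain ⟨t, hKt, ht⟩ := (hK.and (Ioo_mem_nhdsGT ht₀)).exists
  have h1 := h t ⟨ht.1.le, ht.2.le⟩
  have h2 : 0 ≤ t * fderivWithin ℝ u (closure Ω) 0 s := mul_nonneg ht.1.le hg
  have h3 : 0 < t ^ 2 := pow_pos ht.1 2
  have h4 : t ^ 2 * (fderivWithin ℝ (fun x => fderivWithin ℝ u (closure Ω) x s) (closure Ω) 0 s
      - η + 2 * K) ≤ 0 := by linarith
  have h5 := nonpos_of_mul_nonpos_right h4 h3
  linarith

end LocalBounds

section Frames

variable {n d : ℕ} {A : Fin n → Fin n → ℝ} {V : Fin d → EuclideanSpace ℝ (Fin n)}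

lemma sum_clm_mul_clm_eq (hA : ∀ i j, A i j = ∑ k, V k i * V k j)
    (l m : EuclideanSpace ℝ (Fin n) →L[ℝ] ℝ) :
    ∑ k, l (V k) * m (V k) = ∑ i, ∑ j, A i j * l (EuclideanSpace.single i 1)
      * m (EuclideanSpace.single j 1) := by
  calc ∑ k, l (V k) * m (V k)
      = ∑ k, ∑ i, ∑ j, V k i * V k j * l (EuclideanSpace.single i 1)
          * m (EuclideanSpace.single j 1) := by
        refine Finset.sum_congr rfl fun k _ => ?_
        rw [clm_eq_sum_single l, clm_eq_sum_single m, Finset.sum_mul_sum]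
        exact Finset.sum_congr rfl fun i _ => Finset.sum_congr rfl fun j _ => by ring
    _ = _ := by
        rw [Finset.sum_comm]
        refine Finset.sum_congr rfl fun i _ => ?_
        rw [Finset.sum_comm]
        exact Finset.sum_congr rfl fun j _ => by rw [hA, Finset.sum_mul, Finset.sum_mul]

lemma sum_norm_sq_eq (hA : ∀ i j, A i j = ∑ k, V k i * V k j) :
    ∑ k, ‖V k‖ ^ 2 = ∑ i, A i i := by
  simp_rw [hA, EuclideanSpace.real_norm_sq_eq]
  rw [Finset.sum_comm]
  simp_rw [sq]

lemma exists_pos_le_sum_clm_sq {l : EuclideanSpace ℝ (Fin n) →L[ℝ] ℝ} (hl : l ≠ 0) {lam : ℝ}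
    (hlam : 0 < lam) : ∃ κ > 0, ∀ (A : Fin n → Fin n → ℝ),
      (∀ ξ : EuclideanSpace ℝ (Fin n), lam * ‖ξ‖ ^ 2 ≤ ∑ i, ∑ j, A i j * ξ i * ξ j) →
      ∀ (d : ℕ) (V : Fin d → EuclideanSpace ℝ (Fin n)), (∀ i j, A i j = ∑ k, V k i * V k j) →
        κ ≤ ∑ k, l (V k) ^ 2 := by
  set ξ : EuclideanSpace ℝ (Fin n) := WithLp.toLp 2 fun i => l (EuclideanSpace.single i 1)
  have hξ : ξ ≠ 0 := fun h => hl <| ContinuousLinearMap.ext fun v => by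
    have h' : ∀ i, l (EuclideanSpace.single i 1) = 0 := fun i => congrArg (fun w => w i) h
    rw [clm_eq_sum_single]
    simp [h']
  have : 0 < ‖ξ‖ := norm_pos_iff.2 hξ
  refine ⟨lam * ‖ξ‖ ^ 2, by positivity, fun A hA d V hV => (hA ξ).trans_eq ?_⟩
  simp_rw [sq, sum_clm_mul_clm_eq hV]
  rfl

end Frames

end

open Filter Topology in
/-- **Serrin's corner lemma.**  Let `Ω ⊂ ℝ^n` be a domain with the origin `o = 0` on its
boundary, such that near `o` the boundary consists of two transversally intersecting `C²`
hypersurfaces `{ρ = 0}` and `{σ = 0}` with `ρ, σ < 0` in `Ω`.  Let `L` be a uniformly elliptic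
operator with symmetric continuous second-order coefficients `a`, bounded `b, c`, and let
`u ∈ C²(closure Ω)` satisfy `u < 0` in `Ω`, `u(o) = 0` and `Lu ≥ 0` in `Ω`.  Assume
`Q(o) := Σ a_{ij} ρ_{x_i} σ_{x_j} ≥ 0` at `o`, and if `Q(o) = 0` assume moreover that
`a ∈ C²` near `o` and every first-order derivative of `Q` at `o` tangent to
`{ρ = 0} ∩ {σ = 0}` vanishes.  Then for any direction `s` at `o` entering `Ω` transversally to
each hypersurface: `∂u/∂s < 0` at `o` if `Q(o) > 0`, and `∂u/∂s < 0` or `∂²u/∂s² < 0` at `o`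
if `Q(o) = 0`. -/
theorem statement17 (n : ℕ)
    (Ω : Set (EuclideanSpace ℝ (Fin n)))
    (hΩo : IsOpen Ω) (hΩc : IsConnected Ω)
    (ho : (0 : EuclideanSpace ℝ (Fin n)) ∈ frontier Ω)
    (ρ σ : EuclideanSpace ℝ (Fin n) → ℝ)
    (hρ : ContDiff ℝ 2 ρ) (hσ : ContDiff ℝ 2 σ)
    (hρ0 : ρ 0 = 0) (hσ0 : σ 0 = 0)
    (htrans : LinearIndependent ℝ ![gradient ρ 0, gradient σ 0])
    (hneg : ∀ x ∈ Ω, ρ x < 0 ∧ σ x < 0)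
    (hbdry : ∃ U ∈ nhds (0 : EuclideanSpace ℝ (Fin n)),
        frontier Ω ∩ U ⊆ {x | ρ x = 0} ∪ {x | σ x = 0})
    (a : EuclideanSpace ℝ (Fin n) → Fin n → Fin n → ℝ)
    (b : EuclideanSpace ℝ (Fin n) → Fin n → ℝ)
    (c : EuclideanSpace ℝ (Fin n) → ℝ)
    (hasym : ∀ x i j, a x i j = a x j i)
    (hacont : ∀ i j, ContinuousOn (fun x => a x i j) (closure Ω))
    (hbbd : ∃ M : ℝ, ∀ x ∈ Ω, ∀ i, |b x i| ≤ M)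
    (hcbd : ∃ M : ℝ, ∀ x ∈ Ω, |c x| ≤ M)
    (hell : ∃ lam > (0 : ℝ), ∀ x ∈ Ω, ∀ ξ : EuclideanSpace ℝ (Fin n),
        lam * ‖ξ‖ ^ 2 ≤ ∑ i, ∑ j, a x i j * ξ i * ξ j)
    (u : EuclideanSpace ℝ (Fin n) → ℝ)
    (hu2 : ContDiffOn ℝ 2 u (closure Ω))
    (huneg : ∀ x ∈ Ω, u x < 0) (hu0 : u 0 = 0)
    (hLu : ∀ x ∈ Ω,
        0 ≤ (∑ i, ∑ j, a x i j * pd (pd u i) j x) + (∑ i, b x i * pd u i x) + c x * u x)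
    (hQ0 : 0 ≤ ∑ i, ∑ j, a 0 i j * pd ρ i 0 * pd σ j 0)
    (hdeg : (∑ i, ∑ j, a 0 i j * pd ρ i 0 * pd σ j 0) = 0 →
        (∃ U ∈ nhds (0 : EuclideanSpace ℝ (Fin n)),
            ∀ i j, ContDiffOn ℝ 2 (fun x => a x i j) U) ∧
        (∀ v : EuclideanSpace ℝ (Fin n),
            fderiv ℝ ρ 0 v = 0 → fderiv ℝ σ 0 v = 0 →
            fderiv ℝ (fun x => ∑ i, ∑ j, a x i j * pd ρ i x * pd σ j x) 0 v = 0)) :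
    ∀ s : EuclideanSpace ℝ (Fin n),
      fderiv ℝ ρ 0 s < 0 → fderiv ℝ σ 0 s < 0 →
      ((0 < ∑ i, ∑ j, a 0 i j * pd ρ i 0 * pd σ j 0) →
          fderivWithin ℝ u (closure Ω) 0 s < 0) ∧
      ((∑ i, ∑ j, a 0 i j * pd ρ i 0 * pd σ j 0) = 0 →
          fderivWithin ℝ u (closure Ω) 0 s < 0 ∨
          fderivWithin ℝ (fun x => fderivWithin ℝ u (closure Ω) x s) (closure Ω) 0 s < 0) :=
 by
  intro s hs hs'
  have ho' : (0 : EuclideanSpace ℝ (Fin n)) ∉ Ω := by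
    rw [frontier, hΩo.interior_eq] at ho
    exact ho.2
  have hocl : (0 : EuclideanSpace ℝ (Fin n)) ∈ closure Ω := frontier_subset_closure ho
  obtain ⟨r₁, hr₁, hcone⟩ := exists_cone_subset hΩo (hρ.of_le (by norm_num))
    (hσ.of_le (by norm_num)) hneg hbdry hs hs'
  have hsΩ := exists_smul_mem hr₁ hocl hcone
  have hscl : ∀ t ∈ Icc 0 r₁, t • s ∈ closure Ω := fun t ht => by
    rcases ht.1.eq_or_lt with rfl | h
    · simpa using hocl
    · exact subset_closure (hsΩ t ⟨h, ht.2⟩)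
  have huniq := uniqueDiffOn_closure_inter_ball hr₁ hcone
  obtain ⟨l, hl⟩ : ∃ l : EuclideanSpace ℝ (Fin n) →L[ℝ] ℝ, l = -fderiv ℝ ρ 0 := ⟨_, rfl⟩
  obtain ⟨m, hm⟩ : ∃ m : EuclideanSpace ℝ (Fin n) →L[ℝ] ℝ, m = -fderiv ℝ σ 0 := ⟨_, rfl⟩
  have hls : 0 < l s := by rw [hl]; simpa using hs
  have hms : 0 < m s := by rw [hm]; simpa using hs'
  have hl0 : l ≠ 0 := fun h => by simp [h] at hls
  have hm0 : m ≠ 0 := fun h => by simp [h] at hms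
  obtain ⟨lam, hlam, hell⟩ := hell
  obtain ⟨κl, hκl, hVl⟩ := exists_pos_le_sum_clm_sq hl0 hlam
  obtain ⟨κm, hκm, hVm⟩ := exists_pos_le_sum_clm_sq hm0 hlam
  obtain ⟨M, hM, hb, hc⟩ : ∃ M ≥ 0, (∀ x ∈ Ω, ∀ i, |b x i| ≤ M) ∧ ∀ x ∈ Ω, |c x| ≤ M := by
    obtain ⟨M₁, h₁⟩ := hbbd
    obtain ⟨M₂, h₂⟩ := hcbd
    exact ⟨max 0 (max M₁ M₂), le_max_left _ _,
      fun x hx i => (h₁ x hx i).trans ((le_max_left _ _).trans (le_max_right _ _)),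
      fun x hx => (h₂ x hx).trans ((le_max_right _ _).trans (le_max_right _ _))⟩
  obtain ⟨C, hC, hnear⟩ : ∃ C ≥ 0, ∀ᶠ x in 𝓝 (0 : EuclideanSpace ℝ (Fin n)),
      |ρ x + l x| ≤ C * ‖x‖ ^ 2 ∧ |σ x + m x| ≤ C * ‖x‖ ^ 2 := by
    obtain ⟨C₁, hC₁, h₁⟩ := exists_eventually_abs_sub_fderiv_le hρ hρ0
    obtain ⟨C₂, hC₂, h₂⟩ := exists_eventually_abs_sub_fderiv_le hσ hσ0
    refine ⟨max C₁ C₂, le_max_of_le_left hC₁, ?_⟩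
    filter_upwards [h₁, h₂] with x hx₁ hx₂
    rw [hl, hm, _root_.neg_apply, _root_.neg_apply, ← sub_eq_add_neg,
      ← sub_eq_add_neg]
    exact ⟨hx₁.trans (by gcongr; exact le_max_left _ _),
      hx₂.trans (by gcongr; exact le_max_right _ _)⟩
  obtain ⟨U, hU, hUf⟩ := hbdry
  obtain ⟨T, hT, htr⟩ : ∃ T ≥ 0, ∀ᶠ x in 𝓝 (0 : EuclideanSpace ℝ (Fin n)), x ∈ closure Ω →
      ∑ i, a x i i ≤ T := by
    have hcont : ContinuousWithinAt (fun x => ∑ i, a x i i) (closure Ω) 0 :=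
      (continuousOn_finsetSum _ fun i _ => hacont i i) 0 hocl
    refine ⟨|∑ i, a 0 i i| + 1, by positivity, eventually_nhdsWithin_iff.1 ?_⟩
    filter_upwards [hcont.eventually (gt_mem_nhds (lt_add_one _))] with x hx
    linarith [le_abs_self (∑ i, a 0 i i)]
  obtain ⟨Q, hQ⟩ : ∃ Q : EuclideanSpace ℝ (Fin n) → ℝ,
      Q = fun x => ∑ i, ∑ j, a x i j * pd ρ i 0 * pd σ j 0 := ⟨_, rfl⟩
  have hVlm : ∀ x (d : ℕ) (V : Fin d → EuclideanSpace ℝ (Fin n)),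
      (∀ i j, a x i j = ∑ k, V k i * V k j) → ∑ k, l (V k) * m (V k) = Q x := fun x d V hV => by
    rw [sum_clm_mul_clm_eq hV, hl, hm, hQ]
    simp [pd]
  have hpsd : ∀ x ∈ Ω, ∀ ξ : EuclideanSpace ℝ (Fin n), 0 ≤ ∑ i, ∑ j, a x i j * ξ i * ξ j :=
    fun x hx ξ => le_trans (by positivity) (hell x hx ξ)
  have hsmall : ∀ r > 0, ∀ᶠ t in 𝓝[>] (0 : ℝ), t • s ∈ Ω ∧ ‖t • s‖ ≤ r := fun r hr => by
    have h1 : Tendsto (fun t : ℝ => ‖t • s‖) (𝓝[>] 0) (𝓝 0) := by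
      have : Tendsto (fun t : ℝ => ‖t • s‖) (𝓝 0) (𝓝 ‖(0 : ℝ) • s‖) :=
        Continuous.tendsto (by fun_prop) 0
      simpa using this.mono_left nhdsWithin_le_nhds
    filter_upwards [h1.eventually (gt_mem_nhds hr), Ioo_mem_nhdsGT hr₁] with t h2 h3
    exact ⟨hsΩ t ⟨h3.1, h3.2.le⟩, h2.le⟩
  constructor
  · intro hpos
    have hcont : ContinuousWithinAt Q (closure Ω) 0 := by
      rw [hQ]
      exact (continuousOn_finsetSum _ fun i _ => continuousOn_finsetSum _ fun j _ =>
        ((hacont i j).mul continuousOn_const).mul continuousOn_const) 0 hocl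
    have hQpos : 0 < Q 0 := by rw [hQ]; exact hpos
    have hQev := eventually_nhdsWithin_iff.1
      (hcont.eventually (lt_mem_nhds (half_lt_self hQpos)))
    obtain ⟨r₀, hr₀, hball⟩ := Metric.eventually_nhds_iff_ball.1
      (hnear.and (htr.and (hQev.and (Filter.eventually_mem_set.2 hU))))
    obtain ⟨r, hr, h, hcont, h0, hfr, hsub, hgrow⟩ := exists_logBarrier ho' (a := a) hM hb hr₀ hC hT
      (half_pos hQpos)
      (fun x hx hxr => by
        obtain ⟨⟨h1, h2⟩, -, -, h3⟩ := hball x (by simpa using hxr)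
        rcases hUf ⟨hx, h3⟩ with h4 | h4
        · left; rwa [show ρ x = 0 from h4, zero_add] at h1
        · right; rwa [show σ x = 0 from h4, zero_add] at h2)
      (fun x hx hxr d V hV => by
        obtain ⟨-, h1, h2, -⟩ := hball x (by simpa using hxr)
        rw [sum_norm_sq_eq hV, hVlm x d V hV]
        exact ⟨h1 (subset_closure hx), (h2 (subset_closure hx)).le⟩) hls hms
    obtain ⟨ε, hε, hle⟩ := exists_pos_le_neg_mul_of_subsolution hΩo hasym hpsd hc hu2 huneg hLu hr
      hcont h0 hfr hsub
    by_contra! hg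
    have hD : ∀ N : ℝ, fderivWithin ℝ (fun x => fderivWithin ℝ u (closure Ω) x s) (closure Ω) 0 s
        ≤ -(2 * (ε * N)) := fun N => by
      refine secondDeriv_le_of_eventually_le hr₁ huniq hu2 hu0 hscl ?_ hg
      filter_upwards [hgrow N, hsmall r hr] with t h1 h2
      have := hle _ h2.1 h2.2
      have := mul_le_mul_of_nonneg_left h1 hε.le
      linarith
    generalize fderivWithin ℝ (fun x => fderivWithin ℝ u (closure Ω) x s) (closure Ω) 0 s = D at hD
    have h1 := hD ((|D| + 1) / ε)
    rw [mul_div_cancel₀ _ hε.ne'] at h1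
    linarith [neg_abs_le D, abs_nonneg D]
  · intro hzero
    obtain ⟨⟨W, hW, haW⟩, -⟩ := hdeg hzero
    have hQ0' : Q 0 = 0 := by rw [hQ]; exact hzero
    have hQd : DifferentiableAt ℝ Q 0 := by
      have hij : ∀ i j, DifferentiableAt ℝ (fun x => a x i j) 0 := fun i j =>
        ((haW i j).contDiffAt hW).differentiableAt (by norm_num)
      rw [hQ]
      exact DifferentiableAt.fun_sum fun i _ => DifferentiableAt.fun_sum fun j _ =>
        ((hij i j).mul_const _).mul_const _
    obtain ⟨C₂, hC₂, hQev⟩ := exists_eventually_norm_sub_le hQd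
    obtain ⟨r₀, hr₀, hball⟩ := Metric.eventually_nhds_iff_ball.1
      (hnear.and (htr.and (hQev.and (Filter.eventually_mem_set.2 hU))))
    obtain ⟨r, hr, h, hcont, h0, hfr, hsub, hgrow⟩ := exists_cornerBarrier ho' (a := a) hM hb hr₀ hC
      hC₂ hT (lt_min hκl hκm)
      (fun x hx hxr => by
        obtain ⟨⟨h1, h2⟩, -⟩ := hball x (by simpa using hxr)
        have h3 := hneg x hx
        exact ⟨by linarith [neg_le_of_abs_le h1, h3.1], by linarith [neg_le_of_abs_le h2, h3.2]⟩)
      (fun x hx hxr => by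
        obtain ⟨⟨h1, h2⟩, -, -, h3⟩ := hball x (by simpa using hxr)
        rcases hUf ⟨hx, h3⟩ with h4 | h4
        · left; rwa [show ρ x = 0 from h4, zero_add] at h1
        · right; rwa [show σ x = 0 from h4, zero_add] at h2)
      (fun x hx hxr d V hV => by
        obtain ⟨-, h1, h2, -⟩ := hball x (by simpa using hxr)
        rw [sum_norm_sq_eq hV, hVlm x d V hV]
        rw [hQ0', sub_zero, Real.norm_eq_abs] at h2
        exact ⟨h1 (subset_closure hx), (min_le_left _ _).trans (hVl _ (hell x hx) d V hV),
          (min_le_right _ _).trans (hVm _ (hell x hx) d V hV), neg_le_of_abs_le h2⟩)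
    obtain ⟨ε, hε, hle⟩ := exists_pos_le_neg_mul_of_subsolution hΩo hasym hpsd hc hu2 huneg hLu hr
      hcont h0 hfr hsub
    obtain ⟨N, hN, hgrow⟩ := hgrow s hls hms
    refine or_iff_not_imp_left.2 fun hg => ?_
    have hD := secondDeriv_le_of_eventually_le hr₁ huniq hu2 hu0 hscl (K := ε * N) (by
      filter_upwards [hgrow, hsmall r hr] with t h1 h2
      have := hle _ h2.1 h2.2
      have := mul_le_mul_of_nonneg_left h1 hε.le
      linarith) (not_lt.1 hg)
    linarith [mul_pos hε hN]
end

section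
/- (Sufficiency direction of the Berestycki–Varadhan maximum principle.) Let Ω ⊂ ℝⁿ be a bounded domain and let L be the uniformly elliptic operator Lu = Σ_{i,j} a_{ij}(x) ∂²u/∂x_i∂x_j + Σ_i b_i(x) ∂u/∂x_i + c(x)u with a_{ij} = a_{ji} continuous on the closure of Ω, b_i, c ∈ L^∞(Ω), and Σ a_{ij} ξ_i ξ_j ≥ λ|ξ|² for some λ > 0. Suppose the first eigenvalue of L in Ω is positive in the following sense: there exist μ > 0 and a function ψ ∈ C²(Ω) ∩ C(closure of Ω) with ψ > 0 in Ω such that (L + μ)ψ ≤ 0 in Ω. Then the maximum principle holds in Ω: every w ∈ C²(Ω) ∩ C(closure of Ω) with Lw ≥ 0 in Ω and w ≤ 0 on ∂Ω satisfies w ≤ 0 in Ω. -/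
open MeasureTheory Set

theorem ContDiffAt.differentiableAt_fderiv_two {E : Type*} [NormedAddCommGroup E]
    [NormedSpace ℝ E] {u : E → ℝ} {x : E} (hu : ContDiffAt ℝ 2 u x) :
    DifferentiableAt ℝ (fderiv ℝ u) x :=
  (hu.fderiv_right (m := 1) (by norm_num)).differentiableAt one_ne_zero

/-- Second derivative test (necessary condition): the second derivative is negative semidefinite
at an interior maximum. -/
theorem IsLocalMax.fderiv_fderiv_apply_self_nonpos {E : Type*} [NormedAddCommGroup E]
    [NormedSpace ℝ E] {u : E → ℝ} {x : E} (hmax : IsLocalMax u x) (hu : ContDiffAt ℝ 2 u x)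
    (v : E) : fderiv ℝ (fderiv ℝ u) x v v ≤ 0 := by
  set ℓ : ℝ → E := fun t => x + t • v with hℓ
  have hℓ0 : ℓ 0 = x := by simp [hℓ]
  have hℓd : ∀ t, HasDerivAt ℓ v t := fun t => by
    have h := ((hasDerivAt_id t).smul_const v).const_add x
    rwa [one_smul] at h
  have hℓc : Filter.Tendsto ℓ (nhds 0) (nhds x) := by
    simpa [hℓ0] using (hℓd 0).continuousAt.tendsto
  have hd : deriv (u ∘ ℓ) =ᶠ[nhds 0] fun t => fderiv ℝ u (ℓ t) v := by
    have h := hu.eventually (by simp)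
    filter_upwards [hℓc.eventually h] with t ht
    exact ((ht.differentiableAt two_ne_zero).hasFDerivAt.comp_hasDerivAt t (hℓd t)).deriv
  have hdd : deriv (deriv (u ∘ ℓ)) 0 = fderiv ℝ (fderiv ℝ u) x v v := by
    rw [hd.deriv_eq]
    have h : HasFDerivAt (fderiv ℝ u) (fderiv ℝ (fderiv ℝ u) x) (ℓ 0) := by
      rw [hℓ0]
      exact hu.differentiableAt_fderiv_two.hasFDerivAt
    have h' := (h.comp_hasDerivAt 0 (hℓd 0)).clm_apply (hasDerivAt_const 0 v)
    simpa using h'.deriv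
  have hlmax : IsLocalMax (u ∘ ℓ) 0 := by
    have := hℓc.eventually hmax
    simpa [IsLocalMax, IsMaxFilter, hℓ0] using this
  by_contra! hpos
  rw [← hdd] at hpos
  have hcont : ContinuousAt (u ∘ ℓ) 0 := by
    refine ContinuousAt.comp ?_ (hℓd 0).continuousAt
    rw [hℓ0]
    exact hu.continuousAt
  have hlmin := isLocalMin_of_deriv_deriv_pos hpos hlmax.deriv_eq_zero hcont
  have hconst : (u ∘ ℓ) =ᶠ[nhds 0] fun _ => (u ∘ ℓ) 0 := by
    filter_upwards [hlmax, hlmin] with t h1 h2 using le_antisymm h1 h2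
  have : deriv (deriv (u ∘ ℓ)) 0 = 0 := by
    rw [hconst.deriv.deriv_eq]
    simp
  exact hpos.ne' this

section

variable {m : ℕ} {u : EuclideanSpace ℝ (Fin m) → ℝ} {x : EuclideanSpace ℝ (Fin m)}

theorem hasFDerivAt_pd (hu : ContDiffAt ℝ 2 u x) (i : Fin m) :
    HasFDerivAt (pd u i) ((fderiv ℝ (fderiv ℝ u) x).flip (EuclideanSpace.single i 1)) x := by
  have h := hu.differentiableAt_fderiv_two.hasFDerivAt.clm_apply
    (hasFDerivAt_const (EuclideanSpace.single i (1 : ℝ)) x)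
  have h' : HasFDerivAt (pd u i) _ x := h
  refine h'.congr_fderiv ?_
  ext v
  simp

theorem pd_pd (hu : ContDiffAt ℝ 2 u x) (i j : Fin m) :
    pd (pd u i) j x =
      fderiv ℝ (fderiv ℝ u) x (EuclideanSpace.single j 1) (EuclideanSpace.single i 1) := by
  rw [pd, (hasFDerivAt_pd hu i).fderiv, ContinuousLinearMap.flip_apply]

theorem pd_sub_const_mul {v : EuclideanSpace ℝ (Fin m) → ℝ} (hu : DifferentiableAt ℝ u x)
    (hv : DifferentiableAt ℝ v x) (t : ℝ) (i : Fin m) :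
    pd (fun y => u y - t * v y) i x = pd u i x - t * pd v i x := by
  rw [pd, fderiv_fun_sub hu (hv.const_mul t), fderiv_const_mul hv]
  simp [pd]

theorem pd_pd_sub_const_mul {v : EuclideanSpace ℝ (Fin m) → ℝ} (hu : ContDiffAt ℝ 2 u x)
    (hv : ContDiffAt ℝ 2 v x) (t : ℝ) (i j : Fin m) :
    pd (pd (fun y => u y - t * v y) i) j x = pd (pd u i) j x - t * pd (pd v i) j x := by
  have h : pd (fun y => u y - t * v y) i =ᶠ[nhds x] fun y => pd u i y - t * pd v i y := by
    filter_upwards [hu.eventually (by simp), hv.eventually (by simp)] with y h1 h2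
    exact pd_sub_const_mul (h1.differentiableAt two_ne_zero) (h2.differentiableAt two_ne_zero) t i
  rw [pd, h.fderiv_eq]
  exact pd_sub_const_mul (hasFDerivAt_pd hu i).differentiableAt
    (hasFDerivAt_pd hv i).differentiableAt t j

/-- The Hessian matrix of a function on Euclidean space. -/
noncomputable def hessianMatrix (u : EuclideanSpace ℝ (Fin m) → ℝ)
    (x : EuclideanSpace ℝ (Fin m)) : Matrix (Fin m) (Fin m) ℝ :=
  Matrix.of fun i j => pd (pd u i) j x

theorem posSemidef_neg_hessianMatrix (hu : ContDiffAt ℝ 2 u x)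
    (h : ∀ v, fderiv ℝ (fderiv ℝ u) x v v ≤ 0) : (-hessianMatrix u x).PosSemidef := by
  refine .of_dotProduct_mulVec_nonneg ?_ fun v => ?_
  · ext i j
    have := (hu.isSymmSndFDerivAt (by simp)) (EuclideanSpace.single i 1)
      (EuclideanSpace.single j 1)
    simp [hessianMatrix, pd_pd hu, this]
  · have hv : (WithLp.toLp 2 v : EuclideanSpace ℝ (Fin m))
        = ∑ i, v i • EuclideanSpace.single i (1 : ℝ) := by
      ext k
      simp [Finset.sum_apply, Pi.single_apply]
    have := h (WithLp.toLp 2 v)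
    rw [hv] at this
    simp only [map_sum, map_smul, sum_apply, smul_apply,
      smul_eq_mul] at this
    rw [Matrix.neg_mulVec, dotProduct_neg, neg_nonneg]
    refine le_trans (le_of_eq ?_) this
    simp only [dotProduct, Matrix.mulVec, hessianMatrix, Matrix.of_apply, pd_pd hu, star_trivial,
      Finset.mul_sum]
    refine Finset.sum_congr rfl fun i _ => Finset.sum_congr rfl fun j _ => ?_
    ring

/-- The gradient of a function on Euclidean space, as a vector field. -/
noncomputable def gradVec (u : EuclideanSpace ℝ (Fin m) → ℝ)
    (x : EuclideanSpace ℝ (Fin m)) : EuclideanSpace ℝ (Fin m) :=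
  WithLp.toLp 2 fun i => pd u i x

theorem differentiableAt_gradVec (hu : ContDiffAt ℝ 2 u x) :
    DifferentiableAt ℝ (gradVec u) x :=
  differentiableAt_euclidean.2 fun i => (hasFDerivAt_pd hu i).differentiableAt

theorem det_fderiv_gradVec (hu : ContDiffAt ℝ 2 u x) :
    (fderiv ℝ (gradVec u) x).det = (hessianMatrix u x).det := by
  have h : ∀ i v, fderiv ℝ (gradVec u) x v i = fderiv ℝ (pd u i) x v := fun i v => by
    have h1 : HasFDerivAt (pd u i) _ x :=
      (EuclideanSpace.proj (𝕜 := ℝ) i).hasFDerivAt.comp x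
        (differentiableAt_gradVec hu).hasFDerivAt
    rw [h1.fderiv]
    rfl
  rw [ContinuousLinearMap.det,
    ← LinearMap.det_toMatrix (EuclideanSpace.basisFun (Fin m) ℝ).toBasis]
  congr 1
  ext i j
  simp [LinearMap.toMatrix_apply, hessianMatrix, h, pd]

end

namespace Matrix.PosSemidef

variable {m : ℕ} {P : Matrix (Fin m) (Fin m) ℝ}

theorem det_le_trace_pow (hP : P.PosSemidef) : P.det ≤ P.trace ^ m := by
  rw [hP.1.det_eq_prod_eigenvalues, hP.1.trace_eq_sum_eigenvalues]
  simp only [RCLike.ofReal_real_eq_id, id_eq]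
  calc ∏ i, hP.1.eigenvalues i ≤ ∏ _i : Fin m, ∑ j, hP.1.eigenvalues j :=
        Finset.prod_le_prod (fun i _ => hP.eigenvalues_nonneg i) fun i _ =>
          Finset.single_le_sum (fun j _ => hP.eigenvalues_nonneg j) (Finset.mem_univ i)
    _ = _ := by simp

theorem mul_trace_le_sum_mul (hP : P.PosSemidef) {A : Fin m → Fin m → ℝ} {lam : ℝ}
    (hA : ∀ ξ : EuclideanSpace ℝ (Fin m), lam * ‖ξ‖ ^ 2 ≤ ∑ i, ∑ j, A i j * ξ i * ξ j) :
    lam * P.trace ≤ ∑ i, ∑ j, A i j * P i j := by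
  obtain ⟨C, rfl⟩ : ∃ C : Matrix (Fin m) (Fin m) ℝ, P = Cᴴ * C := by
    open scoped MatrixOrder Matrix.Norms.L2Operator in
    exact CStarAlgebra.nonneg_iff_eq_star_mul_self.mp hP.nonneg
  have h := Finset.sum_le_sum fun k (_ : k ∈ Finset.univ) => hA (WithLp.toLp 2 (C k))
  calc lam * (Cᴴ * C).trace
      = ∑ k, lam * ‖(WithLp.toLp 2 (C k) : EuclideanSpace ℝ (Fin m))‖ ^ 2 := by
        simp only [EuclideanSpace.norm_sq_eq, trace, diag, mul_apply, conjTranspose_apply,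
          star_trivial, Real.norm_eq_abs, sq_abs, ← Finset.mul_sum]
        rw [Finset.sum_comm]
        simp only [sq]
    _ ≤ _ := h
    _ = _ := by
        rw [Finset.sum_comm]
        refine Finset.sum_congr rfl fun i _ => ?_
        rw [Finset.sum_comm]
        refine Finset.sum_congr rfl fun j _ => ?_
        simp only [mul_apply, conjTranspose_apply, star_trivial, Finset.mul_sum]
        refine Finset.sum_congr rfl fun k _ => ?_
        ring

end Matrix.PosSemidef

/-- Maximum principle in domains of small measure: the Alexandrov–Bakelman–Pucci argument. -/
theorem nonpos_of_elliptic_of_volume_small {m : ℕ} {Q U : Set (EuclideanSpace ℝ (Fin m))}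
    (hQ : IsCompact Q) (hU : IsOpen U) (hUQ : U ⊆ Q) {d : ℝ} (hd : 0 < d)
    (hdiam : ∀ x ∈ Q, ∀ y ∈ Q, dist x y ≤ d)
    {a : EuclideanSpace ℝ (Fin m) → Fin m → Fin m → ℝ}
    {b : EuclideanSpace ℝ (Fin m) → Fin m → ℝ} {c : EuclideanSpace ℝ (Fin m) → ℝ}
    {lam B C : ℝ} (hlam : 0 < lam)
    (hell : ∀ x ∈ U, ∀ ξ : EuclideanSpace ℝ (Fin m),
      lam * ‖ξ‖ ^ 2 ≤ ∑ i, ∑ j, a x i j * ξ i * ξ j)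
    (hb : ∀ x ∈ U, ∀ i, |b x i| ≤ B) (hC : 0 ≤ C) (hc : ∀ x ∈ U, c x ≤ C)
    (hsmall : ENNReal.ofReal (((m * B + C * d) / lam) ^ m) * volume U
      < volume (Metric.ball (0 : EuclideanSpace ℝ (Fin m)) 1))
    {z : EuclideanSpace ℝ (Fin m) → ℝ} (hz2 : ContDiffOn ℝ 2 z U) (hzc : ContinuousOn z Q)
    (hzbd : ∀ x ∈ Q \ U, z x ≤ 0)
    (hLz : ∀ x ∈ U,
      0 ≤ (∑ i, ∑ j, a x i j * pd (pd z i) j x) + (∑ i, b x i * pd z i x) + c x * z x) :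
    ∀ x ∈ Q, z x ≤ 0 := by
  by_contra! hpos
  obtain ⟨x₁, hx₁, hzx₁⟩ := hpos
  obtain ⟨x₀, hx₀, hmax₀⟩ := hQ.exists_isMaxOn ⟨x₁, hx₁⟩ hzc
  set M := z x₀ with hM
  have hMpos : 0 < M := hzx₁.trans_le (hmax₀ hx₁)
  set q := (m * B + C * d) / lam with hq
  set r := M / d with hr
  have hrpos : 0 < r := div_pos hMpos hd
  have hz2' : ∀ x ∈ U, ContDiffAt ℝ 2 z x := fun x hx => hz2.contDiffAt (hU.mem_nhds hx)
  set S := U ∩ {x | |(fderiv ℝ (gradVec z) x).det| ≤ (r * q) ^ m} with hS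
  have hSm : MeasurableSet S := by
    refine hU.measurableSet.inter (measurableSet_le ?_ measurable_const)
    exact (ContinuousLinearMap.continuous_det.measurable.comp
      (measurable_fderiv ℝ (gradVec z))).norm
  have hcover : Metric.ball 0 r ⊆ gradVec z '' S := by
    intro p hp
    rw [mem_ball_zero_iff] at hp
    obtain ⟨x, hxQ, hxmax⟩ := hQ.exists_isMaxOn ⟨x₁, hx₁⟩
      (hzc.sub (innerSL ℝ p).continuous.continuousOn)
    have hzx : 0 < z x := by
      have h1 : z x₀ - inner ℝ p x₀ ≤ z x - inner ℝ p x := hxmax hx₀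
      have h2 : inner ℝ p (x₀ - x) ≤ ‖p‖ * d := (real_inner_le_norm _ _).trans
        (mul_le_mul_of_nonneg_left (by simpa [dist_eq_norm] using hdiam x₀ hx₀ x hxQ)
          (norm_nonneg _))
      have h3 : ‖p‖ * d < M := (lt_div_iff₀ hd).1 hp
      rw [inner_sub_right] at h2
      linarith
    have hxU : x ∈ U := by
      by_contra h
      exact (hzbd x ⟨hxQ, h⟩).not_gt hzx
    have hzx2 := hz2' x hxU
    set g : EuclideanSpace ℝ (Fin m) → ℝ := fun y => z y - innerSL ℝ p y with hg
    have hg2 : ContDiffAt ℝ 2 g x := hzx2.sub (innerSL ℝ p).contDiff.contDiffAt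
    have hgmax : IsLocalMax g x := hxmax.isLocalMax
      (Filter.mem_of_superset (hU.mem_nhds hxU) hUQ)
    have hdg : ∀ y ∈ U, fderiv ℝ g y = fderiv ℝ z y - innerSL ℝ p := fun y hy => by
      rw [hg, fderiv_fun_sub ((hz2' y hy).differentiableAt two_ne_zero)
        (innerSL ℝ p).differentiableAt, ContinuousLinearMap.fderiv]
    have hddg : fderiv ℝ (fderiv ℝ g) x = fderiv ℝ (fderiv ℝ z) x := by
      have : fderiv ℝ g =ᶠ[nhds x] fun y => fderiv ℝ z y - innerSL ℝ p :=
        Filter.mem_of_superset (hU.mem_nhds hxU) hdg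
      rw [this.fderiv_eq, fderiv_sub_const]
    have hpd : ∀ i, pd z i x = p i := fun i => by
      have h := hgmax.fderiv_eq_zero
      rw [hdg x hxU, sub_eq_zero] at h
      simp [pd, h, EuclideanSpace.inner_single_right]
    have hP := posSemidef_neg_hessianMatrix hzx2 fun v => by
      rw [← hddg]
      exact hgmax.fderiv_fderiv_apply_self_nonpos hg2 v
    have htrace : (-hessianMatrix z x).trace ≤ r * q := by
      have h1 := hP.mul_trace_le_sum_mul (hell x hxU)
      have h2 : ∑ i, ∑ j, a x i j * (-hessianMatrix z x) i j
          = -∑ i, ∑ j, a x i j * pd (pd z i) j x := by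
        simp [hessianMatrix]
      have h3 : ∑ i, b x i * pd z i x ≤ m * B * r := by
        calc ∑ i, b x i * pd z i x ≤ ∑ _i : Fin m, B * r := by
              refine Finset.sum_le_sum fun i _ => (le_abs_self _).trans ?_
              rw [abs_mul, hpd]
              have hpi : |p i| ≤ r := (PiLp.norm_apply_le p i).trans hp.le
              exact mul_le_mul (hb x hxU i) hpi (abs_nonneg _)
                ((abs_nonneg _).trans (hb x hxU i))
          _ = m * B * r := by simp [mul_assoc]
      have h4 : c x * z x ≤ C * (d * r) := by
        have : d * r = M := mul_div_cancel₀ M hd.ne'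
        rw [this]
        exact (mul_le_mul_of_nonneg_right (hc x hxU) hzx.le).trans
          (mul_le_mul_of_nonneg_left (hmax₀ hxQ) hC)
      have h5 := hLz x hxU
      rw [hq, ← mul_div_assoc, le_div_iff₀ hlam]
      linarith
    refine ⟨x, ⟨hxU, ?_⟩, ?_⟩
    · have hdet : |(hessianMatrix z x).det| = (-hessianMatrix z x).det := by
        rw [← abs_of_nonneg hP.det_nonneg, Matrix.det_neg, abs_mul]
        simp
      rw [mem_ofPred_eq, det_fderiv_gradVec hzx2, hdet]
      exact hP.det_le_trace_pow.trans (pow_le_pow_left₀ hP.trace_nonneg htrace m)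
    · ext i
      exact hpd i
  have hvol : volume (Metric.ball (0 : EuclideanSpace ℝ (Fin m)) r)
      ≤ ENNReal.ofReal ((r * q) ^ m) * volume U := by
    calc _ ≤ volume (gradVec z '' S) := measure_mono hcover
      _ ≤ ∫⁻ x in S, ENNReal.ofReal |(fderiv ℝ (gradVec z) x).det| :=
        addHaar_image_le_lintegral_abs_det_fderiv volume hSm fun x hx =>
          (differentiableAt_gradVec (hz2' x hx.1)).hasFDerivAt.hasFDerivWithinAt
      _ ≤ ∫⁻ _ in S, ENNReal.ofReal ((r * q) ^ m) :=
        setLIntegral_mono measurable_const fun x hx => ENNReal.ofReal_le_ofReal hx.2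
      _ = ENNReal.ofReal ((r * q) ^ m) * volume S := setLIntegral_const _ _
      _ ≤ _ := by gcongr; exact inter_subset_left
  rw [Measure.addHaar_ball_of_pos volume _ hrpos, finrank_euclideanSpace_fin, mul_pow,
    ENNReal.ofReal_mul (by positivity), mul_assoc] at hvol
  have h0 : ENNReal.ofReal (r ^ m) ≠ 0 := by
    simpa using pow_pos hrpos m
  exact hsmall.not_ge ((ENNReal.mul_le_mul_iff_right h0 ENNReal.ofReal_ne_top).1 hvol)

/-- **Sufficiency direction of the Berestycki–Varadhan maximum principle.** Let `Ω ⊂ ℝ^n` be a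
bounded domain and `L` a uniformly elliptic operator with symmetric continuous second-order
coefficients and bounded lower-order coefficients.  Suppose the first eigenvalue of `L` in `Ω`
is positive, witnessed by `μ > 0` and `ψ ∈ C²(Ω) ∩ C(closure Ω)` with `ψ > 0` in `Ω` and
`(L + μ)ψ ≤ 0` in `Ω`.  Then the maximum principle holds in `Ω`: every
`w ∈ C²(Ω) ∩ C(closure Ω)` with `Lw ≥ 0` in `Ω` and `w ≤ 0` on `∂Ω` satisfies `w ≤ 0` in `Ω`. -/
theorem statement18 (n : ℕ)
    (Ω : Set (EuclideanSpace ℝ (Fin n)))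
    (hΩo : IsOpen Ω) (hΩc : IsConnected Ω) (hΩb : Bornology.IsBounded Ω)
    (a : EuclideanSpace ℝ (Fin n) → Fin n → Fin n → ℝ)
    (b : EuclideanSpace ℝ (Fin n) → Fin n → ℝ)
    (c : EuclideanSpace ℝ (Fin n) → ℝ)
    (hasym : ∀ x i j, a x i j = a x j i)
    (hacont : ∀ i j, ContinuousOn (fun x => a x i j) (closure Ω))
    (hbbd : ∃ M : ℝ, ∀ x ∈ Ω, ∀ i, |b x i| ≤ M)
    (hcbd : ∃ M : ℝ, ∀ x ∈ Ω, |c x| ≤ M)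
    (hell : ∃ lam > (0 : ℝ), ∀ x ∈ Ω, ∀ ξ : EuclideanSpace ℝ (Fin n),
        lam * ‖ξ‖ ^ 2 ≤ ∑ i, ∑ j, a x i j * ξ i * ξ j)
    (mu : ℝ) (hmu : 0 < mu)
    (ψ : EuclideanSpace ℝ (Fin n) → ℝ)
    (hψ2 : ContDiffOn ℝ 2 ψ Ω) (hψc : ContinuousOn ψ (closure Ω))
    (hψpos : ∀ x ∈ Ω, 0 < ψ x)
    (hψsup : ∀ x ∈ Ω,
        (∑ i, ∑ j, a x i j * pd (pd ψ i) j x) + (∑ i, b x i * pd ψ i x) + c x * ψ x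
          + mu * ψ x ≤ 0)
    (w : EuclideanSpace ℝ (Fin n) → ℝ)
    (hw2 : ContDiffOn ℝ 2 w Ω) (hwc : ContinuousOn w (closure Ω))
    (hLw : ∀ x ∈ Ω,
        0 ≤ (∑ i, ∑ j, a x i j * pd (pd w i) j x) + (∑ i, b x i * pd w i x) + c x * w x)
    (hwbd : ∀ x ∈ frontier Ω, w x ≤ 0) :
    ∀ x ∈ Ω, w x ≤ 0 := by
  have hQ : IsCompact (closure Ω) := hΩb.isCompact_closure
  obtain ⟨B, hB⟩ := hbbd
  obtain ⟨C, hC⟩ := hcbd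
  obtain ⟨lam, hlam, hell⟩ := hell
  obtain ⟨x₁, hx₁⟩ := hΩc.nonempty
  have hC0 : 0 ≤ C := (abs_nonneg _).trans (hC x₁ hx₁)
  set d := Metric.diam (closure Ω) + 1 with hd
  have hdpos : 0 < d := by positivity
  have hdiam : ∀ x ∈ closure Ω, ∀ y ∈ closure Ω, dist x y ≤ d := fun x hx y hy =>
    (Metric.dist_le_diam_of_mem hQ.isBounded hx hy).trans (by simp [hd])
  obtain ⟨K, hKΩ, hK, hKvol⟩ := hΩo.measurableSet.exists_isCompact_sdiff_lt
    (μ := volume) hΩb.measure_lt_top.ne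
    (ε := volume (Metric.ball (0 : EuclideanSpace ℝ (Fin n)) 1)
      / ENNReal.ofReal (((n * B + C * d) / lam) ^ n))
    (ENNReal.div_ne_zero.2 ⟨(Metric.measure_ball_pos _ _ one_pos).ne', ENNReal.ofReal_ne_top⟩)
  have hsmall := ENNReal.mul_lt_of_lt_div' hKvol
  have hψnn : ∀ x ∈ closure Ω, 0 ≤ ψ x := fun x hx =>
    closure_minimal (t := closure Ω ∩ ψ ⁻¹' Ici 0)
      (fun y hy => ⟨subset_closure hy, (hψpos y hy).le⟩)
      (hψc.preimage_isClosed_of_isClosed isClosed_closure isClosed_Ici) hx |>.2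
  have hψ2' : ∀ x ∈ Ω, ContDiffAt ℝ 2 ψ x := fun x hx => hψ2.contDiffAt (hΩo.mem_nhds hx)
  have hw2' : ∀ x ∈ Ω, ContDiffAt ℝ 2 w x := fun x hx => hw2.contDiffAt (hΩo.mem_nhds hx)
  have hLz : ∀ t : ℝ, 0 ≤ t → ∀ x ∈ Ω, t * (mu * ψ x) ≤
      (∑ i, ∑ j, a x i j * pd (pd (fun y => w y - t * ψ y) i) j x)
        + (∑ i, b x i * pd (fun y => w y - t * ψ y) i x) + c x * (w x - t * ψ x) := by
    intro t ht x hx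
    have h1 := hLw x hx
    have h2 := mul_nonpos_of_nonneg_of_nonpos ht (hψsup x hx)
    simp only [pd_pd_sub_const_mul (hw2' x hx) (hψ2' x hx),
      pd_sub_const_mul ((hw2' x hx).differentiableAt two_ne_zero)
        ((hψ2' x hx).differentiableAt two_ne_zero), mul_sub, Finset.sum_sub_distrib,
      mul_left_comm _ t, ← Finset.mul_sum]
    linarith
  have hkey : ∀ t : ℝ, 0 ≤ t → (∀ x ∈ K, w x - t * ψ x ≤ 0) →
      ∀ x ∈ Ω, w x - t * ψ x ≤ 0 := by
    intro t ht hKt x hx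
    have hsub : Ω \ K ⊆ Ω := sdiff_subset
    refine nonpos_of_elliptic_of_volume_small (Q := closure Ω) (U := Ω \ K) (a := a) (b := b)
      (c := c) (z := fun y => w y - t * ψ y) hQ (hΩo.sdiff hK.isClosed)
      (hsub.trans subset_closure) hdpos hdiam hlam (fun y hy => hell y (hsub hy))
      (fun y hy => hB y (hsub hy)) hC0
      (fun y hy => (le_abs_self _).trans (hC y (hsub hy))) hsmall
      ((hw2.sub (contDiffOn_const.mul hψ2)).mono hsub) (hwc.sub (continuousOn_const.mul hψc))
      ?_ ?_ x (subset_closure hx)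
    · rintro y ⟨hyc, hy⟩
      by_cases hyK : y ∈ K
      · exact hKt y hyK
      · have hyf : y ∈ frontier Ω := by
          rw [hΩo.frontier_eq]
          exact ⟨hyc, fun h => hy ⟨h, hyK⟩⟩
        have := mul_nonneg ht (hψnn y hyc)
        linarith [hwbd y hyf]
    · intro y hy
      exact (mul_nonneg ht (mul_nonneg hmu.le (hψpos y (hsub hy)).le)).trans
        (hLz t ht y (hsub hy))
  have hzero : (∀ x ∈ K, w x ≤ 0) → ∀ x ∈ Ω, w x ≤ 0 := fun h x hx => by
    simpa using hkey 0 le_rfl (by simpa using h) x hx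
  refine hzero ?_
  by_contra! hpos
  obtain ⟨y, hyK, hwy⟩ := hpos
  obtain ⟨x, hxK, hxmax⟩ := hK.exists_isMaxOn ⟨y, hyK⟩
    ((hw2.continuousOn.mono hKΩ).div (hψ2.continuousOn.mono hKΩ)
      fun x hx => (hψpos x (hKΩ hx)).ne')
  have hxΩ := hKΩ hxK
  set t := w x / ψ x with ht
  have htpos : 0 < t := (div_pos hwy (hψpos y (hKΩ hyK))).trans_le (hxmax hyK)
  have hle : ∀ v ∈ Ω, w v - t * ψ v ≤ 0 := hkey t htpos.le fun v hv => by
    have h : w v / ψ v ≤ t := hxmax hv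
    rw [div_le_iff₀ (hψpos v (hKΩ hv))] at h
    linarith
  have hx0 : w x - t * ψ x = 0 := by
    rw [ht, div_mul_cancel₀ _ (hψpos x hxΩ).ne', sub_self]
  have hmax : IsLocalMax (fun v => w v - t * ψ v) x := by
    filter_upwards [hΩo.mem_nhds hxΩ] with v hv
    rw [hx0]
    exact hle v hv
  have hz2 : ContDiffAt ℝ 2 (fun v => w v - t * ψ v) x :=
    (hw2' x hxΩ).sub (contDiffAt_const.mul (hψ2' x hxΩ))
  have hP := posSemidef_neg_hessianMatrix hz2 (hmax.fderiv_fderiv_apply_self_nonpos hz2)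
  have h1 := (mul_nonneg hlam.le hP.trace_nonneg).trans (hP.mul_trace_le_sum_mul (hell x hxΩ))
  have h3 := hLz t htpos.le x hxΩ
  have h4 := mul_pos htpos (mul_pos hmu (hψpos x hxΩ))
  have h5 : ∀ i, pd (fun v => w v - t * ψ v) i x = 0 := fun i => by
    simp [pd, hmax.fderiv_eq_zero]
  simp only [h5, hx0, mul_zero, Finset.sum_const_zero, add_zero] at h3
  simp only [hessianMatrix, Matrix.neg_apply, Matrix.of_apply, mul_neg,
    Finset.sum_neg_distrib] at h1
  linarith
end
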